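/- Suppose ℙ(X ≠ 1) > 0. Let ν be a σ-ergodic measure satisfying property (G); if Q = Q_{h_ν(σ)} and h_X = h_ν(σ), suppose in addition that ν satisfies property (G̃). Then ν is Q-regular if and only if h_X < h_ν(σ). -/

import Mathlib

open MeasureTheory ProbabilityTheory Filter Set
open scoped ENNReal

noncomputable section

/-- The one-sided symbolic space over the alphabet `{0, …, b-1}`. -/
abbrev SymbSpace (b : ℕ) : Type := ℕ → Fin b

/-- The cylinder `[w]` of sequences starting with the finite word `w`. -/
def cylinder {b : ℕ} (w : List (Fin b)) : Set (SymbSpace b) :=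
  {x | ∀ i : Fin w.length, x i = w.get i}

/-- The prefix `x|_n` of `x` of length `n`, as a finite word. -/
def wordPrefix {b : ℕ} (x : SymbSpace b) (n : ℕ) : List (Fin b) :=
  List.ofFn (fun i : Fin n => x i)

/-- `Y_w = X_{w_1} X_{w_1w_2} ⋯ X_{w_1⋯w_n}`. -/
def cascadeY {b : ℕ} {Ω : Type*} (X : List (Fin b) → Ω → ℝ) (w : List (Fin b)) (ω : Ω) : ℝ :=
  ∏ k ∈ Finset.range w.length, X (w.take (k + 1)) ω

/-- The total mass `Z_n = ∑_{|u| = n} Y_u ν([u])`. -/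
def cascadeZ {b : ℕ} {Ω : Type*} (X : List (Fin b) → Ω → ℝ) (ν : Measure (SymbSpace b))
    (n : ℕ) (ω : Ω) : ℝ :=
  ∑ u : Fin n → Fin b, cascadeY X (List.ofFn u) ω * (ν (cylinder (List.ofFn u))).toReal

/-- `Z = limsup_n Z_n`. -/
def cascadeZlim {b : ℕ} {Ω : Type*} (X : List (Fin b) → Ω → ℝ) (ν : Measure (SymbSpace b))
    (ω : Ω) : ℝ :=
  Filter.limsup (fun n => cascadeZ X ν n ω) atTop

/-- Assumption (M1): the weights `X_u`, `u` a nonempty finite word, are i.i.d. with common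
law that of the nonnegative random variable `X₀` of expectation 1. -/
structure CascadeM1 {b : ℕ} {Ω : Type*} [MeasurableSpace Ω] (P : Measure Ω)
    (X : List (Fin b) → Ω → ℝ) (X₀ : Ω → ℝ) : Prop where
  meas : ∀ w, Measurable (X w)
  nonneg : ∀ w ω, 0 ≤ X w ω
  meas₀ : Measurable X₀
  nonneg₀ : ∀ ω, 0 ≤ X₀ ω
  mean₀ : ∫ ω, X₀ ω ∂P = 1
  indep : iIndepFun
    (fun w : {w : List (Fin b) // w ≠ []} => X w.1) P
  ident : ∀ w : List (Fin b), w ≠ [] → IdentDistrib (X w) X₀ P P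

/-- `h_X = E(X log X) ∈ [0, ∞]` (well defined since `x log x ≥ -e⁻¹` and, by convexity,
`E(X log X) ≥ E(X) log E(X) = 0`), encoded as an extended nonnegative real. -/
def entropyX {Ω : Type*} [MeasurableSpace Ω] (P : Measure Ω) (X₀ : Ω → ℝ) : ℝ≥0∞ :=
  (∫⁻ ω, ENNReal.ofReal (X₀ ω * Real.log (X₀ ω)) ∂P) -
    (∫⁻ ω, ENNReal.ofReal (-(X₀ ω * Real.log (X₀ ω))) ∂P)

/-- The lower local dimension `liminf_n (-log ν([x|_n]) / n)` of `ν` at `x`, valued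
in `[0, ∞]`. -/
def lowerLocalDim {b : ℕ} (ν : Measure (SymbSpace b)) (x : SymbSpace b) : ℝ≥0∞ :=
  Filter.liminf
    (fun n : ℕ => ENNReal.ofReal (-Real.log ((ν (cylinder (wordPrefix x n))).toReal) / n))
    atTop

/-- The upper local dimension `limsup_n (-log ν([x|_n]) / n)` of `ν` at `x`. -/
def upperLocalDim {b : ℕ} (ν : Measure (SymbSpace b)) (x : SymbSpace b) : ℝ≥0∞ :=
  Filter.limsup
    (fun n : ℕ => ENNReal.ofReal (-Real.log ((ν (cylinder (wordPrefix x n))).toReal) / n))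
    atTop

/-- The lower Hausdorff dimension of `ν`: the `ν`-essential infimum of the lower local
dimension. -/
def lowerHausdorffDim {b : ℕ} (ν : Measure (SymbSpace b)) : ℝ≥0∞ :=
  essInf (lowerLocalDim ν) ν

/-- The upper Hausdorff dimension of `ν`: the `ν`-essential supremum of the lower local
dimension. -/
def upperHausdorffDim {b : ℕ} (ν : Measure (SymbSpace b)) : ℝ≥0∞ :=
  essSup (lowerLocalDim ν) ν

/-- The upper packing dimension of `ν`: the `ν`-essential supremum of the upper local
dimension. -/
def upperPackingDim {b : ℕ} (ν : Measure (SymbSpace b)) : ℝ≥0∞ :=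
  essSup (upperLocalDim ν) ν


/-- The left shift on the one-sided symbolic space. -/
def shiftMap (b : ℕ) : SymbSpace b → SymbSpace b := fun x n => x (n + 1)

/-- The entropy sums `n⁻¹ ∑_{|u| = n} −ν([u]) log ν([u])`, whose limit is the
measure-theoretic entropy `h_ν(σ)`. -/
def entropySeq {b : ℕ} (ν : Measure (SymbSpace b)) (n : ℕ) : ℝ :=
  (n : ℝ)⁻¹ * ∑ u : Fin n → Fin b,
    -((ν (cylinder (List.ofFn u))).toReal * Real.log ((ν (cylinder (List.ofFn u))).toReal))

/-- Property (G): there are measurable functions `C ≥ 1` and `f`, finite `ν`-a.e., with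
`C(x)⁻¹ e^{∑_{k<n} f(σᵏx)} ≤ ν([x|_n]) ≤ C(x) e^{∑_{k<n} f(σᵏx)}` for `ν`-a.e. `x` and all
`n ≥ 1`. -/
def PropertyG {b : ℕ} (ν : Measure (SymbSpace b)) (f : SymbSpace b → ℝ) : Prop :=
  Measurable f ∧ ∃ C : SymbSpace b → ℝ, Measurable C ∧ (∀ᵐ x ∂ν, 1 ≤ C x) ∧
    (∀ᵐ x ∂ν, ∀ n : ℕ, 1 ≤ n →
      (C x)⁻¹ * Real.exp (∑ k ∈ Finset.range n, f ((shiftMap b)^[k] x)) ≤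
          (ν (cylinder (wordPrefix x n))).toReal ∧
        (ν (cylinder (wordPrefix x n))).toReal ≤
          C x * Real.exp (∑ k ∈ Finset.range n, f ((shiftMap b)^[k] x)))

/-- `ν` is the uniform measure `λ`, i.e. assigns mass `b^{-|u|}` to every cylinder `[u]`. -/
def IsUniformMeasure {b : ℕ} (ν : Measure (SymbSpace b)) : Prop :=
  ∀ w : List (Fin b), ν (cylinder w) = ((b : ℝ≥0∞))⁻¹ ^ w.length

/-- Property (G̃): `ν` satisfies (G) with potential `f`, and if `ν` is not the uniform
measure then `limsup_n ∑_{k<n} (f(σᵏx) + h_ν(σ)) = ∞` for `ν`-a.e. `x`. -/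
def PropertyGtilde {b : ℕ} (ν : Measure (SymbSpace b)) (f : SymbSpace b → ℝ) (hν : ℝ) :
    Prop :=
  PropertyG ν f ∧ (¬ IsUniformMeasure ν →
    ∀ᵐ x ∂ν, ∀ M : ℝ, ∃ᶠ n in atTop,
      M ≤ ∑ k ∈ Finset.range n, (f ((shiftMap b)^[k] x) + hν))

/-- `Q = Q_α`: the common law of the weights is `ℙ(X = e^α) = e^{-α}`,
`ℙ(X = 0) = 1 − e^{-α}`. -/
def IsQalphaCascade {Ω : Type*} [MeasurableSpace Ω] (P : Measure Ω) (X₀ : Ω → ℝ) (α : ℝ) :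
    Prop :=
  P {ω | X₀ ω = Real.exp α} = ENNReal.ofReal (Real.exp (-α)) ∧
    P {ω | X₀ ω = 0} = 1 - ENNReal.ofReal (Real.exp (-α))

open MeasureTheory ProbabilityTheory Filter Set
open scoped ENNReal

noncomputable section

/-! ### Sequences: head/tail decomposition of the product measure -/

/-- prepend a letter to a sequence -/
def consSeq (p : ℝ × (ℕ → ℝ)) : ℕ → ℝ := fun n => Nat.casesOn n p.1 p.2

@[simp] lemma consSeq_zero (p : ℝ × (ℕ → ℝ)) : consSeq p 0 = p.1 := rfl
@[simp] lemma consSeq_succ (p : ℝ × (ℕ → ℝ)) (n : ℕ) : consSeq p (n + 1) = p.2 n := rfl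

lemma measurable_consSeq : Measurable consSeq := by
  refine measurable_pi_lambda _ fun n => ?_
  cases n with
  | zero => exact measurable_fst
  | succ n => exact (measurable_pi_apply n).comp measurable_snd

/-- the shift on real sequences -/
def tailSeq (ξ : ℕ → ℝ) : ℕ → ℝ := fun n => ξ (n + 1)

@[simp] lemma tailSeq_consSeq (p : ℝ × (ℕ → ℝ)) : tailSeq (consSeq p) = p.2 := rfl

lemma measurable_tailSeq : Measurable tailSeq :=
  measurable_pi_lambda _ fun n => measurable_pi_apply (n + 1)

/-- i.i.d. product measure -/
abbrev iidM (ρ : Measure ℝ) [IsProbabilityMeasure ρ] : Measure (ℕ → ℝ) :=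
  Measure.infinitePi (fun _ : ℕ => ρ)

lemma map_consSeq (ρ : Measure ℝ) [IsProbabilityMeasure ρ] :
    (ρ.prod (iidM ρ)).map consSeq = iidM ρ := by
  classical
  refine Measure.eq_infinitePi _ fun s t ht => ?_
  rw [Measure.map_apply measurable_consSeq (MeasurableSet.pi s.countable_toSet fun i _ => ht i)]
  set t' : ℕ → Set ℝ := fun i => if i ∈ s then t i else univ with ht'
  have ht'm : ∀ i, MeasurableSet (t' i) := fun i => by
    simp only [ht']; split_ifs; exacts [ht i, .univ]
  obtain ⟨n, hn⟩ : ∃ n, s ⊆ Finset.range (n + 1) := by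
    refine ⟨s.sup id, fun i hi => ?_⟩
    have : i ≤ s.sup id := Finset.le_sup (f := id) hi
    exact Finset.mem_range.2 (by omega)
  have h1 : consSeq ⁻¹' (Set.pi s t) =
      t' 0 ×ˢ (Set.pi (Finset.range n : Set ℕ) (fun i => t' (i + 1))) := by
    ext p
    simp only [mem_preimage, Set.mem_pi, Finset.mem_coe, mem_prod, Finset.mem_range, ht']
    constructor
    · intro h
      refine ⟨?_, fun i _ => ?_⟩
      · split_ifs with h0
        · exact h 0 h0
        · trivial
      · split_ifs with h0
        · exact h (i + 1) h0
        · trivial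
    · rintro ⟨h0, h1⟩ i hi
      cases i with
      | zero => simpa [hi] using h0
      | succ i =>
        have := h1 i (by have := Finset.mem_range.1 (hn hi); omega)
        simpa [hi] using this
  rw [h1, Measure.prod_prod, Measure.infinitePi_pi _ (fun i _ => ht'm _)]
  have h2 : ∏ i ∈ s, ρ (t i) = ∏ i ∈ Finset.range (n + 1), ρ (t' i) := by
    rw [← Finset.prod_subset hn (f := fun i => ρ (t' i))]
    · exact Finset.prod_congr rfl fun i hi => by simp [ht', hi]
    · intro i _ hi; simp [ht', hi]
  rw [h2, Finset.prod_range_succ', mul_comm]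

lemma measurePreserving_consSeq (ρ : Measure ℝ) [IsProbabilityMeasure ρ] :
    MeasurePreserving consSeq (ρ.prod (iidM ρ)) (iidM ρ) :=
  ⟨measurable_consSeq, map_consSeq ρ⟩

lemma measurePreserving_tailSeq (ρ : Measure ℝ) [IsProbabilityMeasure ρ] :
    MeasurePreserving tailSeq (iidM ρ) (iidM ρ) := by
  refine ⟨measurable_tailSeq, ?_⟩
  conv_lhs => rw [← map_consSeq ρ]
  rw [Measure.map_map measurable_tailSeq measurable_consSeq]
  change Measure.map Prod.snd _ = _
  simp

lemma lintegral_iidM (ρ : Measure ℝ) [IsProbabilityMeasure ρ] {F : (ℕ → ℝ) → ℝ≥0∞}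
    (hF : Measurable F) :
    ∫⁻ ξ, F ξ ∂(iidM ρ) = ∫⁻ a, ∫⁻ ξ, F (consSeq (a, ξ)) ∂(iidM ρ) ∂ρ := by
  rw [← (measurePreserving_consSeq ρ).lintegral_comp hF, lintegral_prod]
  exact (hF.comp measurable_consSeq).aemeasurable

/-- `F` depends only on the first `n` coordinates. -/
def DepOn {α β : Type*} (n : ℕ) (F : (ℕ → α) → β) : Prop :=
  ∀ ξ ξ' : ℕ → α, (∀ k < n, ξ k = ξ' k) → F ξ = F ξ'

lemma DepOn.mono {α β : Type*} {m n : ℕ} (h : m ≤ n) {F : (ℕ → α) → β} (hF : DepOn m F) :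
    DepOn n F := fun ξ ξ' hh => hF ξ ξ' fun k hk => hh k (by omega)

/-- the size-biased law -/
def sizeBias (ρ₀ : Measure ℝ) : Measure ℝ := ρ₀.withDensity ENNReal.ofReal

lemma lintegral_sizeBias (ρ₀ : Measure ℝ) {G : ℝ → ℝ≥0∞} (hG : Measurable G) :
    ∫⁻ a, G a ∂(sizeBias ρ₀) = ∫⁻ a, ENNReal.ofReal a * G a ∂ρ₀ := by
  unfold sizeBias
  rw [lintegral_withDensity_eq_lintegral_mul _ ENNReal.measurable_ofReal hG]
  rfl

lemma lintegral_tilt (ρ₀ : Measure ℝ) [IsProbabilityMeasure ρ₀]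
    [IsProbabilityMeasure (sizeBias ρ₀)] (n : ℕ) :
    ∀ (F : (ℕ → ℝ) → ℝ≥0∞), Measurable F → DepOn n F →
    ∫⁻ ξ, (∏ k ∈ Finset.range n, ENNReal.ofReal (ξ k)) * F ξ ∂(iidM ρ₀) =
      ∫⁻ ξ, F ξ ∂(iidM (sizeBias ρ₀)) := by
  induction n with
  | zero =>
    intro F _ hF
    have : F = fun _ => F 0 := funext fun ξ => hF ξ 0 (by simp)
    rw [this]; simp
  | succ n ih =>
    intro F hFm hF
    have hm : Measurable fun ξ : ℕ → ℝ =>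
        (∏ k ∈ Finset.range (n + 1), ENNReal.ofReal (ξ k)) * F ξ := by fun_prop
    rw [lintegral_iidM _ hm, lintegral_iidM _ hFm]
    have hmc : ∀ a : ℝ, Measurable fun ξ : ℕ → ℝ => consSeq (a, ξ) := fun a =>
      measurable_consSeq.comp measurable_prodMk_left
    have h1 : ∀ a : ℝ, ∫⁻ ξ, (∏ k ∈ Finset.range (n + 1), ENNReal.ofReal (consSeq (a, ξ) k)) *
        F (consSeq (a, ξ)) ∂(iidM ρ₀) =
        ENNReal.ofReal a * ∫⁻ ξ, F (consSeq (a, ξ)) ∂(iidM (sizeBias ρ₀)) := by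
      intro a
      rw [← ih (fun ξ => F (consSeq (a, ξ))) (hFm.comp (hmc a)), ← lintegral_const_mul]
      · refine lintegral_congr fun ξ => ?_
        rw [Finset.prod_range_succ']
        simp only [consSeq_zero, consSeq_succ]
        ring
      · have := hFm.comp (hmc a)
        simp only [Function.comp_def] at this
        fun_prop
      · intro ξ ξ' h
        refine hF _ _ fun k hk => ?_
        cases k with
        | zero => rfl
        | succ k => exact h k (by omega)
    simp_rw [h1]
    have hFm' : Measurable fun a : ℝ => ∫⁻ ξ, F (consSeq (a, ξ)) ∂(iidM (sizeBias ρ₀)) :=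
      (hFm.comp measurable_consSeq).lintegral_prod_right'
    rw [lintegral_sizeBias _ hFm']

/-! ### Words -/

variable {b : ℕ}

lemma length_wordPrefix (x : SymbSpace b) (n : ℕ) : (wordPrefix x n).length = n := by
  simp [wordPrefix]

lemma wordPrefix_ne_nil (x : SymbSpace b) (n : ℕ) : wordPrefix x (n + 1) ≠ [] := by
  intro h; have := congrArg List.length h; simp [length_wordPrefix] at this

lemma wordPrefix_eq_iff (x y : SymbSpace b) (n : ℕ) :
    wordPrefix x n = wordPrefix y n ↔ ∀ k < n, x k = y k := by
  simp only [wordPrefix, List.ofFn_inj, funext_iff, Fin.forall_iff]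

lemma take_wordPrefix (x : SymbSpace b) {k n : ℕ} (h : k ≤ n) :
    (wordPrefix x n).take k = wordPrefix x k := by
  apply List.ext_getElem
  · simp [length_wordPrefix, h]
  · intro i h1 h2
    simp [wordPrefix]

lemma cascadeY_wordPrefix {Ω : Type*} (X : List (Fin b) → Ω → ℝ) (x : SymbSpace b) (n : ℕ)
    (ω : Ω) : cascadeY X (wordPrefix x n) ω =
      ∏ k ∈ Finset.range n, X (wordPrefix x (k + 1)) ω := by
  rw [cascadeY, length_wordPrefix]
  refine Finset.prod_congr rfl fun k hk => ?_
  rw [take_wordPrefix x (by have := Finset.mem_range.1 hk; omega)]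

/-- restriction to the first `n` letters -/
def pref (n : ℕ) (x : SymbSpace b) : Fin n → Fin b := fun i => x i

lemma measurable_pref (n : ℕ) : Measurable (pref (b := b) n) :=
  measurable_pi_lambda _ fun _ => measurable_pi_apply _

lemma wordPrefix_eq_pref (x : SymbSpace b) (n : ℕ) : wordPrefix x n = List.ofFn (pref n x) := rfl

lemma cylinder_ofFn {n : ℕ} (u : Fin n → Fin b) :
    _root_.cylinder (List.ofFn u) = pref n ⁻¹' {u} := by
  ext x
  simp only [_root_.cylinder, mem_ofPred_eq, mem_preimage, mem_singleton_iff, pref, funext_iff,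
    Fin.forall_iff, List.length_ofFn]
  simp

lemma mem_cylinder_wordPrefix (x y : SymbSpace b) (n : ℕ) :
    y ∈ _root_.cylinder (wordPrefix x n) ↔ ∀ k < n, y k = x k := by
  rw [wordPrefix_eq_pref, cylinder_ofFn]
  simp [pref, funext_iff, Fin.forall_iff]

lemma measurableSet_cyl {n : ℕ} (u : Fin n → Fin b) :
    MeasurableSet (_root_.cylinder (List.ofFn u)) := by
  rw [cylinder_ofFn]; exact measurable_pref n (measurableSet_singleton u)

/-- a sequence extending `u` -/
def extWord (hb : 2 ≤ b) {n : ℕ} (u : Fin n → Fin b) : SymbSpace b :=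
  fun k => if h : k < n then u ⟨k, h⟩ else ⟨0, by omega⟩

lemma pref_extWord (hb : 2 ≤ b) {n : ℕ} (u : Fin n → Fin b) : pref n (extWord hb u) = u := by
  funext i; simp [pref, extWord]

lemma DepOn.apply_extWord {β : Type*} (hb : 2 ≤ b) {n : ℕ} {F : SymbSpace b → β} (hF : DepOn n F)
    (x : SymbSpace b) : F (extWord hb (pref n x)) = F x :=
  hF _ _ fun k hk => by simp [extWord, hk, pref]

lemma DepOn.measurable {β : Type*} [MeasurableSpace β] (hb : 2 ≤ b) {n : ℕ} {F : SymbSpace b → β}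
    (hF : DepOn n F) : Measurable F := by
  have : F = (fun u => F (extWord hb u)) ∘ pref n := funext fun x => (hF.apply_extWord hb x).symm
  rw [this]
  exact (measurable_of_finite _).comp (measurable_pref n)

lemma lintegral_depOn (hb : 2 ≤ b) (ν : Measure (SymbSpace b)) {n : ℕ} {F : SymbSpace b → ℝ≥0∞}
    (hF : DepOn n F) :
    ∫⁻ x, F x ∂ν = ∑ u : Fin n → Fin b, F (extWord hb u) * ν (_root_.cylinder (List.ofFn u)) := by
  have : ∀ x, F x = (fun u => F (extWord hb u)) (pref n x) := fun x => (hF.apply_extWord hb x).symm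
  rw [lintegral_congr this]
  rw [← lintegral_map (f := fun u => F (extWord hb u)) (measurable_of_finite _) (measurable_pref n),
    lintegral_fintype]
  refine Finset.sum_congr rfl fun u _ => ?_
  rw [Measure.map_apply (measurable_pref n) (measurableSet_singleton u), cylinder_ofFn]

/-- mass of the cylinder of generation `n` around `x` -/
def pm (ν : Measure (SymbSpace b)) (n : ℕ) (x : SymbSpace b) : ℝ :=
  (ν (_root_.cylinder (wordPrefix x n))).toReal

lemma pm_nonneg (ν : Measure (SymbSpace b)) (n : ℕ) (x : SymbSpace b) : 0 ≤ pm ν n x :=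
  ENNReal.toReal_nonneg

lemma depOn_pm (ν : Measure (SymbSpace b)) (n : ℕ) : DepOn n (pm ν n) := fun x y h => by
  rw [pm, pm, (wordPrefix_eq_iff x y n).2 h]

lemma pm_extWord (hb : 2 ≤ b) (ν : Measure (SymbSpace b)) {n : ℕ} (u : Fin n → Fin b) :
    pm ν n (extWord hb u) = (ν (_root_.cylinder (List.ofFn u))).toReal := by
  rw [pm, wordPrefix_eq_pref, pref_extWord]

lemma integral_depOn (hb : 2 ≤ b) (ν : Measure (SymbSpace b)) [IsFiniteMeasure ν] {n : ℕ}
    {F : SymbSpace b → ℝ} (hF : DepOn n F) :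
    Integrable F ν ∧ ∫ x, F x ∂ν =
      ∑ u : Fin n → Fin b, F (extWord hb u) * (ν (_root_.cylinder (List.ofFn u))).toReal := by
  have h : F = (fun u => F (extWord hb u)) ∘ pref n := funext fun x => (hF.apply_extWord hb x).symm
  have hi : Integrable (fun u => F (extWord hb u)) (ν.map (pref n)) := Integrable.of_finite
  constructor
  · rw [h]
    exact hi.comp_measurable (measurable_pref n)
  · conv_lhs => rw [h]
    simp only [Function.comp_def]
    rw [← integral_map (f := fun u => F (extWord hb u)) (measurable_pref n).aemeasurable
      (measurable_of_finite _).aestronglyMeasurable, integral_fintype hi]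
    refine Finset.sum_congr rfl fun u _ => ?_
    rw [smul_eq_mul, mul_comm, Measure.real,
      Measure.map_apply (measurable_pref n) (measurableSet_singleton u), cylinder_ofFn]

end

open MeasureTheory ProbabilityTheory Filter Set
open scoped ENNReal

noncomputable section

set_option linter.unusedSectionVars false
set_option linter.unusedVariables false

variable {b : ℕ} {Ω : Type*} [MeasurableSpace Ω] {P : Measure Ω} [IsProbabilityMeasure P]
  {X : List (Fin b) → Ω → ℝ} {X₀ : Ω → ℝ}

/-- common law of the weights -/
abbrev lawX (P : Measure Ω) (X₀ : Ω → ℝ) : Measure ℝ := P.map X₀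

lemma CascadeM1.isProb_lawX (h : CascadeM1 P X X₀) : IsProbabilityMeasure (lawX P X₀) :=
  Measure.isProbabilityMeasure_map h.meas₀.aemeasurable

lemma CascadeM1.integrable₀ (h : CascadeM1 P X X₀) : Integrable X₀ P := by
  by_contra hc
  have := h.mean₀
  rw [integral_undef hc] at this
  exact zero_ne_one this

lemma CascadeM1.lintegral₀ (h : CascadeM1 P X X₀) : ∫⁻ ω, ENNReal.ofReal (X₀ ω) ∂P = 1 := by
  rw [← ofReal_integral_eq_lintegral_ofReal h.integrable₀ (ae_of_all _ h.nonneg₀), h.mean₀]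
  simp

lemma CascadeM1.isProb_sizeBias (h : CascadeM1 P X X₀) :
    IsProbabilityMeasure (sizeBias (lawX P X₀)) := by
  constructor
  rw [sizeBias, withDensity_apply _ .univ, Measure.restrict_univ,
    lintegral_map ENNReal.measurable_ofReal h.meas₀, h.lintegral₀]

lemma CascadeM1.lintegral_X (h : CascadeM1 P X X₀) {w : List (Fin b)} (hw : w ≠ []) :
    ∫⁻ ω, ENNReal.ofReal (X w ω) ∂P = 1 := by
  rw [← h.lintegral₀]
  exact ((h.ident w hw).comp ENNReal.measurable_ofReal).lintegral_eq

/-- the weights along `x` -/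
def Xseq (X : List (Fin b) → Ω → ℝ) (x : SymbSpace b) (ω : Ω) : ℕ → ℝ :=
  fun k => X (wordPrefix x (k + 1)) ω

lemma CascadeM1.measurable_Xseq (h : CascadeM1 P X X₀) (x : SymbSpace b) :
    Measurable (Xseq X x) := measurable_pi_lambda _ fun _ => h.meas _

lemma CascadeM1.measurable_Xseq_prod (h : CascadeM1 P X X₀) :
    Measurable fun q : SymbSpace b × Ω => Xseq X q.1 q.2 := by
  refine measurable_pi_lambda _ fun k => ?_
  have h1 : Measurable fun q : (Fin (k + 1) → Fin b) × Ω => X (List.ofFn q.1) q.2 :=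
    measurable_from_prod_countable_right fun u => h.meas (List.ofFn u)
  exact h1.comp (((measurable_pref (k + 1)).comp measurable_fst).prodMk measurable_snd)

lemma CascadeM1.map_Xseq (h : CascadeM1 P X X₀) (x : SymbSpace b)
    [IsProbabilityMeasure (lawX P X₀)] :
    P.map (Xseq X x) = iidM (lawX P X₀) := by
  have hinj : Function.Injective
      (fun k : ℕ => (⟨wordPrefix x (k + 1), wordPrefix_ne_nil x k⟩ :
        {w : List (Fin b) // w ≠ []})) := by
    intro k l hkl
    have := congrArg List.length (congrArg Subtype.val hkl)
    simpa [length_wordPrefix] using this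
  have h1 := h.indep.precomp hinj
  rw [iIndepFun_iff_map_fun_eq_infinitePi_map (fun k => h.meas _)] at h1
  have h2 : ∀ k, P.map (X (wordPrefix x (k + 1))) = lawX P X₀ := fun k =>
    (h.ident _ (wordPrefix_ne_nil x k)).map_eq
  change P.map (fun ω k => X (wordPrefix x (k + 1)) ω) = _
  rw [h1]
  congr 1
  funext k
  exact h2 k

/-- finite product of a sequence, valued in `[0,∞]` -/
def pE (n : ℕ) (ξ : ℕ → ℝ) : ℝ≥0∞ := ∏ k ∈ Finset.range n, ENNReal.ofReal (ξ k)

lemma measurable_pE (n : ℕ) : Measurable (pE n) := by unfold pE; fun_prop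

lemma depOn_pE (n : ℕ) : DepOn n (pE n) := fun ξ ξ' h =>
  Finset.prod_congr rfl fun k hk => by rw [h k (Finset.mem_range.1 hk)]

lemma CascadeM1.tilt (h : CascadeM1 P X X₀) [IsProbabilityMeasure (lawX P X₀)]
    [IsProbabilityMeasure (sizeBias (lawX P X₀))] (x : SymbSpace b) {n : ℕ}
    {F : (ℕ → ℝ) → ℝ≥0∞} (hF : Measurable F) (hFn : DepOn n F) :
    ∫⁻ ω, pE n (Xseq X x ω) * F (Xseq X x ω) ∂P = ∫⁻ ξ, F ξ ∂(iidM (sizeBias (lawX P X₀))) := by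
  rw [← lintegral_tilt (lawX P X₀) n F hF hFn, ← h.map_Xseq x]
  exact (lintegral_map ((measurable_pE n).mul hF) (h.measurable_Xseq x)).symm

lemma CascadeM1.measurable_Z (h : CascadeM1 P X X₀) (ν : Measure (SymbSpace b)) (n : ℕ) :
    Measurable (cascadeZ X ν n) := by
  unfold cascadeZ cascadeY
  have := h.meas
  fun_prop

lemma CascadeM1.ofReal_Z (h : CascadeM1 P X X₀) (hb : 2 ≤ b) (ν : Measure (SymbSpace b))
    [IsProbabilityMeasure ν] (n : ℕ) (ω : Ω) :
    ENNReal.ofReal (cascadeZ X ν n ω) = ∫⁻ x, pE n (Xseq X x ω) ∂ν := by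
  have hdep : DepOn n fun x => pE n (Xseq X x ω) := by
    intro x y hxy
    refine depOn_pE n _ _ fun k hk => ?_
    unfold Xseq
    rw [(wordPrefix_eq_iff x y (k + 1)).2 fun i hi => hxy i (by omega)]
  rw [lintegral_depOn hb ν hdep, cascadeZ, ENNReal.ofReal_sum_of_nonneg]
  · refine Finset.sum_congr rfl fun u _ => ?_
    have h1 : cascadeY X (List.ofFn u) ω =
        ∏ k ∈ Finset.range n, Xseq X (extWord hb u) ω k := by
      have := cascadeY_wordPrefix X (extWord hb u) n ω
      rw [wordPrefix_eq_pref, pref_extWord] at this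
      exact this
    rw [ENNReal.ofReal_mul, ENNReal.ofReal_toReal (measure_ne_top _ _), h1,
      ENNReal.ofReal_prod_of_nonneg]
    · rfl
    · intro k _; exact h.nonneg _ _
    · exact Finset.prod_nonneg fun k _ => h.nonneg _ _
  · intro u _
    exact mul_nonneg (Finset.prod_nonneg fun k _ => h.nonneg _ _) ENNReal.toReal_nonneg

lemma CascadeM1.Z_nonneg (h : CascadeM1 P X X₀) (ν : Measure (SymbSpace b)) (n : ℕ) (ω : Ω) :
    0 ≤ cascadeZ X ν n ω :=
  Finset.sum_nonneg fun u _ =>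
    mul_nonneg (Finset.prod_nonneg fun k _ => h.nonneg _ _) ENNReal.toReal_nonneg

lemma CascadeM1.eLpNorm_Z (h : CascadeM1 P X X₀) (hb : 2 ≤ b) (ν : Measure (SymbSpace b))
    [IsProbabilityMeasure ν] (n : ℕ) {s : Set Ω} (hs : MeasurableSet s) :
    eLpNorm (s.indicator (cascadeZ X ν n)) 1 P = ∫⁻ ω in s, ∫⁻ x, pE n (Xseq X x ω) ∂ν ∂P := by
  rw [eLpNorm_indicator_eq_eLpNorm_restrict hs, eLpNorm_one_eq_lintegral_enorm]
  refine lintegral_congr fun ω => ?_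
  rw [← h.ofReal_Z hb, Real.enorm_eq_ofReal (h.Z_nonneg ν n ω)]

lemma CascadeM1.measurable_pE_prod (h : CascadeM1 P X X₀) (n : ℕ) :
    Measurable fun q : SymbSpace b × Ω => pE n (Xseq X q.1 q.2) :=
  (measurable_pE n).comp h.measurable_Xseq_prod

/-- joint tilting identity -/
lemma CascadeM1.tilt_joint (h : CascadeM1 P X X₀) [IsProbabilityMeasure (lawX P X₀)]
    [IsProbabilityMeasure (sizeBias (lawX P X₀))] (ν : Measure (SymbSpace b))
    [IsProbabilityMeasure ν] {n : ℕ}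
    {F : SymbSpace b × (ℕ → ℝ) → ℝ≥0∞} (hF : Measurable F)
    (hFn : ∀ x, DepOn n fun ξ => F (x, ξ)) :
    ∫⁻ ω, ∫⁻ x, pE n (Xseq X x ω) * F (x, Xseq X x ω) ∂ν ∂P =
      ∫⁻ q, F q ∂(ν.prod (iidM (sizeBias (lawX P X₀)))) := by
  have hm : Measurable fun q : SymbSpace b × Ω => F (q.1, Xseq X q.1 q.2) :=
    hF.comp (measurable_fst.prodMk h.measurable_Xseq_prod)
  rw [lintegral_lintegral_swap, lintegral_prod _ hF.aemeasurable]
  · refine lintegral_congr fun x => ?_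
    exact h.tilt x (hF.comp measurable_prodMk_left) (hFn x)
  · have := ((h.measurable_pE_prod n).mul hm).comp measurable_swap
    exact this.aemeasurable

/-! ### Independence -/

/-- sigma-algebra generated by the weights `X_w`, `w ∈ S` -/
def sigX (X : List (Fin b) → Ω → ℝ) (S : Set (List (Fin b))) : MeasurableSpace Ω :=
  ⨆ w : {w : List (Fin b) // w ≠ []}, ⨆ _ : w.1 ∈ S, MeasurableSpace.comap (X w.1) inferInstance

lemma sigX_mono {S T : Set (List (Fin b))} (hST : S ⊆ T) : sigX X S ≤ sigX X T :=
  iSup_le fun w => iSup_le fun hw => le_iSup_of_le w (le_iSup_of_le (hST hw) le_rfl)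

lemma CascadeM1.sigX_le (h : CascadeM1 P X X₀) (S : Set (List (Fin b))) :
    sigX X S ≤ ‹MeasurableSpace Ω› :=
  iSup_le fun w => iSup_le fun _ => (h.meas _).comap_le

lemma measurable_sigX {S : Set (List (Fin b))} {w : List (Fin b)} (hw : w ≠ []) (hS : w ∈ S) :
    Measurable[sigX X S] (X w) := by
  rw [measurable_iff_comap_le]
  exact le_iSup_of_le ⟨w, hw⟩ (le_iSup_of_le hS le_rfl)

lemma CascadeM1.indep_sigX (h : CascadeM1 P X X₀) {S T : Set (List (Fin b))}
    (hST : Disjoint S T) : Indep (sigX X S) (sigX X T) P := by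
  have h1 := h.indep
  have h2 := indep_iSup_of_disjoint (m := fun w : {w : List (Fin b) // w ≠ []} =>
    MeasurableSpace.comap (X w.1) inferInstance) (μ := P) (fun w => (h.meas _).comap_le)
    h1 (S := {w | w.1 ∈ S}) (T := {w | w.1 ∈ T})
    (Set.disjoint_left.2 fun w hw hw' => Set.disjoint_left.1 hST hw hw')
  exact h2

lemma CascadeM1.lintegral_mul_X (h : CascadeM1 P X X₀) {S : Set (List (Fin b))}
    {w : List (Fin b)} (hw : w ≠ []) (hS : w ∉ S) {Φ : Ω → ℝ≥0∞}
    (hΦ : Measurable[sigX X S] Φ) :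
    ∫⁻ ω, Φ ω * ENNReal.ofReal (X w ω) ∂P = ∫⁻ ω, Φ ω ∂P := by
  have hi := h.indep_sigX (S := S) (T := {w}) (Set.disjoint_singleton_right.2 hS)
  have h1 := lintegral_mul_eq_lintegral_mul_lintegral_of_independent_measurableSpace
    (h.sigX_le S) (h.sigX_le {w}) hi hΦ (g := fun ω => ENNReal.ofReal (X w ω))
    (ENNReal.measurable_ofReal.comp (measurable_sigX hw (mem_singleton w)))
  rw [h1, h.lintegral_X hw, mul_one]

/-- prefixes of `x` of lengths `1..n` -/
def prefSet (x : SymbSpace b) (n : ℕ) : Set (List (Fin b)) :=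
  {w | ∃ k < n, w = wordPrefix x (k + 1)}

lemma measurable_pE_sigX (x : SymbSpace b) (n : ℕ) {S : Set (List (Fin b))}
    (hS : prefSet x n ⊆ S) : Measurable[sigX X S] fun ω => pE n (Xseq X x ω) := by
  unfold pE
  refine Finset.measurable_prod (m := sigX X S) _ fun k hk => ?_
  refine ENNReal.measurable_ofReal.comp ?_
  exact measurable_sigX (wordPrefix_ne_nil x k) (hS ⟨k, Finset.mem_range.1 hk, rfl⟩)

lemma measurable_dep_sigX (x : SymbSpace b) {n : ℕ} {F : (ℕ → ℝ) → ℝ≥0∞} (hF : Measurable F)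
    (hFn : DepOn n F) : Measurable[sigX X (prefSet x n)] fun ω => F (Xseq X x ω) := by
  have h1 : ∀ ω, F (Xseq X x ω) = F (fun k => if k < n then Xseq X x ω k else 0) := fun ω =>
    hFn _ _ fun k hk => by simp [hk]
  simp_rw [h1]
  refine hF.comp ?_
  refine @measurable_pi_lambda _ _ _ (sigX X (prefSet x n)) _ _ fun k => ?_
  by_cases hk : k < n
  · simp only [hk, if_true]
    exact measurable_sigX (wordPrefix_ne_nil x k) ⟨k, hk, rfl⟩
  · simp only [hk, if_false]
    exact measurable_const

lemma pE_Xseq_congr {x y : SymbSpace b} {n : ℕ} (hxy : ∀ i < n, x i = y i) (ω : Ω) :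
    pE n (Xseq X x ω) = pE n (Xseq X y ω) :=
  depOn_pE n _ _ fun k hk => by
    unfold Xseq
    rw [(wordPrefix_eq_iff x y (k + 1)).2 fun i hi => hxy i (by omega)]

lemma CascadeM1.pair (h : CascadeM1 P X X₀) (x y : SymbSpace b) (n : ℕ)
    {Φ : Ω → ℝ≥0∞} (hΦ : Measurable[sigX X (prefSet x n)] Φ) (j : ℕ) (hj : j ≤ n) :
    ∃ k ≤ j, (∀ i < k, y i = x i) ∧
      ∫⁻ ω, Φ ω * pE j (Xseq X y ω) ∂P = ∫⁻ ω, Φ ω * pE k (Xseq X x ω) ∂P := by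
  induction j with
  | zero => exact ⟨0, le_rfl, by simp, by simp [pE]⟩
  | succ j ih =>
    by_cases hag : ∀ i < j + 1, y i = x i
    · exact ⟨j + 1, le_rfl, hag, lintegral_congr fun ω => by rw [pE_Xseq_congr hag]⟩
    · obtain ⟨k, hk, hk1, hk2⟩ := ih (by omega)
      refine ⟨k, by omega, hk1, ?_⟩
      rw [← hk2]
      have h1 : Measurable[sigX X (prefSet x n ∪ prefSet y j)]
          fun ω => Φ ω * pE j (Xseq X y ω) :=
        Measurable.mul (m := sigX X (prefSet x n ∪ prefSet y j))
          (hΦ.mono (sigX_mono subset_union_left) le_rfl) (measurable_pE_sigX y j subset_union_right)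
      have h2 : wordPrefix y (j + 1) ∉ prefSet x n ∪ prefSet y j := by
        rintro (⟨i, hi, hi'⟩ | ⟨i, hi, hi'⟩)
        · have hl := congrArg List.length hi'
          simp only [length_wordPrefix] at hl
          obtain rfl : j = i := by omega
          exact hag ((wordPrefix_eq_iff _ _ _).1 hi')
        · have hl := congrArg List.length hi'
          simp only [length_wordPrefix] at hl
          omega
      rw [← h.lintegral_mul_X (wordPrefix_ne_nil y j) h2 h1]
      refine lintegral_congr fun ω => ?_
      rw [pE, pE, Finset.prod_range_succ, ← mul_assoc]
      rfl

end

open MeasureTheory ProbabilityTheory Filter Set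
open scoped ENNReal

noncomputable section

set_option linter.unusedSectionVars false
set_option linter.unusedVariables false

variable {b : ℕ} {Ω : Type*} [MeasurableSpace Ω] {P : Measure Ω} [IsProbabilityMeasure P]
  {X : List (Fin b) → Ω → ℝ} {X₀ : Ω → ℝ}

lemma lint_mono {α : Type*} [MeasurableSpace α] {m : Measure α} {f g : α → ℝ≥0∞}
    (h : ∀ a, f a ≤ g a) : ∫⁻ a, f a ∂m ≤ ∫⁻ a, g a ∂m := lintegral_mono h

/-- mass (in `[0,∞]`) of the cylinder around `x` -/
def cm (ν : Measure (SymbSpace b)) (k : ℕ) (x : SymbSpace b) : ℝ≥0∞ :=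
  ν (_root_.cylinder (wordPrefix x k))

lemma depOn_cm (ν : Measure (SymbSpace b)) (n : ℕ) : DepOn n (cm ν n) := fun x y h => by
  rw [cm, cm, (wordPrefix_eq_iff x y n).2 h]

/-- `Y_k ν([x|_k])` along the spine -/
def dE (ν : Measure (SymbSpace b)) (k : ℕ) (q : SymbSpace b × (ℕ → ℝ)) : ℝ≥0∞ :=
  pE k q.2 * cm ν k q.1

lemma measurable_dE (hb : 2 ≤ b) (ν : Measure (SymbSpace b)) (k : ℕ) : Measurable (dE ν k) :=
  ((measurable_pE k).comp measurable_snd).mul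
    (((depOn_cm ν k).measurable hb).comp measurable_fst)

lemma depOn_dE (ν : Measure (SymbSpace b)) (k : ℕ) (x : SymbSpace b) :
    DepOn k fun ξ => dE ν k (x, ξ) := fun ξ ξ' h => by
  simp only [dE]; rw [depOn_pE k ξ ξ' h]

/-- partial sums along the spine -/
def rE (ν : Measure (SymbSpace b)) (n : ℕ) (q : SymbSpace b × (ℕ → ℝ)) : ℝ≥0∞ :=
  ∑ k ∈ Finset.range (n + 1), dE ν k q

lemma measurable_rE (hb : 2 ≤ b) (ν : Measure (SymbSpace b)) (n : ℕ) : Measurable (rE ν n) := by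
  unfold rE
  exact Finset.measurable_fun_sum _ fun k _ => measurable_dE hb ν k

lemma depOn_rE (ν : Measure (SymbSpace b)) (n : ℕ) (x : SymbSpace b) :
    DepOn n fun ξ => rE ν n (x, ξ) := fun ξ ξ' h =>
  Finset.sum_congr rfl fun k hk =>
    depOn_dE ν k x ξ ξ' fun i hi => h i (by have := Finset.mem_range.1 hk; omega)

lemma CascadeM1.pair_le (h : CascadeM1 P X X₀) (hb : 2 ≤ b) (ν : Measure (SymbSpace b))
    [IsProbabilityMeasure ν] (x : SymbSpace b) (n : ℕ)
    {Φ : Ω → ℝ≥0∞} (hΦ : Measurable[sigX X (prefSet x n)] Φ) :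
    ∫⁻ y, ∫⁻ ω, Φ ω * pE n (Xseq X y ω) ∂P ∂ν ≤ ∫⁻ ω, Φ ω * rE ν n (x, Xseq X x ω) ∂P := by
  have hΦm : Measurable Φ := hΦ.mono (h.sigX_le _) le_rfl
  have hpm : ∀ k, Measurable fun ω => pE k (Xseq X x ω) := fun k =>
    (measurable_pE k).comp (h.measurable_Xseq x)
  have hcyl : ∀ k, MeasurableSet (_root_.cylinder (wordPrefix x k)) := fun k => measurableSet_cyl _
  calc ∫⁻ y, ∫⁻ ω, Φ ω * pE n (Xseq X y ω) ∂P ∂ν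
      ≤ ∫⁻ y, ∑ k ∈ Finset.range (n + 1), (_root_.cylinder (wordPrefix x k)).indicator
          (fun _ => ∫⁻ ω, Φ ω * pE k (Xseq X x ω) ∂P) y ∂ν := by
        refine lint_mono fun y => ?_
        obtain ⟨k, hk, hk1, hk2⟩ := h.pair x y n hΦ n le_rfl
        rw [hk2]
        refine le_trans ?_ (Finset.single_le_sum (f := fun k =>
          (_root_.cylinder (wordPrefix x k)).indicator
          (fun _ => ∫⁻ ω, Φ ω * pE k (Xseq X x ω) ∂P) y) (fun _ _ => zero_le)
          (Finset.mem_range.2 (by omega : k < n + 1)))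
        rw [indicator_of_mem ((mem_cylinder_wordPrefix x y k).2 hk1)]
    _ = ∑ k ∈ Finset.range (n + 1), (∫⁻ ω, Φ ω * pE k (Xseq X x ω) ∂P) * cm ν k x := by
        rw [lintegral_finsetSum]
        · refine Finset.sum_congr rfl fun k _ => ?_
          rw [lintegral_indicator_const (hcyl k)]; rfl
        · intro k _
          exact measurable_const.indicator (hcyl k)
    _ = ∫⁻ ω, Φ ω * rE ν n (x, Xseq X x ω) ∂P := by
        simp only [rE, dE, Finset.mul_sum]
        rw [lintegral_finsetSum]
        · refine Finset.sum_congr rfl fun k _ => ?_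
          have := lintegral_mul_const (μ := P) (cm ν k x) (f := fun ω => Φ ω * pE k (Xseq X x ω))
            (hΦm.mul (hpm k))
          rw [← this]
          refine lintegral_congr fun ω => ?_
          ring
        · intro k _
          exact hΦm.mul ((hpm k).mul_const _)

/-- tight second moment bound for the truncated mass -/
lemma CascadeM1.second_moment (h : CascadeM1 P X X₀) (hb : 2 ≤ b) (ν : Measure (SymbSpace b))
    [IsProbabilityMeasure ν] [IsProbabilityMeasure (lawX P X₀)]
    [IsProbabilityMeasure (sizeBias (lawX P X₀))] (n : ℕ) (K : ℝ≥0∞)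
    (I : SymbSpace b × (ℕ → ℝ) → ℝ≥0∞) (hIm : Measurable I) (hI1 : ∀ q, I q ≤ 1)
    (hIr : ∀ q, I q * rE ν n q ≤ K * I q) (hId : ∀ x, DepOn n fun ξ => I (x, ξ)) :
    ∫⁻ ω, (∫⁻ x, pE n (Xseq X x ω) * I (x, Xseq X x ω) ∂ν) *
      (∫⁻ x, pE n (Xseq X x ω) * I (x, Xseq X x ω) ∂ν) ∂P ≤ K := by
  have hIp : Measurable fun q : SymbSpace b × Ω => I (q.1, Xseq X q.1 q.2) :=
    hIm.comp (measurable_fst.prodMk h.measurable_Xseq_prod)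
  have hap : Measurable fun q : SymbSpace b × Ω =>
      pE n (Xseq X q.1 q.2) * I (q.1, Xseq X q.1 q.2) := (h.measurable_pE_prod n).mul hIp
  have hax : ∀ ω, Measurable fun x => pE n (Xseq X x ω) * I (x, Xseq X x ω) := fun ω => by
    have t := hap.comp (measurable_id.prodMk (measurable_const (a := ω)))
    exact t
  have hpx : ∀ ω, Measurable fun x => pE n (Xseq X x ω) := fun ω => by
    have t := (h.measurable_pE_prod n).comp (measurable_id.prodMk (measurable_const (a := ω)))
    exact t
  calc ∫⁻ ω, (∫⁻ x, pE n (Xseq X x ω) * I (x, Xseq X x ω) ∂ν) *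
      (∫⁻ x, pE n (Xseq X x ω) * I (x, Xseq X x ω) ∂ν) ∂P
      ≤ ∫⁻ ω, (∫⁻ x, pE n (Xseq X x ω) * I (x, Xseq X x ω) ∂ν) *
        (∫⁻ y, pE n (Xseq X y ω) ∂ν) ∂P := by
        refine lint_mono fun ω => mul_le_mul' le_rfl (lint_mono fun x => ?_)
        exact mul_le_of_le_one_right' (hI1 _)
    _ = ∫⁻ ω, ∫⁻ x, ∫⁻ y, (pE n (Xseq X x ω) * I (x, Xseq X x ω)) *
        pE n (Xseq X y ω) ∂ν ∂ν ∂P := by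
        refine lintegral_congr fun ω => ?_
        rw [← lintegral_mul_const _ (hax ω)]
        refine lintegral_congr fun x => ?_
        rw [← lintegral_const_mul _ (hpx ω)]
    _ = ∫⁻ x, ∫⁻ ω, ∫⁻ y, (pE n (Xseq X x ω) * I (x, Xseq X x ω)) *
        pE n (Xseq X y ω) ∂ν ∂P ∂ν := by
        rw [lintegral_lintegral_swap]
        have : Measurable fun r : (Ω × SymbSpace b) × SymbSpace b =>
            (pE n (Xseq X r.1.2 r.1.1) * I (r.1.2, Xseq X r.1.2 r.1.1)) *
              pE n (Xseq X r.2 r.1.1) :=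
by
          have e1 : Measurable fun r : (Ω × SymbSpace b) × SymbSpace b => (r.1.2, r.1.1) := by fun_prop
          have e2 : Measurable fun r : (Ω × SymbSpace b) × SymbSpace b => (r.2, r.1.1) := by fun_prop
          have t1 := hap.comp e1
          have t2 := (h.measurable_pE_prod n).comp e2
          exact t1.mul t2
        exact this.lintegral_prod_right'.aemeasurable
    _ = ∫⁻ x, ∫⁻ y, ∫⁻ ω, (pE n (Xseq X x ω) * I (x, Xseq X x ω)) *
        pE n (Xseq X y ω) ∂P ∂ν ∂ν := by
        refine lintegral_congr fun x => ?_
        rw [lintegral_lintegral_swap]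
        have : Measurable fun r : Ω × SymbSpace b =>
            (pE n (Xseq X x r.1) * I (x, Xseq X x r.1)) * pE n (Xseq X r.2 r.1) :=
by
          have e1 : Measurable fun r : Ω × SymbSpace b => (x, r.1) := by fun_prop
          have t1 := hap.comp e1
          have t2 := (h.measurable_pE_prod n).comp (measurable_swap (α := Ω) (β := SymbSpace b))
          exact t1.mul t2
        exact this.aemeasurable
    _ ≤ ∫⁻ x, ∫⁻ ω, (pE n (Xseq X x ω) * I (x, Xseq X x ω)) *
        rE ν n (x, Xseq X x ω) ∂P ∂ν := by
        refine lint_mono fun x => h.pair_le hb ν x n ?_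
        exact measurable_dep_sigX x (F := fun ξ => pE n ξ * I (x, ξ))
          ((measurable_pE n).mul (hIm.comp ((measurable_const (a := x)).prodMk measurable_id)))
          (fun ξ ξ' hh => by
            have h1 := hId x ξ ξ' hh
            simp only at h1 ⊢
            rw [h1, depOn_pE n ξ ξ' hh])
    _ ≤ ∫⁻ x, ∫⁻ ω, K * pE n (Xseq X x ω) ∂P ∂ν := by
        refine lint_mono fun x => lint_mono fun ω => ?_
        rw [mul_assoc, mul_comm K]
        refine mul_le_mul' le_rfl ((hIr _).trans ?_)
        exact mul_le_of_le_one_right' (hI1 _)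
    _ = K := by
        have h1 : ∀ x : SymbSpace b, ∫⁻ ω, K * pE n (Xseq X x ω) ∂P = K := fun x => by
          rw [lintegral_const_mul K (f := fun ω => pE n (Xseq X x ω))
            ((measurable_pE n).comp (h.measurable_Xseq x))]
          have := h.tilt x (n := n) (F := fun _ => 1) measurable_const (fun _ _ _ => rfl)
          simp only [mul_one, lintegral_const, measure_univ] at this
          rw [this, mul_one]
        simp [h1]

/-- total mass one -/
lemma CascadeM1.lintegral_Z (h : CascadeM1 P X X₀) (ν : Measure (SymbSpace b))
    [IsProbabilityMeasure ν] [IsProbabilityMeasure (lawX P X₀)]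
    [IsProbabilityMeasure (sizeBias (lawX P X₀))] (n : ℕ) :
    ∫⁻ ω, ∫⁻ x, pE n (Xseq X x ω) ∂ν ∂P = 1 := by
  have := h.tilt_joint ν (n := n) (F := fun _ => 1) measurable_const (fun _ _ _ _ => rfl)
  simpa using this

theorem CascadeM1.UI_of_summable (h : CascadeM1 P X X₀) (hb : 2 ≤ b) (ν : Measure (SymbSpace b))
    [IsProbabilityMeasure ν] [IsProbabilityMeasure (lawX P X₀)]
    [IsProbabilityMeasure (sizeBias (lawX P X₀))]
    (hsum : ∀ᵐ q ∂(ν.prod (iidM (sizeBias (lawX P X₀)))), ∑' k, dE ν k q < ∞) :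
    UniformIntegrable (fun n ω => cascadeZ X ν n ω) 1 P := by
  set μ := ν.prod (iidM (sizeBias (lawX P X₀))) with hμ
  refine ⟨fun n => (h.measurable_Z ν n).aestronglyMeasurable, ?_, 1, fun n => ?_⟩
  swap
  · have := h.eLpNorm_Z hb ν n MeasurableSet.univ
    rw [indicator_univ, Measure.restrict_univ, h.lintegral_Z] at this
    exact this.le
  intro ε hε
  -- choose `K`
  have hR : Measurable fun q => ∑' k, dE ν k q := Measurable.tsum fun k => measurable_dE hb ν k
  obtain ⟨K, hK⟩ : ∃ K : ℕ, μ {q | (K : ℝ≥0∞) < ∑' k, dE ν k q} < ENNReal.ofReal (ε / 2) := by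
    have ht : Tendsto (fun K : ℕ => μ {q | (K : ℝ≥0∞) < ∑' k, dE ν k q}) atTop
        (nhds (μ (⋂ K : ℕ, {q | (K : ℝ≥0∞) < ∑' k, dE ν k q}))) := by
      refine tendsto_measure_iInter_atTop
        (fun K => (measurableSet_lt measurable_const hR).nullMeasurableSet) ?_ ⟨0, measure_ne_top _ _⟩
      intro K L hKL q hq
      exact lt_of_le_of_lt (show (K : ℝ≥0∞) ≤ L by exact_mod_cast hKL)
        (show (L : ℝ≥0∞) < ∑' k, dE ν k q from hq)
    have h0 : μ (⋂ K : ℕ, {q | (K : ℝ≥0∞) < ∑' k, dE ν k q}) = 0 := by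
      refine measure_mono_null ?_ hsum
      intro q hq
      simp only [mem_iInter, mem_ofPred_eq] at hq
      simp only [mem_compl_iff, mem_ofPred_eq, not_lt, top_le_iff]
      exact ENNReal.eq_top_of_forall_nnreal_le fun r => by
        obtain ⟨N, hN⟩ := exists_nat_ge r
        exact le_trans (by exact_mod_cast hN) (hq N).le
    rw [h0] at ht
    exact (ht.eventually_lt_const (by positivity)).exists
  -- choose `L`, `δ`
  set L : ℝ := 4 * (K + 1) / ε with hL
  have hLpos : 0 < L := by positivity
  refine ⟨ε / (4 * L), by positivity, fun n s hs hPs => ?_⟩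
  set I : SymbSpace b × (ℕ → ℝ) → ℝ≥0∞ := fun q => if rE ν n q ≤ (K : ℝ≥0∞) then 1 else 0 with hI
  set J : SymbSpace b × (ℕ → ℝ) → ℝ≥0∞ := fun q => if (K : ℝ≥0∞) < rE ν n q then 1 else 0 with hJ
  have hIm : Measurable I :=
    Measurable.ite (measurableSet_le (measurable_rE hb ν n) measurable_const) measurable_const
      measurable_const
  have hJm : Measurable J :=
    Measurable.ite (measurableSet_lt measurable_const (measurable_rE hb ν n)) measurable_const
      measurable_const
  have hJd : ∀ x, DepOn n fun ξ => J (x, ξ) := fun x ξ ξ' hh => by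
    have := depOn_rE ν n x ξ ξ' hh
    simp only at this
    simp only [hJ, this]
  have hId : ∀ x, DepOn n fun ξ => I (x, ξ) := fun x ξ ξ' hh => by
    have := depOn_rE ν n x ξ ξ' hh
    simp only at this
    simp only [hI, this]
  have hI1 : ∀ q, I q ≤ 1 := fun q => by
    simp only [hI]; split_ifs <;> simp
  have hIr : ∀ q, I q * rE ν n q ≤ K * I q := fun q => by
    simp only [hI]; split_ifs with hq
    · simpa using hq
    · simp
  have hIJ : ∀ q, I q + J q = 1 := fun q => by
    simp only [hI, hJ]
    by_cases hq : rE ν n q ≤ K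
    · rw [if_pos hq, if_neg (not_lt.2 hq)]; simp
    · rw [if_neg hq, if_pos (not_le.1 hq)]; simp
  have hIp : Measurable fun q : SymbSpace b × Ω => I (q.1, Xseq X q.1 q.2) :=
    hIm.comp (measurable_fst.prodMk h.measurable_Xseq_prod)
  have hap : Measurable fun q : SymbSpace b × Ω =>
      pE n (Xseq X q.1 q.2) * I (q.1, Xseq X q.1 q.2) := (h.measurable_pE_prod n).mul hIp
  have hax : ∀ ω, Measurable fun x => pE n (Xseq X x ω) * I (x, Xseq X x ω) := fun ω => by
    have t := hap.comp (measurable_id.prodMk (measurable_const (a := ω)))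
    exact t
  set z1 : Ω → ℝ≥0∞ := fun ω => ∫⁻ x, pE n (Xseq X x ω) * I (x, Xseq X x ω) ∂ν with hz1
  set z2 : Ω → ℝ≥0∞ := fun ω => ∫⁻ x, pE n (Xseq X x ω) * J (x, Xseq X x ω) ∂ν with hz2
  have hz1m : Measurable z1 := by
    have : Measurable fun r : Ω × SymbSpace b =>
        pE n (Xseq X r.2 r.1) * I (r.2, Xseq X r.2 r.1) := by
      have t := hap.comp (measurable_swap (α := Ω) (β := SymbSpace b))
      exact t
    exact this.lintegral_prod_right'
  have hsplit : ∀ ω, ∫⁻ x, pE n (Xseq X x ω) ∂ν = z1 ω + z2 ω := fun ω => by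
    simp only [hz1, hz2]
    rw [← lintegral_add_left (hax ω)]
    refine lintegral_congr fun x => ?_
    rw [← mul_add, hIJ, mul_one]
  have hz2le : ∫⁻ ω in s, z2 ω ∂P ≤ ENNReal.ofReal (ε / 2) := by
    refine (setLIntegral_le_lintegral _ _).trans ?_
    rw [h.tilt_joint ν hJm hJd, ← hμ]
    have hJ2 : J ≤ {q | (K : ℝ≥0∞) < ∑' k, dE ν k q}.indicator 1 := fun q => by
      simp only [hJ]
      split_ifs with hq
      · rw [indicator_of_mem (show q ∈ {q | (K : ℝ≥0∞) < ∑' k, dE ν k q} from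
          lt_of_lt_of_le hq (ENNReal.sum_le_tsum _))]; rfl
      · exact zero_le
    refine (lintegral_mono hJ2).trans ?_
    rw [lintegral_indicator_one (measurableSet_lt measurable_const hR)]
    exact hK.le
  have hLne : ENNReal.ofReal L ≠ 0 := by simpa using hLpos
  have hz1le : ∫⁻ ω in s, z1 ω ∂P ≤ ENNReal.ofReal (ε / 2) := by
    have hpt : ∀ ω, z1 ω ≤ (ENNReal.ofReal L)⁻¹ * (z1 ω * z1 ω) + ENNReal.ofReal L := by
      intro ω
      rcases le_total (z1 ω) (ENNReal.ofReal L) with hle | hle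
      · exact hle.trans le_add_self
      · refine le_trans ?_ le_self_add
        rw [← mul_assoc]
        calc z1 ω = 1 * z1 ω := (one_mul _).symm
          _ = ((ENNReal.ofReal L)⁻¹ * ENNReal.ofReal L) * z1 ω := by
            rw [ENNReal.inv_mul_cancel hLne ENNReal.ofReal_ne_top]
          _ ≤ _ := by gcongr
    calc ∫⁻ ω in s, z1 ω ∂P
        ≤ ∫⁻ ω in s, ((ENNReal.ofReal L)⁻¹ * (z1 ω * z1 ω) + ENNReal.ofReal L) ∂P :=
          lint_mono hpt
      _ = (ENNReal.ofReal L)⁻¹ * ∫⁻ ω in s, z1 ω * z1 ω ∂P + ENNReal.ofReal L * P s := by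
          rw [lintegral_add_right _ measurable_const, lintegral_const_mul _ (f := fun ω => z1 ω * z1 ω)
            (hz1m.mul hz1m)]
          simp
      _ ≤ (ENNReal.ofReal L)⁻¹ * (K : ℝ≥0∞) + ENNReal.ofReal L * ENNReal.ofReal (ε / (4 * L)) := by
          gcongr
          exact (setLIntegral_le_lintegral _ _).trans (h.second_moment hb ν n K I hIm hI1 hIr hId)
      _ ≤ ENNReal.ofReal (ε / 4) + ENNReal.ofReal (ε / 4) := by
          refine add_le_add ?_ ?_
          · rw [← ENNReal.ofReal_inv_of_pos hLpos, ← ENNReal.ofReal_natCast K,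
              ← ENNReal.ofReal_mul (by positivity)]
            refine ENNReal.ofReal_le_ofReal ?_
            rw [hL, inv_div, div_mul_eq_mul_div, div_le_div_iff₀ (by positivity) (by norm_num)]
            nlinarith
          · rw [← ENNReal.ofReal_mul hLpos.le]
            refine ENNReal.ofReal_le_ofReal (le_of_eq ?_)
            field_simp
      _ = ENNReal.ofReal (ε / 2) := by
          rw [← ENNReal.ofReal_add (by positivity) (by positivity)]; congr 1; ring
  rw [h.eLpNorm_Z hb ν n hs, lintegral_congr hsplit, lintegral_add_left hz1m]
  calc _ ≤ ENNReal.ofReal (ε / 2) + ENNReal.ofReal (ε / 2) := add_le_add hz1le hz2le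
    _ = ENNReal.ofReal ε := by
      rw [← ENNReal.ofReal_add (by positivity) (by positivity)]; congr 1; ring

end

open MeasureTheory ProbabilityTheory Filter Set
open scoped ENNReal

noncomputable section

set_option linter.unusedSectionVars false
set_option linter.unusedVariables false

variable {b : ℕ} {Ω : Type*} [MeasurableSpace Ω] {P : Measure Ω} [IsProbabilityMeasure P]
  {X : List (Fin b) → Ω → ℝ} {X₀ : Ω → ℝ}

/-- first passage of `dE` above `K` at time `k` -/
def fpE (ν : Measure (SymbSpace b)) (K : ℝ≥0∞) (k : ℕ) (q : SymbSpace b × (ℕ → ℝ)) : ℝ≥0∞ :=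
  open Classical in if K < dE ν k q ∧ ∀ m < k, dE ν m q ≤ K then 1 else 0

lemma measurable_fpE (hb : 2 ≤ b) (ν : Measure (SymbSpace b)) (K : ℝ≥0∞) (k : ℕ) :
    Measurable (fpE ν K k) := by
  unfold fpE
  refine Measurable.ite ?_ measurable_const measurable_const
  have h1 : MeasurableSet {q | K < dE ν k q} := measurableSet_lt measurable_const (measurable_dE hb ν k)
  have h2 : MeasurableSet (⋂ m, ⋂ (_ : m < k), {q | dE ν m q ≤ K}) :=
    MeasurableSet.iInter fun m => MeasurableSet.iInter fun _ =>
      measurableSet_le (measurable_dE hb ν m) measurable_const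
  convert h1.inter h2 using 1
  ext q
  simp

lemma dE_congr (ν : Measure (SymbSpace b)) (k : ℕ) {x y : SymbSpace b} {ξ η : ℕ → ℝ}
    (hx : ∀ i < k, x i = y i) (hξ : ∀ i < k, ξ i = η i) : dE ν k (x, ξ) = dE ν k (y, η) := by
  unfold dE
  simp only
  rw [depOn_pE k ξ η hξ, depOn_cm ν k x y hx]

lemma fpE_congr (ν : Measure (SymbSpace b)) (K : ℝ≥0∞) (k : ℕ) {x y : SymbSpace b} {ξ η : ℕ → ℝ}
    (hx : ∀ i < k, x i = y i) (hξ : ∀ i < k, ξ i = η i) : fpE ν K k (x, ξ) = fpE ν K k (y, η) := by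
  unfold fpE
  have : (K < dE ν k (x, ξ) ∧ ∀ m < k, dE ν m (x, ξ) ≤ K) ↔
      (K < dE ν k (y, η) ∧ ∀ m < k, dE ν m (y, η) ≤ K) := by
    rw [dE_congr ν k hx hξ]
    refine and_congr Iff.rfl (forall_congr' fun m => forall_congr' fun hm => ?_)
    rw [dE_congr ν m (fun i hi => hx i (by omega)) (fun i hi => hξ i (by omega))]
  simp only [this]

lemma fpE_le_one (ν : Measure (SymbSpace b)) (K : ℝ≥0∞) (k : ℕ) (q) : fpE ν K k q ≤ 1 := by
  unfold fpE; split_ifs <;> simp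

lemma sum_fpE_le_one (ν : Measure (SymbSpace b)) (K : ℝ≥0∞) (N : ℕ) (q) :
    ∑ k ∈ Finset.range (N + 1), fpE ν K k q ≤ 1 := by
  by_cases hex : ∃ k ∈ Finset.range (N + 1), fpE ν K k q ≠ 0
  · obtain ⟨k, hk, hk0⟩ := hex
    rw [Finset.sum_eq_single k]
    · exact fpE_le_one ν K k q
    · intro j hj hjk
      by_contra hj0
      unfold fpE at hk0 hj0
      simp only [ne_eq, ite_eq_right_iff, one_ne_zero, imp_false, not_not] at hk0 hj0
      rcases lt_or_gt_of_ne hjk with hlt | hlt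
      · exact absurd (hk0.2 j hlt) (not_le.2 hj0.1)
      · exact absurd (hj0.2 k hlt) (not_le.2 hk0.1)
    · exact fun hk' => absurd hk hk'
  · push Not at hex
    rw [Finset.sum_eq_zero hex]; exact zero_le

lemma Xseq_congr {x y : SymbSpace b} {n : ℕ} (hxy : ∀ i < n, x i = y i) (ω : Ω) :
    ∀ k < n, Xseq X x ω k = Xseq X y ω k := fun k hk => by
  unfold Xseq
  rw [(wordPrefix_eq_iff x y (k + 1)).2 fun i hi => hxy i (by omega)]

/-- union bound for first passage -/
lemma CascadeM1.sum_fp (h : CascadeM1 P X X₀) (hb : 2 ≤ b) (ν : Measure (SymbSpace b))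
    [IsProbabilityMeasure ν] [IsProbabilityMeasure (lawX P X₀)]
    [IsProbabilityMeasure (sizeBias (lawX P X₀))] (K : ℕ) (hK : 0 < K) (N : ℕ) :
    ∫⁻ ω, ∑ k ∈ Finset.range (N + 1), ∑ u : Fin k → Fin b,
      fpE ν K k (extWord hb u, Xseq X (extWord hb u) ω) ∂P ≤ (K : ℝ≥0∞)⁻¹ := by
  have hK0 : (K : ℝ≥0∞) ≠ 0 := by exact_mod_cast hK.ne'
  have hKt : (K : ℝ≥0∞) ≠ ∞ := ENNReal.natCast_ne_top K
  have hm : ∀ k x, Measurable fun ξ => fpE ν K k (x, ξ) := fun k x => by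
    have t := (measurable_fpE hb ν K k).comp ((measurable_const (a := x)).prodMk measurable_id)
    exact t
  have hmX : ∀ k x, Measurable fun ω => fpE ν K k (x, Xseq X x ω) := fun k x =>
    (hm k x).comp (h.measurable_Xseq x)
  have hone : ∀ k x, ∫⁻ ω, fpE ν K k (x, Xseq X x ω) ∂P ≤
      (K : ℝ≥0∞)⁻¹ * (cm ν k x * ∫⁻ ξ, fpE ν K k (x, ξ) ∂(iidM (sizeBias (lawX P X₀)))) := by
    intro k x
    rw [← h.tilt x (hm k x) (fun ξ η hξ => fpE_congr ν K k (fun _ _ => rfl) hξ)]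
    have hm2 : Measurable fun ω => pE k (Xseq X x ω) * fpE ν K k (x, Xseq X x ω) :=
      ((measurable_pE k).comp (h.measurable_Xseq x)).mul (hmX k x)
    rw [← lintegral_const_mul _ hm2, ← lintegral_const_mul _ (hm2.const_mul _)]
    refine lint_mono fun ω => ?_
    by_cases hf : fpE ν K k (x, Xseq X x ω) = 0
    · rw [hf]; exact zero_le
    · have h1 : (K : ℝ≥0∞) < dE ν k (x, Xseq X x ω) := by
        unfold fpE at hf
        simp only [ite_eq_right_iff, one_ne_zero, imp_false, not_not] at hf
        exact hf.1
      calc fpE ν K k (x, Xseq X x ω) = (K : ℝ≥0∞)⁻¹ * K * fpE ν K k (x, Xseq X x ω) := by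
            rw [ENNReal.inv_mul_cancel hK0 hKt, one_mul]
        _ ≤ (K : ℝ≥0∞)⁻¹ * dE ν k (x, Xseq X x ω) * fpE ν K k (x, Xseq X x ω) := by gcongr
        _ = _ := by simp only [dE]; ring
  have hmF : ∀ k, Measurable fun x => ∫⁻ ξ, fpE ν K k (x, ξ) ∂(iidM (sizeBias (lawX P X₀))) :=
    fun k => (measurable_fpE hb ν K k).lintegral_prod_right'
  calc ∫⁻ ω, ∑ k ∈ Finset.range (N + 1), ∑ u : Fin k → Fin b,
      fpE ν K k (extWord hb u, Xseq X (extWord hb u) ω) ∂P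
      = ∑ k ∈ Finset.range (N + 1), ∑ u : Fin k → Fin b, ∫⁻ ω,
        fpE ν K k (extWord hb u, Xseq X (extWord hb u) ω) ∂P := by
        rw [lintegral_finsetSum _ fun k _ => Finset.measurable_fun_sum _ fun u _ => hmX k _]
        refine Finset.sum_congr rfl fun k _ => ?_
        rw [lintegral_finsetSum _ fun u _ => hmX k _]
    _ ≤ ∑ k ∈ Finset.range (N + 1), ∑ u : Fin k → Fin b, (K : ℝ≥0∞)⁻¹ * (cm ν k (extWord hb u) *
        ∫⁻ ξ, fpE ν K k (extWord hb u, ξ) ∂(iidM (sizeBias (lawX P X₀)))) :=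
        Finset.sum_le_sum fun k _ => Finset.sum_le_sum fun u _ => hone k _
    _ = (K : ℝ≥0∞)⁻¹ * ∑ k ∈ Finset.range (N + 1), ∫⁻ x,
        ∫⁻ ξ, fpE ν K k (x, ξ) ∂(iidM (sizeBias (lawX P X₀))) ∂ν := by
        rw [Finset.mul_sum]
        refine Finset.sum_congr rfl fun k _ => ?_
        rw [lintegral_depOn hb ν (n := k) (F := fun x => ∫⁻ ξ, fpE ν K k (x, ξ)
          ∂(iidM (sizeBias (lawX P X₀)))) (fun x y hxy => lintegral_congr fun ξ =>
            fpE_congr ν K k hxy fun _ _ => rfl), Finset.mul_sum]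
        refine Finset.sum_congr rfl fun u _ => ?_
        rw [cm, wordPrefix_eq_pref, pref_extWord, mul_comm (ν _)]
    _ = (K : ℝ≥0∞)⁻¹ * ∫⁻ x, ∫⁻ ξ, ∑ k ∈ Finset.range (N + 1), fpE ν K k (x, ξ)
        ∂(iidM (sizeBias (lawX P X₀))) ∂ν := by
        rw [← lintegral_finsetSum _ fun k _ => hmF k]
        congr 1
        refine lintegral_congr fun x => ?_
        rw [lintegral_finsetSum _ fun k _ => hm k x]
    _ ≤ (K : ℝ≥0∞)⁻¹ * ∫⁻ x, ∫⁻ ξ, 1 ∂(iidM (sizeBias (lawX P X₀))) ∂ν := by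
        gcongr with x ξ
        exact sum_fpE_le_one ν K N _
    _ = (K : ℝ≥0∞)⁻¹ := by simp

theorem CascadeM1.bdd_of_UI (h : CascadeM1 P X X₀) (hb : 2 ≤ b) (ν : Measure (SymbSpace b))
    [IsProbabilityMeasure ν] [IsProbabilityMeasure (lawX P X₀)]
    [IsProbabilityMeasure (sizeBias (lawX P X₀))]
    (hUI : UniformIntegrable (fun n ω => cascadeZ X ν n ω) 1 P) :
    ∀ᵐ q ∂(ν.prod (iidM (sizeBias (lawX P X₀)))), ∃ K : ℕ, ∀ k, dE ν k q ≤ K := by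
  set μ := ν.prod (iidM (sizeBias (lawX P X₀))) with hμ
  by_contra hcon
  set p := μ {q | ¬ ∃ K : ℕ, ∀ k, dE ν k q ≤ K} with hp
  have hp0 : p ≠ 0 := fun h0 => hcon h0
  have hpt : p ≠ ∞ := measure_ne_top _ _
  have hpos : 0 < p.toReal := ENNReal.toReal_pos hp0 hpt
  obtain ⟨δ, hδ, hUI⟩ := hUI.2.1 (ε := p.toReal / 2) (by positivity)
  obtain ⟨K, hK⟩ := exists_nat_gt (1 / δ)
  have hKr : (0 : ℝ) < K := lt_trans (by positivity) hK
  have hK0 : 0 < K := by exact_mod_cast hKr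
  -- the event at level N
  set a : ℕ → Set (SymbSpace b × (ℕ → ℝ)) := fun N => ⋃ k ∈ Finset.range (N + 1),
    {q | (K : ℝ≥0∞) < dE ν k q} with ha
  have ham : ∀ N, MeasurableSet (a N) := fun N =>
    Finset.measurableSet_biUnion _ fun k _ => measurableSet_lt measurable_const (measurable_dE hb ν k)
  have hmono : Monotone a := fun N M hNM => by
    refine biUnion_subset_biUnion_left fun k hk => ?_
    simp only [Finset.coe_range, mem_Iio, Finset.mem_coe, Finset.mem_range] at hk ⊢
    omega
  obtain ⟨N, hN⟩ : ∃ N, ENNReal.ofReal (p.toReal / 2) < μ (a N) := by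
    have ht := tendsto_measure_iUnion_atTop (μ := μ) hmono
    have hle : p ≤ μ (⋃ N, a N) := measure_mono fun q hq => by
      have hq : ¬ ∃ K : ℕ, ∀ k, dE ν k q ≤ K := hq
      push Not at hq
      obtain ⟨k, hk⟩ := hq K
      refine mem_iUnion.2 ⟨k, ?_⟩
      simp only [ha, mem_iUnion]
      exact ⟨k, by simp, hk⟩
    have hlt : ENNReal.ofReal (p.toReal / 2) < p := by
      rw [ENNReal.ofReal_lt_iff_lt_toReal (by positivity) hpt]; linarith
    exact (ht.eventually_const_lt (hlt.trans_le hle)).exists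
  set S : Ω → ℝ≥0∞ := fun ω => ∑ k ∈ Finset.range (N + 1), ∑ u : Fin k → Fin b,
      fpE ν K k (extWord hb u, Xseq X (extWord hb u) ω) with hS
  have hSm : Measurable S := by
    refine Finset.measurable_fun_sum _ fun k _ => Finset.measurable_fun_sum _ fun u _ => ?_
    have t := ((measurable_fpE hb ν K k).comp
      ((measurable_const (a := extWord hb u)).prodMk (h.measurable_Xseq (extWord hb u))))
    exact t
  have hAm : MeasurableSet {ω | 1 ≤ S ω} := measurableSet_le measurable_const hSm
  have hPA : P {ω | 1 ≤ S ω} ≤ ENNReal.ofReal δ := by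
    have h1 := mul_meas_ge_le_lintegral (μ := P) hSm 1
    rw [one_mul] at h1
    refine h1.trans ((h.sum_fp hb ν K hK0 N).trans ?_)
    rw [← ENNReal.ofReal_natCast, ← ENNReal.ofReal_inv_of_pos hKr]
    refine ENNReal.ofReal_le_ofReal ?_
    rw [inv_le_comm₀ hKr hδ, ← one_div]
    exact hK.le
  have hkey : ∀ ω x, (x, Xseq X x ω) ∈ a N → 1 ≤ S ω := by
    classical
    intro ω x hx
    simp only [ha, mem_iUnion] at hx
    obtain ⟨k, hk, hkd⟩ := hx
    have hex : ∃ k, (K : ℝ≥0∞) < dE ν k (x, Xseq X x ω) := ⟨k, hkd⟩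
    set m := Nat.find hex with hmdef
    have hm1 := Nat.find_spec hex
    have hm2 : ∀ j < m, dE ν j (x, Xseq X x ω) ≤ K := fun j hj => not_lt.1 (Nat.find_min hex hj)
    have hmN : m ∈ Finset.range (N + 1) := by
      have : m ≤ k := Nat.find_min' hex hkd
      simp only [Finset.mem_range] at hk ⊢; omega
    have hfp : fpE ν K m (x, Xseq X x ω) = 1 := if_pos ⟨hm1, hm2⟩
    have hagree : ∀ i < m, extWord hb (pref m x) i = x i := by
      have := pref_extWord hb (pref m x)
      intro i hi
      have := congrFun this ⟨i, hi⟩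
      exact this
    have hfp2 : fpE ν K m (extWord hb (pref m x), Xseq X (extWord hb (pref m x)) ω) = 1 := by
      rw [← hfp]
      exact fpE_congr ν K m hagree (Xseq_congr hagree ω)
    rw [← hfp2]
    refine le_trans ?_ (Finset.single_le_sum (f := fun k => ∑ u : Fin k → Fin b,
      fpE ν K k (extWord hb u, Xseq X (extWord hb u) ω)) (fun _ _ => zero_le) hmN)
    exact Finset.single_le_sum (f := fun u : Fin m → Fin b =>
      fpE ν K m (extWord hb u, Xseq X (extWord hb u) ω)) (fun _ _ => zero_le) (Finset.mem_univ _)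
  have h2 := hUI N {ω | 1 ≤ S ω} hAm hPA
  have h3 := h.eLpNorm_Z hb ν N hAm
  have h4 : eLpNorm ({ω | 1 ≤ S ω}.indicator (cascadeZ X ν N)) 1 P ≤ ENNReal.ofReal (p.toReal / 2) :=
    h2
  rw [h3] at h4
  refine absurd h4 (not_le.2 (hN.trans_le ?_))
  have hJm : Measurable ((a N).indicator (1 : SymbSpace b × (ℕ → ℝ) → ℝ≥0∞)) :=
    measurable_one.indicator (ham N)
  have hJd : ∀ x, DepOn N fun ξ => (a N).indicator (1 : SymbSpace b × (ℕ → ℝ) → ℝ≥0∞) (x, ξ) := by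
    intro x ξ η hξ
    have : (x, ξ) ∈ a N ↔ (x, η) ∈ a N := by
      simp only [ha, mem_iUnion]
      refine exists_congr fun k => exists_congr fun hk => ?_
      have hk' : k < N + 1 := by simpa using hk
      change (K : ℝ≥0∞) < dE ν k (x, ξ) ↔ (K : ℝ≥0∞) < dE ν k (x, η)
      rw [dE_congr ν k (fun _ _ => rfl) (fun i hi => hξ i (by omega))]
    show (a N).indicator (1 : SymbSpace b × (ℕ → ℝ) → ℝ≥0∞) (x, ξ) = (a N).indicator 1 (x, η)
    by_cases hm : (x, ξ) ∈ a N
    · rw [indicator_of_mem hm, indicator_of_mem (this.1 hm)]; rfl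
    · rw [indicator_of_notMem hm, indicator_of_notMem (fun hh => hm (this.2 hh))]
  rw [← lintegral_indicator_one (ham N), hμ, ← h.tilt_joint ν hJm hJd, ← lintegral_indicator hAm]
  refine lint_mono fun ω => ?_
  by_cases hω : 1 ≤ S ω
  · rw [indicator_of_mem (show ω ∈ {ω | 1 ≤ S ω} from hω)]
    refine lint_mono fun x => ?_
    refine mul_le_of_le_one_right' ?_
    exact indicator_le_self' (fun _ _ => zero_le) _
  · have : ∀ x, (a N).indicator (1 : SymbSpace b × (ℕ → ℝ) → ℝ≥0∞) (x, Xseq X x ω) = 0 := fun x =>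
      indicator_of_notMem (fun hx => hω (hkey ω x hx)) _
    simp [this]

end

open MeasureTheory ProbabilityTheory Filter Set
open scoped ENNReal

noncomputable section

set_option linter.unusedSectionVars false
set_option linter.unusedVariables false

section entropy
variable {b : ℕ}

lemma measurable_shift : Measurable (shiftMap b) :=
  measurable_pi_lambda _ fun _ => measurable_pi_apply _

lemma shift_iterate (k : ℕ) (x : SymbSpace b) (i : ℕ) : (shiftMap b)^[k] x i = x (i + k) := by
  induction k generalizing i with
  | zero => rfl
  | succ k ih =>
    rw [Function.iterate_succ_apply', shiftMap, ih]
    congr 1; omega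

lemma pm_zero (ν : Measure (SymbSpace b)) [IsProbabilityMeasure ν] (x : SymbSpace b) :
    pm ν 0 x = 1 := by
  have : _root_.cylinder (wordPrefix x 0) = univ := by
    refine eq_univ_of_forall fun y => ?_
    exact (mem_cylinder_wordPrefix x y 0).2 (by simp)
  rw [pm, this]; simp

lemma pm_le_one (ν : Measure (SymbSpace b)) [IsProbabilityMeasure ν] (n : ℕ) (x : SymbSpace b) :
    pm ν n x ≤ 1 := measureReal_le_one

lemma ae_pm_pos (ν : Measure (SymbSpace b)) [IsProbabilityMeasure ν] :
    ∀ᵐ x ∂ν, ∀ n, 0 < pm ν n x := by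
  rw [ae_all_iff]
  intro n
  have hsub : {x | ¬ 0 < pm ν n x} ⊆ ⋃ u : {u : Fin n → Fin b // ν (_root_.cylinder (List.ofFn u)) = 0},
      _root_.cylinder (List.ofFn u.1) := by
    intro x hx
    have hx : ¬ 0 < pm ν n x := hx
    have h0 : ν (_root_.cylinder (List.ofFn (pref n x))) = 0 := by
      have h1 : pm ν n x = 0 := le_antisymm (not_lt.1 hx) (pm_nonneg ν n x)
      rw [pm, ENNReal.toReal_eq_zero_iff] at h1
      rcases h1 with h1 | h1
      · exact h1
      · exact absurd h1 (measure_ne_top _ _)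
    refine mem_iUnion.2 ⟨⟨pref n x, h0⟩, ?_⟩
    rw [cylinder_ofFn]; rfl
  refine measure_mono_null hsub ?_
  rw [measure_iUnion_null_iff]
  exact fun u => u.2

/-- the cylinder set with first letter `i` and tail prefix `u` -/
def cylS (j : ℕ) (i : Fin b) (u : Fin j → Fin b) : Set (SymbSpace b) :=
  {x | x 0 = i ∧ pref j (shiftMap b x) = u}

lemma cylinder_succ (j : ℕ) (x : SymbSpace b) :
    _root_.cylinder (wordPrefix x (j + 1)) = cylS j (x 0) (pref j (shiftMap b x)) := by
  rw [wordPrefix_eq_pref, cylinder_ofFn]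
  ext y
  change pref (j + 1) y = pref (j + 1) x ↔ (y 0 = x 0 ∧ pref j (shiftMap b y) = pref j (shiftMap b x))
  simp only [funext_iff, pref, shiftMap]
  constructor
  · intro h
    exact ⟨h 0, fun i => by simpa using h i.succ⟩
  · rintro ⟨h0, h⟩ i
    refine Fin.cases ?_ (fun i => ?_) i
    · exact h0
    · simpa using h i

lemma measurableSet_cylS (j : ℕ) (i : Fin b) (u : Fin j → Fin b) : MeasurableSet (cylS j i u) := by
  have h1 : MeasurableSet ((fun x : SymbSpace b => x 0) ⁻¹' {i}) :=
    measurable_pi_apply 0 (measurableSet_singleton i)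
  have h2 : MeasurableSet ((fun x : SymbSpace b => pref j (shiftMap b x)) ⁻¹' {u}) :=
    ((measurable_pref j).comp measurable_shift) (measurableSet_singleton u)
  exact h1.inter h2

lemma cylS_le (ν : Measure (SymbSpace b)) [IsProbabilityMeasure ν]
    (hmp : MeasurePreserving (shiftMap b) ν ν) (j : ℕ) (i : Fin b) (u : Fin j → Fin b) :
    ν (cylS j i u) ≤ ν (_root_.cylinder (List.ofFn u)) := by
  rw [cylinder_ofFn, ← hmp.measure_preimage
    ((measurable_pref j) (measurableSet_singleton u)).nullMeasurableSet]
  exact measure_mono fun x hx => hx.2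

lemma pm_succ_le (ν : Measure (SymbSpace b)) [IsProbabilityMeasure ν]
    (hmp : MeasurePreserving (shiftMap b) ν ν) (j : ℕ) (x : SymbSpace b) :
    pm ν (j + 1) x ≤ pm ν j (shiftMap b x) := by
  refine ENNReal.toReal_mono (measure_ne_top _ _) ?_
  rw [cylinder_succ]
  exact cylS_le ν hmp j _ _

/-- minus the log conditional probability of the first letter given the next `j` -/
def lg (ν : Measure (SymbSpace b)) (j : ℕ) (x : SymbSpace b) : ℝ :=
  Real.log (pm ν j (shiftMap b x)) - Real.log (pm ν (j + 1) x)

lemma depOn_comp_shift {β : Type*} {n : ℕ} {F : SymbSpace b → β} (hF : DepOn n F) :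
    DepOn (n + 1) fun x => F (shiftMap b x) := fun x y h =>
  hF _ _ fun k hk => h (k + 1) (by omega)

lemma depOn_lg (ν : Measure (SymbSpace b)) (j : ℕ) : DepOn (j + 1) (lg ν j) := fun x y h => by
  have h1 := depOn_comp_shift (depOn_pm ν j) x y h
  have h2 := depOn_pm ν (j + 1) x y h
  simp only at h1
  rw [lg, lg, h1, h2]

lemma ae_iterate {ν : Measure (SymbSpace b)} (hmp : MeasurePreserving (shiftMap b) ν ν)
    {p : SymbSpace b → Prop} (hp : ∀ᵐ x ∂ν, p x) : ∀ᵐ x ∂ν, ∀ k, p ((shiftMap b)^[k] x) := by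
  rw [ae_all_iff]
  exact fun k => (hmp.iterate k).quasiMeasurePreserving.ae hp

lemma ae_lg_nonneg (ν : Measure (SymbSpace b)) [IsProbabilityMeasure ν]
    (hmp : MeasurePreserving (shiftMap b) ν ν) : ∀ᵐ x ∂ν, ∀ j, 0 ≤ lg ν j x := by
  filter_upwards [ae_pm_pos ν] with x hx j
  exact sub_nonneg.2 (Real.log_le_log (hx _) (pm_succ_le ν hmp j x))

lemma neg_log_pm_eq (ν : Measure (SymbSpace b)) [IsProbabilityMeasure ν] (n : ℕ) (x : SymbSpace b) :
    -Real.log (pm ν n x) = ∑ k ∈ Finset.range n, lg ν (n - 1 - k) ((shiftMap b)^[k] x) := by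
  induction n generalizing x with
  | zero => simp [pm_zero]
  | succ n ih =>
    rw [Finset.sum_range_succ']
    have h1 := ih (shiftMap b x)
    have h2 : ∑ k ∈ Finset.range n, lg ν (n + 1 - 1 - (k + 1)) ((shiftMap b)^[k + 1] x) =
        -Real.log (pm ν n (shiftMap b x)) := by
      rw [h1]
      refine Finset.sum_congr rfl fun k _ => ?_
      rw [Function.iterate_succ_apply, show n + 1 - 1 - (k + 1) = n - 1 - k by omega]
    rw [h2]
    simp [lg]
    ring

/-- the entropy of the `n`-th partition -/
def Hn (ν : Measure (SymbSpace b)) (n : ℕ) : ℝ := ∫ x, -Real.log (pm ν n x) ∂ν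

lemma depOn_neglog (ν : Measure (SymbSpace b)) (n : ℕ) : DepOn n fun x => -Real.log (pm ν n x) :=
  fun x y h => by simp only [depOn_pm ν n x y h]

lemma Hn_eq (hb : 2 ≤ b) (ν : Measure (SymbSpace b)) [IsProbabilityMeasure ν] (n : ℕ) :
    Hn ν n = n * entropySeq ν n := by
  rcases Nat.eq_zero_or_pos n with rfl | hn
  · simp [Hn, pm_zero]
  · rw [Hn, (integral_depOn hb ν (depOn_neglog ν n)).2, entropySeq, ← mul_assoc,
      mul_inv_cancel₀ (by positivity), one_mul]
    refine Finset.sum_congr rfl fun u _ => ?_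
    rw [pm_extWord]; ring

lemma integrable_neglog (hb : 2 ≤ b) (ν : Measure (SymbSpace b)) [IsProbabilityMeasure ν] (n : ℕ) :
    Integrable (fun x => -Real.log (pm ν n x)) ν := (integral_depOn hb ν (depOn_neglog ν n)).1

lemma integrable_lg (hb : 2 ≤ b) (ν : Measure (SymbSpace b)) [IsProbabilityMeasure ν] (n : ℕ) :
    Integrable (lg ν n) ν := (integral_depOn hb ν (depOn_lg ν n)).1

lemma integral_lg (hb : 2 ≤ b) (ν : Measure (SymbSpace b)) [IsProbabilityMeasure ν]
    (hmp : MeasurePreserving (shiftMap b) ν ν) (j : ℕ) :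
    ∫ x, lg ν j x ∂ν = Hn ν (j + 1) - Hn ν j := by
  have h1 : ∀ x, lg ν j x = -Real.log (pm ν (j + 1) x) - -Real.log (pm ν j (shiftMap b x)) :=
    fun x => by simp only [lg]; ring
  have hm := ((depOn_neglog ν j).measurable hb).aestronglyMeasurable (μ := ν)
  have h2 : ∫ x, -Real.log (pm ν j (shiftMap b x)) ∂ν = Hn ν j := by
    have h4 := integral_map (μ := ν) hmp.measurable.aemeasurable (f := fun y => -Real.log (pm ν j y))
      (by rw [hmp.map_eq]; exact hm)
    rw [hmp.map_eq] at h4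
    exact h4.symm
  have h3 : Integrable (fun x => -Real.log (pm ν j (shiftMap b x))) ν :=
    (integral_depOn hb ν (depOn_comp_shift (depOn_neglog ν j))).1
  simp_rw [h1]
  rw [integral_sub (integrable_neglog hb ν _) h3, h2]
  rfl

/-- conditional probability ratio -/
def cr (ν : Measure (SymbSpace b)) (i : Fin b) (j : ℕ) (x : SymbSpace b) : ℝ :=
  ν.real (cylS j i (pref j (shiftMap b x))) / pm ν j (shiftMap b x)

lemma cr_self (ν : Measure (SymbSpace b)) (j : ℕ) (x : SymbSpace b) :
    cr ν (x 0) j x = pm ν (j + 1) x / pm ν j (shiftMap b x) := by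
  rw [cr, show pm ν (j + 1) x = _ from congrArg ENNReal.toReal (congrArg ν (cylinder_succ j x))]; rfl

/-- the filtration of the letters `1..j` -/
def tailFil (b : ℕ) : Filtration ℕ (inferInstance : MeasurableSpace (SymbSpace b)) where
  seq j := MeasurableSpace.comap (fun x => pref j (shiftMap b x)) inferInstance
  mono' := by
    intro i j hij
    have : (fun x : SymbSpace b => pref i (shiftMap b x)) =
        (fun u : Fin j → Fin b => fun l : Fin i => u ⟨l, by omega⟩) ∘ fun x => pref j (shiftMap b x) := rfl
    simp only
    rw [this, ← MeasurableSpace.comap_comp]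
    exact MeasurableSpace.comap_mono (measurable_of_finite _).comap_le
  le' := fun j => ((measurable_pref j).comp measurable_shift).comap_le

lemma cr_condExp (hb : 2 ≤ b) (ν : Measure (SymbSpace b)) [IsProbabilityMeasure ν]
    (hmp : MeasurePreserving (shiftMap b) ν ν) (i : Fin b) (j : ℕ) :
    cr ν i j =ᵐ[ν] ν[({x : SymbSpace b | x 0 = i}.indicator fun _ => (1 : ℝ)) | tailFil b j] := by
  have hmi : MeasurableSet {x : SymbSpace b | x 0 = i} :=
    (measurable_pi_apply 0 : Measurable fun x : SymbSpace b => x 0) (measurableSet_singleton i)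
  have hIntg : Integrable ({x : SymbSpace b | x 0 = i}.indicator fun _ => (1 : ℝ)) ν :=
    (integrable_const _).indicator hmi
  set R : (Fin j → Fin b) → ℝ := fun u =>
    ν.real (cylS j i u) / ν.real (_root_.cylinder (List.ofFn u)) with hR
  have hcr : cr ν i j = fun x => R (pref j (shiftMap b x)) := rfl
  have hdep : DepOn (j + 1) (cr ν i j) := by
    rw [hcr]
    exact depOn_comp_shift (F := fun x => R (pref j x)) fun x y h => by
      simp only [show pref j x = pref j y from funext fun k => h k k.2]
  have hcint : Integrable (cr ν i j) ν := (integral_depOn hb ν hdep).1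
  refine ae_eq_condExp_of_forall_setIntegral_eq ((tailFil b).le j) hIntg
    (fun s _ _ => hcint.integrableOn) ?_ ?_
  · rintro s ⟨T, -, rfl⟩ -
    classical
    have hsm : MeasurableSet ((fun x : SymbSpace b => pref j (shiftMap b x)) ⁻¹' T) :=
      ((measurable_pref j).comp measurable_shift) (Set.toFinite T).measurableSet
    rw [setIntegral_indicator hmi, setIntegral_const, smul_eq_mul, mul_one]
    -- right side
    have e1 : ((fun x : SymbSpace b => pref j (shiftMap b x)) ⁻¹' T) ∩ {x | x 0 = i} =
        ⋃ u ∈ Finset.univ.filter (· ∈ T), cylS j i u := by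
      ext x
      simp only [mem_inter_iff, mem_preimage, mem_iUnion, Finset.mem_filter, Finset.mem_univ,
        true_and]
      constructor
      · rintro ⟨h1, h2⟩
        exact ⟨_, h1, h2, rfl⟩
      · rintro ⟨u, h1, h2, h3⟩
        exact ⟨by rw [h3]; exact h1, h2⟩
    rw [e1, measureReal_biUnion_finset]
    · rw [← integral_indicator hsm]
      have e2 : ∀ x, ((fun x : SymbSpace b => pref j (shiftMap b x)) ⁻¹' T).indicator (cr ν i j) x =
          (fun y => T.indicator R (pref j y)) (shiftMap b x) := by
        intro x
        by_cases hx : pref j (shiftMap b x) ∈ T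
        · rw [indicator_of_mem (show x ∈ (fun x : SymbSpace b => pref j (shiftMap b x)) ⁻¹' T from hx)]
          simp only
          rw [indicator_of_mem hx, hcr]
        · rw [indicator_of_notMem (show x ∉ (fun x : SymbSpace b => pref j (shiftMap b x)) ⁻¹' T from hx)]
          simp only
          rw [indicator_of_notMem hx]
      have hd : DepOn j (fun y : SymbSpace b => T.indicator R (pref j y)) := fun x y h => by
        simp only [show pref j x = pref j y from funext fun k => h k k.2]
      simp_rw [e2]
      have h4 := integral_map (μ := ν) hmp.measurable.aemeasurable
        (f := fun y => T.indicator R (pref j y))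
        (by rw [hmp.map_eq]; exact (hd.measurable hb).aestronglyMeasurable)
      rw [hmp.map_eq] at h4
      rw [← h4, (integral_depOn hb ν hd).2, Finset.sum_filter]
      refine Finset.sum_congr rfl fun u _ => ?_
      rw [pref_extWord]
      split_ifs with hu
      · rw [indicator_of_mem hu, hR]
        simp only
        by_cases h0 : ν (_root_.cylinder (List.ofFn u)) = 0
        · have h5 : ν (cylS j i u) = 0 := le_antisymm (h0 ▸ cylS_le ν hmp j i u) zero_le
          simp [measureReal_def, h0, h5]
        · have h6 : (ν (_root_.cylinder (List.ofFn u))).toReal ≠ 0 :=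
            (ENNReal.toReal_pos h0 (measure_ne_top _ _)).ne'
          exact div_mul_cancel₀ _ h6
      · rw [indicator_of_notMem hu, zero_mul]
    · intro u _ v _ huv
      exact Set.disjoint_left.2 fun x hx hx' => huv (hx.2.symm.trans hx'.2)
    · exact fun u _ => measurableSet_cylS j i u
  · refine StronglyMeasurable.aestronglyMeasurable ?_
    rw [hcr]
    refine Measurable.stronglyMeasurable ?_
    exact (measurable_of_finite R).comp (comap_measurable _)

theorem ae_tendsto_ratio (hb : 2 ≤ b) (ν : Measure (SymbSpace b)) [IsProbabilityMeasure ν]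
    (hmp : MeasurePreserving (shiftMap b) ν ν) :
    ∀ᵐ x ∂ν, ∃ g : ℝ, Tendsto (fun j => pm ν (j + 1) x / pm ν j (shiftMap b x)) atTop (nhds g) := by
  have h1 : ∀ᵐ x ∂ν, ∀ i : Fin b, ∀ j, cr ν i j x =
      (ν[({x : SymbSpace b | x 0 = i}.indicator fun _ => (1 : ℝ)) | tailFil b j]) x := by
    rw [ae_all_iff]; intro i; rw [ae_all_iff]; intro j
    exact cr_condExp hb ν hmp i j
  have h2 : ∀ᵐ x ∂ν, ∀ i : Fin b, Tendsto (fun j =>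
      (ν[({x : SymbSpace b | x 0 = i}.indicator fun _ => (1 : ℝ)) | tailFil b j]) x) atTop
      (nhds ((ν[({x : SymbSpace b | x 0 = i}.indicator fun _ => (1 : ℝ)) | ⨆ j, tailFil b j]) x)) := by
    rw [ae_all_iff]; intro i
    exact tendsto_ae_condExp _
  filter_upwards [h1, h2] with x hx1 hx2
  refine ⟨_, (hx2 (x 0)).congr fun j => ?_⟩
  rw [← hx1, cr_self]

end entropy

end

open MeasureTheory ProbabilityTheory Filter Set
open scoped ENNReal

noncomputable section

set_option linter.unusedSectionVars false
set_option linter.unusedVariables false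

section maxerg
variable {α : Type*} [MeasurableSpace α]

/-- running maximum of Birkhoff sums -/
def Mmax (T : α → α) (φ : α → ℝ) : ℕ → α → ℝ
  | 0, _ => 0
  | n + 1, x => max 0 (φ x + Mmax T φ n (T x))

lemma Mmax_nonneg (T : α → α) (φ : α → ℝ) (n : ℕ) (x : α) : 0 ≤ Mmax T φ n x := by
  cases n with
  | zero => exact le_rfl
  | succ n => exact le_max_left _ _

lemma Mmax_succ_le (T : α → α) (φ : α → ℝ) (n : ℕ) (x : α) : Mmax T φ n x ≤ Mmax T φ (n + 1) x := by
  induction n generalizing x with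
  | zero => exact Mmax_nonneg T φ 1 x
  | succ n ih =>
    simp only [Mmax]
    exact max_le_max le_rfl (add_le_add le_rfl (ih (T x)))

lemma Mmax_mono (T : α → α) (φ : α → ℝ) (x : α) : Monotone fun n => Mmax T φ n x :=
  monotone_nat_of_le_succ fun n => Mmax_succ_le T φ n x

lemma sum_le_Mmax (T : α → α) (φ : α → ℝ) (n : ℕ) (x : α) :
    ∑ k ∈ Finset.range n, φ (T^[k] x) ≤ Mmax T φ n x := by
  induction n generalizing x with
  | zero => simp [Mmax]
  | succ n ih =>
    rw [Finset.sum_range_succ']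
    simp only [Function.iterate_succ_apply, Function.iterate_zero, id]
    have := ih (T x)
    refine le_trans ?_ (le_max_right _ _)
    linarith

lemma Mmax_le (T : α → α) (φ : α → ℝ) (B : ℝ) (hB : ∀ x, |φ x| ≤ B) (n : ℕ) (x : α) :
    Mmax T φ n x ≤ n * B := by
  have hB0 : 0 ≤ B := (abs_nonneg _).trans (hB x)
  induction n generalizing x with
  | zero => simp [Mmax]
  | succ n ih =>
    refine max_le (by positivity) ?_
    have := ih (T x)
    have := le_abs_self (φ x)
    have := hB x
    push_cast
    linarith

lemma measurable_Mmax {T : α → α} (hT : Measurable T) {φ : α → ℝ} (hφ : Measurable φ) (n : ℕ) :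
    Measurable (Mmax T φ n) := by
  induction n with
  | zero => exact measurable_const
  | succ n ih => exact measurable_const.max (hφ.add (ih.comp hT))

lemma maximal_ergodic {ν : Measure α} [IsProbabilityMeasure ν] {T : α → α} (hT : Ergodic T ν)
    {φ : α → ℝ} (hφ : Measurable φ) (B : ℝ) (hB : ∀ x, |φ x| ≤ B) (hneg : ∫ x, φ x ∂ν < 0) :
    ∀ᵐ x ∂ν, ∃ K : ℝ, ∀ n, ∑ k ∈ Finset.range n, φ (T^[k] x) ≤ K := by
  set E : Set α := {x | ∃ K : ℕ, ∀ n, Mmax T φ n x ≤ K} with hE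
  have hmT := hT.measurable
  have hEm : MeasurableSet E := by
    have : E = ⋃ K : ℕ, ⋂ n, {x | Mmax T φ n x ≤ K} := by ext x; simp [hE]
    rw [this]
    exact MeasurableSet.iUnion fun K => MeasurableSet.iInter fun n =>
      measurableSet_le (measurable_Mmax hmT hφ n) measurable_const
  have hinv : T ⁻¹' E = E := by
    ext x
    change (∃ K : ℕ, ∀ n, Mmax T φ n (T x) ≤ K) ↔ (∃ K : ℕ, ∀ n, Mmax T φ n x ≤ K)
    constructor
    · rintro ⟨K, hK⟩
      obtain ⟨K', hK'⟩ := exists_nat_ge (|φ x| + K)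
      refine ⟨K', fun n => ?_⟩
      refine (Mmax_succ_le T φ n x).trans (max_le (by positivity) ?_)
      have := hK n
      have := le_abs_self (φ x)
      linarith
    · rintro ⟨K, hK⟩
      obtain ⟨K', hK'⟩ := exists_nat_ge (|φ x| + K)
      refine ⟨K', fun n => ?_⟩
      have h1 : φ x + Mmax T φ n (T x) ≤ K := (le_max_right _ _).trans (hK (n + 1))
      have := neg_abs_le (φ x)
      linarith
  rcases hT.ae_empty_or_univ hEm hinv with h0 | h1
  · exfalso
    have h0' : ∀ᵐ x ∂ν, ∀ K : ℕ, ∃ n, (K : ℝ) < Mmax T φ n x := by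
      have : ∀ᵐ x ∂ν, x ∉ E := by
        filter_upwards [h0.mem_iff] with x hx hxE
        exact (hx.1 hxE)
      filter_upwards [this] with x hx K
      by_contra hc
      push Not at hc
      exact hx ⟨K, hc⟩
    have h0'' := hT.quasiMeasurePreserving.ae h0'
    have hIntg : ∀ n, Integrable (Mmax T φ n) ν := fun n =>
      Integrable.of_bound (measurable_Mmax hmT hφ n).aestronglyMeasurable (n * B)
        (ae_of_all _ fun x => by
          rw [Real.norm_eq_abs, abs_of_nonneg (Mmax_nonneg T φ n x)]; exact Mmax_le T φ B hB n x)
    have hIntgT : ∀ n, Integrable (fun x => Mmax T φ n (T x)) ν := fun n =>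
      hT.toMeasurePreserving.integrable_comp_of_integrable (hIntg n)
    have heq : ∀ n, ∫ x, Mmax T φ n (T x) ∂ν = ∫ x, Mmax T φ n x ∂ν := fun n => by
      have h4 := integral_map (μ := ν) hmT.aemeasurable (f := Mmax T φ n)
        (measurable_Mmax hmT hφ n).aestronglyMeasurable
      rw [hT.map_eq] at h4
      exact h4.symm
    have hlim : Tendsto (fun n => ∫ x, (Mmax T φ (n + 1) x - Mmax T φ n (T x)) ∂ν) atTop
        (nhds (∫ x, φ x ∂ν)) := by
      refine tendsto_integral_of_dominated_convergence (fun _ => B) ?_ (integrable_const _) ?_ ?_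
      · exact fun n => ((measurable_Mmax hmT hφ (n + 1)).sub
          ((measurable_Mmax hmT hφ n).comp hmT)).aestronglyMeasurable
      · refine fun n => ae_of_all _ fun x => ?_
        refine le_trans ?_ (hB x)
        simp only [Mmax]
        have h5 := Mmax_nonneg T φ n (T x)
        rw [Real.norm_eq_abs]
        rcases le_total 0 (φ x + Mmax T φ n (T x)) with h6 | h6
        · rw [max_eq_right h6]; simp
        · rw [max_eq_left h6, abs_of_nonpos (by linarith), abs_of_nonpos (by linarith)]; linarith
      · filter_upwards [h0''] with x hx
        obtain ⟨K, hK⟩ := exists_nat_ge (|φ x|)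
        obtain ⟨N, hN⟩ := hx K
        refine tendsto_atTop_of_eventually_const (i₀ := N) fun n hn => ?_
        have h7 := Mmax_mono T φ (T x) hn
        simp only at h7
        simp only [Mmax]
        have := neg_abs_le (φ x)
        rw [max_eq_right (by linarith)]
        ring
    refine absurd (ge_of_tendsto' hlim fun n => ?_) (not_le.2 hneg)
    rw [integral_sub (hIntg _) (hIntgT _), heq, sub_nonneg]
    exact integral_mono (hIntg _) (hIntg _) fun x => Mmax_succ_le T φ n x
  · have : ∀ᵐ x ∂ν, x ∈ E := by
      filter_upwards [h1.mem_iff] with x hx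
      exact hx.2 (mem_univ x)
    filter_upwards [this] with x hx
    obtain ⟨K, hK⟩ := hx
    exact ⟨K, fun n => (sum_le_Mmax T φ n x).trans (hK n)⟩

end maxerg

lemma frequently_incr {H : ℕ → ℝ} {h : ℝ} (hH : Tendsto (fun n : ℕ => H n / n) atTop (nhds h))
    {ε : ℝ} (hε : 0 < ε) : ∃ᶠ m in atTop, h - ε ≤ H (m + 1) - H m := by
  by_contra hc
  rw [not_frequently] at hc
  obtain ⟨N, hN⟩ := eventually_atTop.1 hc
  have h1 : ∀ n, H (N + n) ≤ H N + n * (h - ε) := by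
    intro n
    induction n with
    | zero => simp
    | succ n ih =>
      have := hN (N + n) (by omega)
      rw [← add_assoc]
      push_cast
      linarith
  have h2 : ∀ᶠ n : ℕ in atTop, H n / n ≤ (H N - N * (h - ε)) / n + (h - ε) := by
    filter_upwards [eventually_ge_atTop N, eventually_gt_atTop 0] with n hn hn0
    obtain ⟨k, rfl⟩ := Nat.exists_eq_add_of_le hn
    have h3 := h1 k
    have hpos : (0 : ℝ) < ((N + k : ℕ) : ℝ) := by exact_mod_cast hn0
    rw [div_add' _ _ _ hpos.ne']
    refine (div_le_div_iff_of_pos_right hpos).2 ?_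
    push_cast
    linarith
  have h3 : Tendsto (fun n : ℕ => (H N - N * (h - ε)) / n + (h - ε)) atTop (nhds (0 + (h - ε))) :=
    (tendsto_const_div_atTop_nhds_zero_nat _).add_const _
  have := le_of_tendsto_of_tendsto hH h3 h2
  linarith

section gibbs
variable {b : ℕ}

lemma tendsto_Hn (hb : 2 ≤ b) (ν : Measure (SymbSpace b)) [IsProbabilityMeasure ν] {hν : ℝ}
    (hent : Tendsto (entropySeq ν) atTop (nhds hν)) :
    Tendsto (fun n : ℕ => Hn ν n / n) atTop (nhds hν) := by
  refine hent.congr' ?_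
  filter_upwards [eventually_gt_atTop 0] with n hn
  have : (n : ℝ) ≠ 0 := by positivity
  rw [Hn_eq hb, mul_div_cancel_left₀ _ this]

lemma sum_pm_shift (hb : 2 ≤ b) (ν : Measure (SymbSpace b)) [IsProbabilityMeasure ν] (j : ℕ) :
    ∑ v : Fin (j + 1) → Fin b, pm ν j (shiftMap b (extWord hb v)) = b := by
  have h1 : ∀ v : Fin (j + 1) → Fin b, pm ν j (shiftMap b (extWord hb v)) =
      pm ν j (extWord hb (Fin.tail v)) := fun v => by
    refine depOn_pm ν j _ _ fun k hk => ?_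
    simp [shiftMap, extWord, hk, Fin.tail]
  simp_rw [h1]
  rw [← (Fin.consEquiv (fun _ : Fin (j + 1) => Fin b)).sum_comp, Fintype.sum_prod_type]
  have h2 : ∑ u : Fin j → Fin b, pm ν j (extWord hb u) = 1 := by
    have h3 := (integral_depOn hb ν (n := j) (F := fun _ => (1 : ℝ)) (fun _ _ _ => rfl)).2
    simp only [one_mul, integral_const, probReal_univ, smul_eq_mul, mul_one] at h3
    rw [h3]
    exact Finset.sum_congr rfl fun u _ => pm_extWord hb ν u
  simp only [Fin.consEquiv, Equiv.coe_fn_mk, Fin.tail_cons, h2]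
  simp

lemma integral_tail_lg (hb : 2 ≤ b) (ν : Measure (SymbSpace b)) [IsProbabilityMeasure ν]
    (hmp : MeasurePreserving (shiftMap b) ν ν) (j : ℕ) (L : ℝ) :
    ∫ x, max 0 (lg ν j x - L) ∂ν ≤ b * Real.exp (-L) := by
  have hd : DepOn (j + 1) fun x => max 0 (lg ν j x - L) := fun x y h => by
    simp only [depOn_lg ν j x y h]
  rw [(integral_depOn hb ν hd).2, ← sum_pm_shift hb ν j, Finset.sum_mul]
  refine Finset.sum_le_sum fun v _ => ?_
  rw [← pm_extWord hb]
  rcases (pm_nonneg ν (j + 1) (extWord hb v)).eq_or_lt with h0 | h0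
  · rw [← h0, mul_zero]; exact mul_nonneg (pm_nonneg _ _ _) (Real.exp_pos _).le
  rcases (pm_nonneg ν j (shiftMap b (extWord hb v))).eq_or_lt with h1 | h1
  · exact absurd (pm_succ_le ν hmp j (extWord hb v)) (by rw [← h1]; exact not_le.2 h0)
  have h2 : max 0 (lg ν j (extWord hb v) - L) ≤ Real.exp (lg ν j (extWord hb v) - L) := by
    refine max_le (Real.exp_pos _).le ?_
    have := Real.add_one_le_exp (lg ν j (extWord hb v) - L)
    linarith
  refine (mul_le_mul_of_nonneg_right h2 h0.le).trans (le_of_eq ?_)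
  rw [lg, sub_eq_add_neg _ L, Real.exp_add, Real.exp_sub, Real.exp_log h0, Real.exp_log h1]
  field_simp

end gibbs
end

open MeasureTheory ProbabilityTheory Filter Set
open scoped ENNReal

noncomputable section

set_option linter.unusedSectionVars false
set_option linter.unusedVariables false

section smb
variable {b : ℕ}

/-- truncated information function -/
def wL (ν : Measure (SymbSpace b)) (L : ℝ) (j : ℕ) (x : SymbSpace b) : ℝ :=
  -Real.log (min 1 (max (pm ν (j + 1) x / pm ν j (shiftMap b x)) (Real.exp (-L))))

lemma measurable_wL (hb : 2 ≤ b) (ν : Measure (SymbSpace b)) [IsProbabilityMeasure ν] (L : ℝ)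
    (j : ℕ) : Measurable (wL ν L j) := by
  have h1 : Measurable (pm ν (j + 1)) := (depOn_pm ν (j + 1)).measurable hb
  have h2 : Measurable fun x => pm ν j (shiftMap b x) :=
    ((depOn_pm ν j).measurable hb).comp measurable_shift
  have h3 : Measurable fun x => min 1 (max (pm ν (j + 1) x / pm ν j (shiftMap b x)) (Real.exp (-L))) :=
    measurable_const.min ((h1.div h2).max measurable_const)
  exact (Real.measurable_log.comp h3).neg

lemma wL_nonneg (ν : Measure (SymbSpace b)) (L : ℝ) (j : ℕ) (x : SymbSpace b) :
    0 ≤ wL ν L j x := by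
  rw [wL, neg_nonneg]
  refine Real.log_nonpos (le_min zero_le_one ?_) (min_le_left _ _)
  exact (Real.exp_pos _).le.trans (le_max_right _ _)

lemma wL_le (ν : Measure (SymbSpace b)) {L : ℝ} (hL : 0 ≤ L) (j : ℕ) (x : SymbSpace b) :
    wL ν L j x ≤ L := by
  have h1 : Real.exp (-L) ≤ min 1 (max (pm ν (j + 1) x / pm ν j (shiftMap b x)) (Real.exp (-L))) :=
    le_min (by rw [Real.exp_le_one_iff]; linarith) (le_max_right _ _)
  have h2 := Real.log_le_log (Real.exp_pos _) h1
  rw [Real.log_exp] at h2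
  rw [wL]; linarith

lemma wL_le_lg {ν : Measure (SymbSpace b)} {L : ℝ} {j : ℕ} {x : SymbSpace b}
    (h1 : 0 < pm ν (j + 1) x) (h2 : 0 < pm ν j (shiftMap b x)) (h3 : 0 ≤ lg ν j x) :
    wL ν L j x ≤ lg ν j x := by
  have hr : Real.log (pm ν (j + 1) x / pm ν j (shiftMap b x)) = - lg ν j x := by
    rw [Real.log_div h1.ne' h2.ne', lg]; ring
  have h4 : pm ν (j + 1) x / pm ν j (shiftMap b x) ≤ 1 := by
    by_contra hc
    push Not at hc
    have := Real.log_pos hc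
    linarith
  have h5 := Real.log_le_log (div_pos h1 h2) (le_min h4 (le_max_left _ (Real.exp (-L))))
  rw [hr] at h5
  rw [wL]; linarith

lemma lg_le_wL {ν : Measure (SymbSpace b)} {L : ℝ} {j : ℕ} {x : SymbSpace b}
    (h1 : 0 < pm ν (j + 1) x) (h2 : 0 < pm ν j (shiftMap b x)) :
    lg ν j x - max 0 (lg ν j x - L) ≤ wL ν L j x := by
  have hr : Real.log (pm ν (j + 1) x / pm ν j (shiftMap b x)) = - lg ν j x := by
    rw [Real.log_div h1.ne' h2.ne', lg]; ring
  have h6 : wL ν L j x = -Real.log (min 1 (max (pm ν (j + 1) x / pm ν j (shiftMap b x)) (Real.exp (-L)))) := rfl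
  have h7 := Real.log_le_log (lt_min one_pos ((Real.exp_pos _).trans_le (le_max_right (pm ν (j + 1) x / pm ν j (shiftMap b x)) (Real.exp (-L))))) (min_le_right 1 (max (pm ν (j + 1) x / pm ν j (shiftMap b x)) (Real.exp (-L))))
  rw [h6]
  rcases le_total (pm ν (j + 1) x / pm ν j (shiftMap b x)) (Real.exp (-L)) with h | h
  · rw [max_eq_right h] at h7 ⊢
    rw [Real.log_exp] at h7
    have := le_max_right 0 (lg ν j x - L)
    linarith
  · rw [max_eq_left h] at h7 ⊢
    rw [hr] at h7
    have := le_max_left 0 (lg ν j x - L)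
    linarith

lemma ae_tendsto_wL (hb : 2 ≤ b) (ν : Measure (SymbSpace b)) [IsProbabilityMeasure ν]
    (hmp : MeasurePreserving (shiftMap b) ν ν) (L : ℝ) :
    ∀ᵐ x ∂ν, ∃ g : ℝ, Tendsto (fun j => wL ν L j x) atTop (nhds g) := by
  filter_upwards [ae_tendsto_ratio hb ν hmp] with x hx
  obtain ⟨g, hg⟩ := hx
  refine ⟨-Real.log (min 1 (max g (Real.exp (-L)))), ?_⟩
  refine Tendsto.neg (Tendsto.log ?_ ?_)
  · exact tendsto_const_nhds.min (hg.max tendsto_const_nhds)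
  · exact (lt_min one_pos ((Real.exp_pos _).trans_le (le_max_right _ _))).ne'

/-- tail infimum of the truncated information functions -/
def tInf (ν : Measure (SymbSpace b)) (L : ℝ) (m : ℕ) (x : SymbSpace b) : ℝ := ⨅ j, wL ν L (m + j) x

lemma bddBelow_wL (ν : Measure (SymbSpace b)) (L : ℝ) (m : ℕ) (x : SymbSpace b) :
    BddBelow (range fun j => wL ν L (m + j) x) :=
  ⟨0, by rintro _ ⟨j, rfl⟩; exact wL_nonneg _ _ _ _⟩

lemma tInf_le (ν : Measure (SymbSpace b)) (L : ℝ) {m j : ℕ} (hj : m ≤ j) (x : SymbSpace b) :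
    tInf ν L m x ≤ wL ν L j x := by
  obtain ⟨k, rfl⟩ := Nat.exists_eq_add_of_le hj
  exact ciInf_le (bddBelow_wL ν L m x) k

lemma tInf_nonneg (ν : Measure (SymbSpace b)) (L : ℝ) (m : ℕ) (x : SymbSpace b) : 0 ≤ tInf ν L m x :=
  le_ciInf fun j => wL_nonneg _ _ _ _

lemma measurable_tInf (hb : 2 ≤ b) (ν : Measure (SymbSpace b)) [IsProbabilityMeasure ν] (L : ℝ)
    (m : ℕ) : Measurable (tInf ν L m) :=
  Measurable.iInf fun j => measurable_wL hb ν L (m + j)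

lemma tendsto_integral_tInf (hb : 2 ≤ b) (ν : Measure (SymbSpace b)) [IsProbabilityMeasure ν]
    (hmp : MeasurePreserving (shiftMap b) ν ν) {L : ℝ} (hL : 0 ≤ L) :
    Tendsto (fun m => ∫ x, (wL ν L m x - tInf ν L m x) ∂ν) atTop (nhds 0) := by
  have : (0 : ℝ) = ∫ x, (0 : ℝ) ∂ν := by simp
  rw [this]
  refine tendsto_integral_of_dominated_convergence (fun _ => L) ?_ (integrable_const _) ?_ ?_
  · exact fun n => ((measurable_wL hb ν L n).sub (measurable_tInf hb ν L n)).aestronglyMeasurable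
  · refine fun n => ae_of_all _ fun x => ?_
    rw [Real.norm_eq_abs, abs_of_nonneg (sub_nonneg.2 (tInf_le ν L le_rfl x))]
    have := tInf_nonneg ν L n x
    have := wL_le ν hL n x
    linarith
  · filter_upwards [ae_tendsto_wL hb ν hmp L] with x hx
    obtain ⟨g, hg⟩ := hx
    rw [Metric.tendsto_atTop] at hg ⊢
    intro ε hε
    obtain ⟨N, hN⟩ := hg (ε / 3) (by positivity)
    refine ⟨N, fun n hn => ?_⟩
    rw [Real.dist_eq, sub_zero, abs_of_nonneg (sub_nonneg.2 (tInf_le ν L le_rfl x))]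
    have h1 := hN n hn
    rw [Real.dist_eq, abs_lt] at h1
    have h2 : g - ε / 3 ≤ tInf ν L n x := le_ciInf fun j => by
      have h1 := hN (n + j) (by omega)
      rw [Real.dist_eq, abs_lt] at h1
      linarith
    linarith

lemma sum_tInf_le (ν : Measure (SymbSpace b)) [IsProbabilityMeasure ν]
    (hmp : MeasurePreserving (shiftMap b) ν ν) {L : ℝ} (hL : 0 ≤ L) (m : ℕ) :
    ∀ᵐ x ∂ν, ∀ n, ∑ k ∈ Finset.range n, tInf ν L m ((shiftMap b)^[k] x) - m * L ≤
      -Real.log (pm ν n x) := by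
  filter_upwards [ae_iterate hmp (ae_lg_nonneg ν hmp), ae_iterate hmp (ae_pm_pos ν)] with x h1 h2 n
  have h2' : ∀ k j, 0 < pm ν j (shiftMap b ((shiftMap b)^[k] x)) := fun k j => by
    have := h2 (k + 1) j; rwa [Function.iterate_succ_apply'] at this
  have h3 : ∀ k ∈ Finset.range n, tInf ν L m ((shiftMap b)^[k] x) ≤
      lg ν (n - 1 - k) ((shiftMap b)^[k] x) + (if n - 1 - k < m then L else 0) := by
    intro k hk
    split_ifs with hc
    · have := h1 k (n - 1 - k)
      have := (tInf_le ν L le_rfl ((shiftMap b)^[k] x)).trans (wL_le ν hL m _)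
      linarith
    · rw [add_zero]
      exact (tInf_le ν L (not_lt.1 hc) _).trans (wL_le_lg (h2 _ _) (h2' _ _) (h1 _ _))
  have h4 := Finset.sum_le_sum h3
  rw [Finset.sum_add_distrib, ← neg_log_pm_eq] at h4
  have h5 : ∑ k ∈ Finset.range n, (if n - 1 - k < m then L else 0) ≤ m * L := by
    rw [Finset.sum_range_reflect (fun j => if j < m then L else 0) n, ← Finset.sum_filter,
      Finset.sum_const, nsmul_eq_mul]
    refine mul_le_mul_of_nonneg_right ?_ hL
    have : (Finset.range n).filter (· < m) ⊆ Finset.range m := fun j hj => by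
      simp at hj ⊢; exact hj.2
    have := Finset.card_le_card this
    rw [Finset.card_range] at this
    exact_mod_cast this
  linarith

theorem smb_lower (hb : 2 ≤ b) (ν : Measure (SymbSpace b)) [IsProbabilityMeasure ν]
    (herg : Ergodic (shiftMap b) ν) {hν : ℝ} (hent : Tendsto (entropySeq ν) atTop (nhds hν))
    {c : ℝ} (hc : c < hν) : ∀ᵐ x ∂ν, ∃ D : ℝ, ∀ n : ℕ, n * c - D ≤ -Real.log (pm ν n x) := by
  have hmp := herg.toMeasurePreserving
  set ε := (hν - c) / 4 with hε
  have hε0 : 0 < ε := by rw [hε]; linarith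
  obtain ⟨L, hL, hL2⟩ : ∃ L : ℝ, 0 ≤ L ∧ b * Real.exp (-L) < ε := by
    have h1 : Tendsto (fun L : ℝ => (b : ℝ) * Real.exp (-L)) atTop (nhds (b * 0)) :=
      (Real.tendsto_exp_neg_atTop_nhds_zero).const_mul _
    rw [mul_zero] at h1
    obtain ⟨L, h2, h3⟩ := ((h1.eventually (gt_mem_nhds hε0)).and (eventually_ge_atTop 0)).exists
    exact ⟨L, h3, h2⟩
  obtain ⟨m, hm1, hm2⟩ := ((frequently_incr (tendsto_Hn hb ν hent) hε0).and_eventually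
    ((tendsto_integral_tInf hb ν hmp hL).eventually (gt_mem_nhds hε0))).exists
  have hwi : Integrable (wL ν L m) ν := Integrable.of_bound
    (measurable_wL hb ν L m).aestronglyMeasurable L (ae_of_all _ fun x => by
      rw [Real.norm_eq_abs, abs_of_nonneg (wL_nonneg _ _ _ _)]; exact wL_le ν hL m x)
  have hGi : Integrable (tInf ν L m) ν := Integrable.of_bound
    (measurable_tInf hb ν L m).aestronglyMeasurable L (ae_of_all _ fun x => by
      rw [Real.norm_eq_abs, abs_of_nonneg (tInf_nonneg _ _ _ _)]
      exact (tInf_le ν L le_rfl x).trans (wL_le ν hL m x))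
  rw [integral_sub hwi hGi] at hm2
  have hd : Integrable (fun x => max 0 (lg ν m x - L)) ν :=
    (integral_depOn hb ν (n := m + 1) fun x y h => by simp only [depOn_lg ν m x y h]).1
  have h5 : ∫ x, lg ν m x ∂ν - ∫ x, max 0 (lg ν m x - L) ∂ν ≤ ∫ x, wL ν L m x ∂ν := by
    rw [← integral_sub (integrable_lg hb ν m) hd]
    refine integral_mono_ae ((integrable_lg hb ν m).sub hd) hwi ?_
    filter_upwards [ae_pm_pos ν, hmp.quasiMeasurePreserving.ae (ae_pm_pos ν)] with x h1 h2
    exact lg_le_wL (h1 _) (h2 _)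
  rw [integral_lg hb ν hmp] at h5
  have h6 := integral_tail_lg hb ν hmp m L
  have h7 : ∫ x, (c - tInf ν L m x) ∂ν < 0 := by
    rw [integral_sub (integrable_const _) hGi]
    simp only [integral_const, probReal_univ, smul_eq_mul, one_mul]
    linarith
  filter_upwards [maximal_ergodic herg (measurable_const.sub (measurable_tInf hb ν L m)) (|c| + L)
    (fun x => by
      have h8 := tInf_nonneg ν L m x
      have h9 := (tInf_le ν L le_rfl x).trans (wL_le ν hL m x)
      refine (abs_sub _ _).trans ?_
      rw [abs_of_nonneg h8]; linarith) h7, sum_tInf_le ν hmp hL m] with x hx1 hx2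
  obtain ⟨K, hK⟩ := hx1
  refine ⟨K + m * L, fun n => ?_⟩
  have h8 := hK n
  have h9 := hx2 n
  simp only [Pi.sub_apply] at h8
  rw [Finset.sum_sub_distrib, Finset.sum_const, Finset.card_range, nsmul_eq_mul] at h8
  linarith

end smb
end

open MeasureTheory ProbabilityTheory Filter Set
open scoped ENNReal

noncomputable section

set_option linter.unusedSectionVars false
set_option linter.unusedVariables false

section ent
variable {b : ℕ} {Ω : Type*} [MeasurableSpace Ω] {P : Measure Ω} [IsProbabilityMeasure P]
  {X : List (Fin b) → Ω → ℝ} {X₀ : Ω → ℝ}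

lemma CascadeM1.lintegral_sizeBias_comp (h : CascadeM1 P X X₀) {G : ℝ → ℝ≥0∞} (hG : Measurable G) :
    ∫⁻ t, G t ∂(sizeBias (lawX P X₀)) = ∫⁻ ω, ENNReal.ofReal (X₀ ω) * G (X₀ ω) ∂P := by
  rw [lintegral_sizeBias _ hG, lawX,
    lintegral_map (f := fun a => ENNReal.ofReal a * G a) (ENNReal.measurable_ofReal.mul hG) h.meas₀]

lemma CascadeM1.entropyX_eq (h : CascadeM1 P X X₀) : entropyX P X₀ =
    ∫⁻ t, ENNReal.ofReal (Real.log t) ∂(sizeBias (lawX P X₀)) -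
    ∫⁻ t, ENNReal.ofReal (-Real.log t) ∂(sizeBias (lawX P X₀)) := by
  rw [h.lintegral_sizeBias_comp (Real.measurable_log.ennreal_ofReal),
    h.lintegral_sizeBias_comp (G := fun t => ENNReal.ofReal (-Real.log t)) (Real.measurable_log.neg.ennreal_ofReal), entropyX]
  congr 1
  · refine lintegral_congr fun ω => ?_
    rw [ENNReal.ofReal_mul (h.nonneg₀ ω)]
  · refine lintegral_congr fun ω => ?_
    rw [← mul_neg, ENNReal.ofReal_mul (h.nonneg₀ ω)]

lemma CascadeM1.ae_pos (h : CascadeM1 P X X₀) : ∀ᵐ t ∂(sizeBias (lawX P X₀)), 0 < t := by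
  have h1 : ∫⁻ t, (Iic (0 : ℝ)).indicator 1 t ∂(sizeBias (lawX P X₀)) = 0 := by
    rw [h.lintegral_sizeBias_comp (measurable_one.indicator measurableSet_Iic)]
    rw [← lintegral_zero (μ := P)]
    refine lintegral_congr fun ω => ?_
    by_cases h2 : X₀ ω ≤ 0
    · rw [ENNReal.ofReal_of_nonpos h2, zero_mul]
    · rw [indicator_of_notMem (by simpa using h2), mul_zero]
  rw [lintegral_indicator_one measurableSet_Iic] at h1
  filter_upwards [measure_eq_zero_iff_ae_notMem.1 h1] with t ht
  simpa using ht

lemma CascadeM1.lintegral_neg_log_le (h : CascadeM1 P X X₀) :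
    ∫⁻ t, ENNReal.ofReal (-Real.log t) ∂(sizeBias (lawX P X₀)) ≤ 1 := by
  rw [h.lintegral_sizeBias_comp (G := fun t => ENNReal.ofReal (-Real.log t)) (Real.measurable_log.neg.ennreal_ofReal)]
  have : (1 : ℝ≥0∞) = ∫⁻ ω, 1 ∂P := by simp
  rw [this]
  refine lint_mono fun ω => ?_
  rw [← ENNReal.ofReal_mul (h.nonneg₀ ω), ← ENNReal.ofReal_one]
  refine ENNReal.ofReal_le_ofReal ?_
  rcases (h.nonneg₀ ω).eq_or_lt with h0 | h0
  · rw [← h0]; simp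
  · have h1 := Real.one_sub_inv_le_log_of_pos h0
    have h2 : X₀ ω * (1 - (X₀ ω)⁻¹) ≤ X₀ ω * Real.log (X₀ ω) := mul_le_mul_of_nonneg_left h1 h0.le
    rw [mul_sub, mul_inv_cancel₀ h0.ne'] at h2
    linarith

lemma CascadeM1.entropy_cases (h : CascadeM1 P X X₀) [IsProbabilityMeasure (sizeBias (lawX P X₀))] :
    (Integrable Real.log (sizeBias (lawX P X₀)) ∧
      entropyX P X₀ = ENNReal.ofReal (∫ t, Real.log t ∂(sizeBias (lawX P X₀))) ∧
      0 ≤ ∫ t, Real.log t ∂(sizeBias (lawX P X₀))) ∨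
    (∫⁻ t, ENNReal.ofReal (Real.log t) ∂(sizeBias (lawX P X₀)) = ∞ ∧ entropyX P X₀ = ∞) := by
  set ρ := sizeBias (lawX P X₀) with hρ
  have hn := h.lintegral_neg_log_le
  have hn' : ∫⁻ t, ENNReal.ofReal (-Real.log t) ∂ρ ≠ ∞ := (hn.trans_lt ENNReal.one_lt_top).ne
  by_cases hp : ∫⁻ t, ENNReal.ofReal (Real.log t) ∂ρ = ∞
  · right
    refine ⟨hp, ?_⟩
    rw [h.entropyX_eq, hp]
    exact ENNReal.top_sub hn'
  · left
    have hi : Integrable Real.log ρ := by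
      refine ⟨Real.measurable_log.aestronglyMeasurable, ?_⟩
      rw [hasFiniteIntegral_iff_norm]
      have : ∀ t, ENNReal.ofReal ‖Real.log t‖ ≤
          ENNReal.ofReal (Real.log t) + ENNReal.ofReal (-Real.log t) := fun t => by
        rw [Real.norm_eq_abs]
        rcases le_total 0 (Real.log t) with h1 | h1
        · rw [abs_of_nonneg h1]; exact le_self_add
        · rw [abs_of_nonpos h1]; exact le_add_self
      refine (lint_mono this).trans_lt ?_
      rw [lintegral_add_left Real.measurable_log.ennreal_ofReal]
      exact ENNReal.add_lt_top.2 ⟨lt_top_iff_ne_top.2 hp, lt_top_iff_ne_top.2 hn'⟩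
    have hI := integral_eq_lintegral_pos_part_sub_lintegral_neg_part hi
    refine ⟨hi, ?_, ?_⟩
    · rw [h.entropyX_eq, hI, ENNReal.ofReal_sub _ ENNReal.toReal_nonneg, ENNReal.ofReal_toReal hp,
        ENNReal.ofReal_toReal hn']
    · have hinv : ∫⁻ t, ENNReal.ofReal (t⁻¹) ∂ρ ≤ 1 := by
        rw [h.lintegral_sizeBias_comp measurable_inv.ennreal_ofReal]
        have : (1 : ℝ≥0∞) = ∫⁻ ω, 1 ∂P := by simp
        rw [this]
        refine lint_mono fun ω => ?_
        rw [← ENNReal.ofReal_mul (h.nonneg₀ ω), ← ENNReal.ofReal_one]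
        refine ENNReal.ofReal_le_ofReal ?_
        exact mul_inv_le_one
      have hpos : 0 ≤ᵐ[ρ] fun t => t⁻¹ := by
        filter_upwards [h.ae_pos] with t ht
        exact (inv_pos.2 ht).le
      have hii : Integrable (fun t : ℝ => t⁻¹) ρ := by
        refine ⟨measurable_inv.aestronglyMeasurable, ?_⟩
        rw [hasFiniteIntegral_iff_ofReal hpos]
        exact hinv.trans_lt ENNReal.one_lt_top
      have h1 : ∫ t, (1 - t⁻¹) ∂ρ ≤ ∫ t, Real.log t ∂ρ := by
        refine integral_mono_ae ((integrable_const _).sub hii) hi ?_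
        filter_upwards [h.ae_pos] with t ht
        exact Real.one_sub_inv_le_log_of_pos ht
      rw [integral_sub (integrable_const _) hii,
        integral_eq_lintegral_of_nonneg_ae hpos measurable_inv.aestronglyMeasurable] at h1
      have h2 := ENNReal.toReal_mono ENNReal.one_ne_top hinv
      simp at h1 h2
      linarith

end ent

lemma slln_iidM (ρ : Measure ℝ) [IsProbabilityMeasure ρ] {ψ : ℝ → ℝ} (hm : Measurable ψ)
    (hi : Integrable ψ ρ) :
    ∀ᵐ ξ ∂(iidM ρ), Tendsto (fun n : ℕ => (∑ k ∈ Finset.range n, ψ (ξ k)) / n) atTop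
      (nhds (∫ t, ψ t ∂ρ)) := by
  have hmp : ∀ i, MeasurePreserving (fun ξ : ℕ → ℝ => ξ i) (iidM ρ) ρ :=
    fun i => measurePreserving_eval_infinitePi (fun _ : ℕ => ρ) i
  have h1 := strong_law_ae_real (μ := iidM ρ) (fun k ξ => ψ (ξ k))
    ((hmp 0).integrable_comp_of_integrable hi)
    (fun i j hij => (iIndepFun_infinitePi (P := fun _ : ℕ => ρ) (X := fun _ => ψ)
      (fun _ => hm)).indepFun hij)
    (fun i => ⟨(hm.comp (measurable_pi_apply i)).aemeasurable,
      (hm.comp (measurable_pi_apply 0)).aemeasurable, by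
        have e : ∀ i, Measure.map (fun ξ : ℕ → ℝ => ψ (ξ i)) (iidM ρ) = ρ.map ψ := fun i => by
          have := Measure.map_map (μ := iidM ρ) hm (hmp i).measurable
          rw [(hmp i).map_eq] at this
          exact this.symm
        rw [e, e]⟩)
  have h2 : ∫ ξ, ψ (ξ 0) ∂(iidM ρ) = ∫ t, ψ t ∂ρ := by
    have := integral_map (μ := iidM ρ) (hmp 0).measurable.aemeasurable (f := ψ)
      (by rw [(hmp 0).map_eq]; exact hm.aestronglyMeasurable)
    rw [(hmp 0).map_eq] at this
    exact this.symm
  rw [h2] at h1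
  exact h1

lemma ae_iidM_forall (ρ : Measure ℝ) [IsProbabilityMeasure ρ] {p : ℝ → Prop} (hp : ∀ᵐ t ∂ρ, p t) :
    ∀ᵐ ξ ∂(iidM ρ), ∀ k, p (ξ k) := by
  rw [ae_all_iff]
  exact fun i => (measurePreserving_eval_infinitePi (fun _ : ℕ => ρ) i).quasiMeasurePreserving.ae hp

lemma dE_eq {b : ℕ} (ν : Measure (SymbSpace b)) [IsProbabilityMeasure ν] {x : SymbSpace b}
    {ξ : ℕ → ℝ} (n : ℕ) (hξ : ∀ k, 0 < ξ k) (hx : 0 < pm ν n x) :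
    dE ν n (x, ξ) = ENNReal.ofReal
      (Real.exp (∑ k ∈ Finset.range n, Real.log (ξ k) + Real.log (pm ν n x))) := by
  rw [Real.exp_add, Real.exp_sum, Real.exp_log hx, ENNReal.ofReal_mul
    (Finset.prod_nonneg fun k _ => (Real.exp_pos _).le)]
  rw [dE, pE, cm, pm, ENNReal.ofReal_toReal (measure_ne_top _ _),
    ← ENNReal.ofReal_prod_of_nonneg (fun k _ => (hξ k).le)]
  congr 2
  exact Finset.prod_congr rfl fun k _ => (Real.exp_log (hξ k)).symm

lemma ae_prod_of {α β : Type*} [MeasurableSpace α] [MeasurableSpace β] (μ : Measure α) (ν : Measure β)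
    [IsProbabilityMeasure μ] [IsProbabilityMeasure ν] {p : α → Prop} {q : β → Prop}
    (hp : ∀ᵐ x ∂μ, p x) (hq : ∀ᵐ y ∂ν, q y) : ∀ᵐ z ∂(μ.prod ν), p z.1 ∧ q z.2 := by
  have h1 := Measure.quasiMeasurePreserving_fst (μ := μ) (ν := ν) |>.ae hp
  have h2 := Measure.quasiMeasurePreserving_snd (μ := μ) (ν := ν) |>.ae hq
  filter_upwards [h1, h2] with z h1 h2 using ⟨h1, h2⟩

theorem CascadeM1.UI_of_lt {b : ℕ} {Ω : Type*} [MeasurableSpace Ω] {P : Measure Ω}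
    [IsProbabilityMeasure P] {X : List (Fin b) → Ω → ℝ} {X₀ : Ω → ℝ} (h : CascadeM1 P X X₀)
    (hb : 2 ≤ b) (ν : Measure (SymbSpace b)) [IsProbabilityMeasure ν]
    (herg : Ergodic (shiftMap b) ν) {hν : ℝ} (hent : Tendsto (entropySeq ν) atTop (nhds hν))
    (hlt : entropyX P X₀ < ENNReal.ofReal hν) :
    UniformIntegrable (fun n ω => cascadeZ X ν n ω) 1 P := by
  have := h.isProb_lawX
  have := h.isProb_sizeBias
  rcases h.entropy_cases with ⟨hi, he, h0⟩ | ⟨_, he⟩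
  swap
  · rw [he] at hlt; exact absurd hlt not_top_lt
  set ρ := sizeBias (lawX P X₀) with hρ
  set I := ∫ t, Real.log t ∂ρ with hI
  have hIh : I < hν := by
    rw [he] at hlt
    exact (ENNReal.ofReal_lt_ofReal_iff_of_nonneg h0).1 hlt
  refine h.UI_of_summable hb ν ?_
  obtain ⟨c, hc1, hc2⟩ := exists_between hIh
  obtain ⟨c', hc1', hc2'⟩ := exists_between hc1
  filter_upwards [ae_prod_of ν (iidM ρ) ((smb_lower hb ν herg hent hc2).and (ae_pm_pos ν))
    ((slln_iidM ρ Real.measurable_log hi).and (ae_iidM_forall ρ h.ae_pos))] with q hq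
  obtain ⟨x, ξ⟩ := q
  obtain ⟨⟨⟨D, hD⟩, hpm⟩, hlim, hpos⟩ := hq
  simp only at hD hpm hlim hpos
  simp_rw [fun n => dE_eq ν n hpos (hpm n)]
  refine Summable.tsum_ofReal_lt_top ?_
  have hg : Summable fun n : ℕ => Real.exp D * (Real.exp (-(c - c'))) ^ n :=
    (summable_geometric_of_lt_one (Real.exp_pos _).le
      (by rw [Real.exp_lt_one_iff]; linarith)).mul_left _
  refine Summable.of_norm_bounded_eventually_nat hg ?_
  filter_upwards [hlim.eventually (gt_mem_nhds hc1'), eventually_gt_atTop 0] with n hn hn0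
  have hn0' : (0 : ℝ) < n := by exact_mod_cast hn0
  rw [div_lt_iff₀ hn0'] at hn
  rw [Real.norm_eq_abs, abs_of_pos (Real.exp_pos _), ← Real.exp_nat_mul, ← Real.exp_add]
  refine Real.exp_le_exp.2 ?_
  have := hD n
  nlinarith

end

open MeasureTheory ProbabilityTheory Filter Set
open scoped ENNReal

noncomputable section

set_option linter.unusedSectionVars false
set_option linter.unusedVariables false

section caseA
variable {b : ℕ}

lemma neglog_pm_nonneg (ν : Measure (SymbSpace b)) [IsProbabilityMeasure ν] (n : ℕ)
    (x : SymbSpace b) : 0 ≤ -Real.log (pm ν n x) := by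
  rw [neg_nonneg]
  exact Real.log_nonpos (pm_nonneg _ _ _) (pm_le_one _ _ _)

lemma entropy_nonneg (hb : 2 ≤ b) (ν : Measure (SymbSpace b)) [IsProbabilityMeasure ν] {hν : ℝ}
    (hent : Tendsto (entropySeq ν) atTop (nhds hν)) : 0 ≤ hν := by
  refine ge_of_tendsto' (tendsto_Hn hb ν hent) fun n => ?_
  exact div_nonneg (integral_nonneg fun x => neglog_pm_nonneg ν n x) (Nat.cast_nonneg _)

lemma smb_upper (hb : 2 ≤ b) (ν : Measure (SymbSpace b)) [IsProbabilityMeasure ν] {hν : ℝ}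
    (hent : Tendsto (entropySeq ν) atTop (nhds hν)) {a : ℝ} (ha : hν < a)
    (hc : ∀ᵐ x ∂ν, ∀ᶠ n : ℕ in atTop, n * a ≤ -Real.log (pm ν n x)) : False := by
  have h0 := entropy_nonneg hb ν hent
  have hm : ∀ n : ℕ, Measurable fun x => ENNReal.ofReal (-Real.log (pm ν n x) / n) := fun n =>
    (((depOn_neglog ν n).measurable hb).div_const _).ennreal_ofReal
  have h1 := lintegral_liminf_le (μ := ν) (u := atTop) hm
  have h2 : ENNReal.ofReal a ≤ ∫⁻ x, liminf (fun n : ℕ => ENNReal.ofReal (-Real.log (pm ν n x) / n)) atTop ∂ν := by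
    have : ENNReal.ofReal a = ∫⁻ x, ENNReal.ofReal a ∂ν := by simp
    rw [this]
    refine lintegral_mono_ae ?_
    filter_upwards [hc] with x hx
    refine le_liminf_of_le (by isBoundedDefault) ?_
    filter_upwards [hx, eventually_gt_atTop 0] with n hn hn0
    refine ENNReal.ofReal_le_ofReal ?_
    have hn0' : (0 : ℝ) < n := by exact_mod_cast hn0
    rw [le_div_iff₀ hn0']
    linarith
  have h3 : liminf (fun n : ℕ => ∫⁻ x, ENNReal.ofReal (-Real.log (pm ν n x) / n) ∂ν) atTop =
      ENNReal.ofReal hν := by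
    refine Tendsto.liminf_eq ?_
    refine (ENNReal.tendsto_ofReal (tendsto_Hn hb ν hent)).congr fun n => ?_
    rw [← ofReal_integral_eq_lintegral_ofReal ((integrable_neglog hb ν n).div_const _)
      (ae_of_all _ fun x => div_nonneg (neglog_pm_nonneg ν n x) (Nat.cast_nonneg _)),
      integral_div]
    rfl
  rw [h3] at h1
  have h4 := (ENNReal.ofReal_le_ofReal_iff h0).1 (h2.trans h1)
  linarith

lemma not_bdd_caseA (hb : 2 ≤ b) (ν : Measure (SymbSpace b)) [IsProbabilityMeasure ν] {hν : ℝ}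
    (hent : Tendsto (entropySeq ν) atTop (nhds hν)) (ρ : Measure ℝ) [IsProbabilityMeasure ρ]
    (hpos : ∀ᵐ t ∂ρ, 0 < t) {ψ : ℝ → ℝ} (hm : Measurable ψ) (hi : Integrable ψ ρ)
    (hle : ∀ t, ψ t ≤ Real.log t) (hgt : hν < ∫ t, ψ t ∂ρ)
    (hbdd : ∀ᵐ q ∂(ν.prod (iidM ρ)), ∃ K : ℕ, ∀ k, dE ν k q ≤ K) : False := by
  obtain ⟨a, ha1, ha2⟩ := exists_between hgt
  obtain ⟨a', ha1', ha2'⟩ := exists_between ha2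
  refine smb_upper hb ν hent ha1 ?_
  have h1 : ∀ᵐ q ∂(ν.prod (iidM ρ)), ∀ᶠ n : ℕ in atTop, n * a ≤ -Real.log (pm ν n q.1) := by
    filter_upwards [hbdd, ae_prod_of ν (iidM ρ) (ae_pm_pos ν)
      ((slln_iidM ρ hm hi).and (ae_iidM_forall ρ hpos))] with q hK hq
    obtain ⟨x, ξ⟩ := q
    obtain ⟨K, hK⟩ := hK
    obtain ⟨hx, hlim, hξ⟩ := hq
    simp only at hx hlim hξ ⊢
    have hT : Tendsto (fun n : ℕ => (n : ℝ) * (a' - a)) atTop atTop :=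
      tendsto_natCast_atTop_atTop.atTop_mul_const (by linarith)
    filter_upwards [hlim.eventually (lt_mem_nhds ha2'), eventually_gt_atTop 0,
      hT.eventually_ge_atTop (Real.log (K + 1))] with n hn hn0 hn1
    have hn0' : (0 : ℝ) < n := by exact_mod_cast hn0
    rw [lt_div_iff₀ hn0'] at hn
    have h2 := hK n
    rw [dE_eq ν n hξ (hx n), ENNReal.ofReal_le_iff_le_toReal (by simp), ENNReal.toReal_natCast] at h2
    have h3 : ∑ k ∈ Finset.range n, ψ (ξ k) ≤ ∑ k ∈ Finset.range n, Real.log (ξ k) :=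
      Finset.sum_le_sum fun k _ => hle _
    have h4 : ∑ k ∈ Finset.range n, Real.log (ξ k) + Real.log (pm ν n x) ≤ Real.log (K + 1) := by
      rw [← Real.log_exp (∑ k ∈ Finset.range n, Real.log (ξ k) + Real.log (pm ν n x))]
      exact Real.log_le_log (Real.exp_pos _) (by linarith)
    nlinarith
  filter_upwards [Measure.ae_ae_of_ae_prod h1] with x hx
  exact hx.exists.choose_spec

lemma exists_trunc (ρ : Measure ℝ) [IsProbabilityMeasure ρ]
    (hp : ∫⁻ t, ENNReal.ofReal (Real.log t) ∂ρ = ∞)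
    (hn : ∫⁻ t, ENNReal.ofReal (-Real.log t) ∂ρ ≤ 1) (h : ℝ) :
    ∃ ψ : ℝ → ℝ, Measurable ψ ∧ Integrable ψ ρ ∧ (∀ t, ψ t ≤ Real.log t) ∧ h < ∫ t, ψ t ∂ρ := by
  have hmeas : ∀ K : ℕ, Measurable fun t : ℝ => min (Real.log t) (K : ℝ) := fun K =>
    Real.measurable_log.min measurable_const
  have hlim : Tendsto (fun K : ℕ => ∫⁻ t, ENNReal.ofReal (min (Real.log t) (K : ℝ)) ∂ρ) atTop
      (nhds ∞) := by
    rw [← hp]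
    refine lintegral_tendsto_of_tendsto_of_monotone (fun K => (hmeas K).ennreal_ofReal.aemeasurable)
      (ae_of_all _ fun t => ?_) (ae_of_all _ fun t => ?_)
    · exact fun K K' hK => ENNReal.ofReal_le_ofReal (min_le_min le_rfl (by exact_mod_cast hK))
    · obtain ⟨N, hN⟩ := exists_nat_ge (Real.log t)
      refine tendsto_atTop_of_eventually_const (i₀ := N) fun K hK => ?_
      rw [min_eq_left]
      exact hN.trans (by exact_mod_cast hK)
  have h0 : ENNReal.ofReal (|h| + 2) < ∞ := ENNReal.ofReal_lt_top
  obtain ⟨K, hK⟩ := (hlim.eventually (lt_mem_nhds h0)).exists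
  have hneg : ∀ t : ℝ, ENNReal.ofReal (-min (Real.log t) (K : ℝ)) ≤ ENNReal.ofReal (-Real.log t) := by
    intro t
    rcases le_total (Real.log t) K with h1 | h1
    · rw [min_eq_left h1]
    · rw [min_eq_right h1, ENNReal.ofReal_of_nonpos (by simp)]; exact zero_le
  have hn2 : ∫⁻ t, ENNReal.ofReal (-min (Real.log t) (K : ℝ)) ∂ρ ≤ 1 := (lint_mono hneg).trans hn
  have hp2 : ∫⁻ t, ENNReal.ofReal (min (Real.log t) (K : ℝ)) ∂ρ ≤ ENNReal.ofReal K := by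
    have : ENNReal.ofReal K = ∫⁻ t, ENNReal.ofReal K ∂ρ := by simp
    rw [this]
    exact lint_mono fun t => ENNReal.ofReal_le_ofReal (min_le_right _ _)
  have hi : Integrable (fun t : ℝ => min (Real.log t) (K : ℝ)) ρ := by
    refine ⟨(hmeas K).aestronglyMeasurable, ?_⟩
    rw [hasFiniteIntegral_iff_norm]
    have : ∀ t : ℝ, ENNReal.ofReal ‖min (Real.log t) (K : ℝ)‖ ≤
        ENNReal.ofReal (min (Real.log t) (K : ℝ)) + ENNReal.ofReal (-min (Real.log t) (K : ℝ)) := fun t => by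
      rw [Real.norm_eq_abs]
      rcases le_total 0 (min (Real.log t) (K : ℝ)) with h1 | h1
      · rw [abs_of_nonneg h1]; exact le_self_add
      · rw [abs_of_nonpos h1]; exact le_add_self
    refine (lint_mono this).trans_lt ?_
    rw [lintegral_add_left (hmeas K).ennreal_ofReal]
    exact ENNReal.add_lt_top.2 ⟨hp2.trans_lt ENNReal.ofReal_lt_top, hn2.trans_lt ENNReal.one_lt_top⟩
  refine ⟨_, hmeas K, hi, fun t => min_le_left _ _, ?_⟩
  rw [integral_eq_lintegral_pos_part_sub_lintegral_neg_part hi]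
  have h1 := ENNReal.toReal_mono ENNReal.one_ne_top hn2
  have h2 := (ENNReal.ofReal_lt_iff_lt_toReal (by positivity)
    (hp2.trans_lt ENNReal.ofReal_lt_top).ne).1 hK
  have := le_abs_self h
  rw [ENNReal.toReal_one] at h1
  linarith

end caseA
end

open MeasureTheory ProbabilityTheory Filter Set
open scoped ENNReal

noncomputable section

set_option linter.unusedSectionVars false
set_option linter.unusedVariables false

section cob
variable {α : Type*} [MeasurableSpace α]

lemma clamp_diff (K a c p : ℝ) (hK : 0 ≤ K) (hp : 0 ≤ p) (h : -p ≤ a - c) :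
    -p ≤ max (-K) (min a K) - max (-K) (min c K) := by
  rcases le_total (-K) (min c K) with h1 | h1
  · rw [max_eq_right h1]
    rcases le_total a K with h2 | h2
    · rw [min_eq_left h2]
      have := le_max_right (-K) a
      have := min_le_left c K
      linarith
    · rw [min_eq_right h2]
      have := le_max_right (-K) K
      have := min_le_right c K
      linarith
  · rw [max_eq_left h1]
    have := le_max_left (-K) (min a K)
    linarith

lemma cob_eq {μ : Measure α} [IsProbabilityMeasure μ] {T : α → α} (hT : MeasurePreserving T μ μ)
    {N φ : α → ℝ} (hN : Measurable N) (hφm : Measurable φ) (hφ : Integrable φ μ)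
    (hφ0 : 0 ≤ ∫ x, φ x ∂μ) (h : ∀ᵐ x ∂μ, φ x ≤ N x - N (T x)) :
    ∀ᵐ x ∂μ, N x - N (T x) = φ x := by
  set p : α → ℝ := fun x => max (-φ x) 0 with hp
  have hpm : Measurable p := hφm.neg.max measurable_const
  have hpi : Integrable p μ := hφ.neg.pos_part
  set cl : ℕ → ℝ → ℝ := fun K t => max (-(K : ℝ)) (min t K) with hcl
  have hclm : ∀ K, Measurable (cl K) := fun K => measurable_const.max (measurable_id.min measurable_const)
  have hclb : ∀ K t, ‖cl K t‖ ≤ K := fun K t => by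
    have hK : (0 : ℝ) ≤ K := Nat.cast_nonneg _
    rw [Real.norm_eq_abs, abs_le]
    exact ⟨le_max_left _ _, max_le (by linarith) (min_le_right _ _)⟩
  have hi1 : ∀ K, Integrable (fun x => cl K (N x)) μ := fun K =>
    Integrable.of_bound ((hclm K).comp hN).aestronglyMeasurable K (ae_of_all _ fun x => hclb _ _)
  have hi2 : ∀ K, Integrable (fun x => cl K (N (T x))) μ := fun K =>
    Integrable.of_bound ((hclm K).comp (hN.comp hT.measurable)).aestronglyMeasurable K
      (ae_of_all _ fun x => hclb _ _)
  have he : ∀ K, ∫ x, cl K (N (T x)) ∂μ = ∫ x, cl K (N x) ∂μ := fun K => by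
    have := integral_map (μ := μ) hT.measurable.aemeasurable (f := fun x => cl K (N x))
      ((hclm K).comp hN).aestronglyMeasurable
    rw [hT.map_eq] at this
    exact this.symm
  have hdi : ∀ K, Integrable (fun x => cl K (N x) - cl K (N (T x)) + p x) μ := fun K =>
    ((hi1 K).sub (hi2 K)).add hpi
  have hd0 : ∀ K, ∀ᵐ x ∂μ, 0 ≤ cl K (N x) - cl K (N (T x)) + p x := fun K => by
    filter_upwards [h] with x hx
    have h1 := le_max_left (-φ x) 0
    have := clamp_diff K (N x) (N (T x)) (p x) (Nat.cast_nonneg _) (le_max_right _ _) (by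
      simp only [hp]; linarith)
    simp only [hcl]
    linarith
  have hIntg : ∀ K, ∫⁻ x, ENNReal.ofReal (cl K (N x) - cl K (N (T x)) + p x) ∂μ =
      ENNReal.ofReal (∫ x, p x ∂μ) := fun K => by
    have hsub : Integrable (fun x => cl K (N x) - cl K (N (T x))) μ := (hi1 K).sub (hi2 K)
    rw [← ofReal_integral_eq_lintegral_ofReal (hdi K) (hd0 K), integral_add hsub hpi,
      integral_sub (hi1 K) (hi2 K), he, sub_self, zero_add]
  have hlim : ∀ x, Tendsto (fun K : ℕ => ENNReal.ofReal (cl K (N x) - cl K (N (T x)) + p x)) atTop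
      (nhds (ENNReal.ofReal (N x - N (T x) + p x))) := fun x => by
    obtain ⟨K0, hK0⟩ := exists_nat_ge (|N x| + |N (T x)|)
    refine tendsto_atTop_of_eventually_const (i₀ := K0) fun K hK => ?_
    have hK' : (K0 : ℝ) ≤ K := by exact_mod_cast hK
    have e : ∀ t : ℝ, |t| ≤ K → cl K t = t := fun t ht => by
      rw [abs_le] at ht
      simp only [hcl]
      rw [min_eq_left ht.2, max_eq_right ht.1]
    have := abs_nonneg (N x)
    have := abs_nonneg (N (T x))
    rw [e _ (by linarith), e _ (by linarith)]
  have hF := lintegral_liminf_le (μ := μ) (u := atTop)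
    (f := fun (K : ℕ) x => ENNReal.ofReal (cl K (N x) - cl K (N (T x)) + p x)) (fun K => by
      have t := ((((hclm K).comp hN).sub ((hclm K).comp (hN.comp hT.measurable))).add hpm).ennreal_ofReal
      exact t)
  simp_rw [hIntg, fun x => (hlim x).liminf_eq] at hF
  rw [liminf_const] at hF
  have hge : ∀ᵐ x ∂μ, 0 ≤ N x - N (T x) + p x := by
    filter_upwards [h] with x hx
    have h1 := le_max_left (-φ x) 0
    simp only [hp]; linarith
  have hNm : Measurable fun x => N x - N (T x) + p x := by
    have t := (hN.sub (hN.comp hT.measurable)).add hpm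
    exact t
  have hi3 : Integrable (fun x => N x - N (T x) + p x) μ := by
    refine ⟨hNm.aestronglyMeasurable, ?_⟩
    rw [hasFiniteIntegral_iff_ofReal hge]
    exact hF.trans_lt ENNReal.ofReal_lt_top
  have hp0 : 0 ≤ ∫ x, p x ∂μ := integral_nonneg fun x => le_max_right _ _
  rw [← ofReal_integral_eq_lintegral_ofReal hi3 hge, ENNReal.ofReal_le_ofReal_iff hp0] at hF
  have hi5 : Integrable (fun x => N x - N (T x) + p x - p x) μ := hi3.sub hpi
  have hi4 : Integrable (fun x => N x - N (T x) + p x - p x - φ x) μ := (hi3.sub hpi).sub hφ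
  have h5 : ∫ x, (N x - N (T x) + p x - p x - φ x) ∂μ ≤ 0 := by
    rw [integral_sub hi5 hφ, integral_sub hi3 hpi]
    linarith
  have h6 : 0 ≤ᵐ[μ] fun x => N x - N (T x) + p x - p x - φ x := by
    filter_upwards [h] with x hx
    simp only [Pi.zero_apply]; linarith
  have h7 := (integral_eq_zero_iff_of_nonneg_ae h6 hi4).1 (le_antisymm h5 (integral_nonneg_of_ae h6))
  filter_upwards [h7] with x hx
  simp only [Pi.zero_apply] at hx
  linarith

lemma const_of_cob (ν : Measure α) [IsProbabilityMeasure ν] {σ : α → α}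
    (hmp : MeasurePreserving σ ν ν) (ρ : Measure ℝ) [IsProbabilityMeasure ρ] {g : ℝ → ℝ}
    (hg : Measurable g) {f : α → ℝ} (hf : Measurable f) {M : α × (ℕ → ℝ) → ℝ} (hM : Measurable M)
    (h : ∀ᵐ q ∂(ν.prod (iidM ρ)), M q = g (q.2 0) + f q.1 + M (σ q.1, tailSeq q.2)) :
    ∃ c, ∀ᵐ s ∂ρ, g s = c := by
  set E : ℝ → ℝ → ℂ := fun t y => Complex.exp (((t * y : ℝ) : ℂ) * Complex.I) with hE
  have hEm : ∀ t, Measurable (E t) := fun t => by fun_prop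
  have hEn : ∀ t y, ‖E t y‖ = 1 := fun t y => Complex.norm_exp_ofReal_mul_I _
  have hEadd : ∀ t y z, E t (y + z) = E t y * E t z := fun t y z => by
    simp only [hE]; rw [← Complex.exp_add]; congr 1; push_cast; ring
  have hEi : ∀ (t : ℝ), Integrable (fun q => E t (M q)) (ν.prod (iidM ρ)) := fun t =>
    Integrable.of_bound ((hEm t).comp hM).aestronglyMeasurable 1 (ae_of_all _ fun q => (hEn _ _).le)
  set c : ℝ → α → ℂ := fun t x => ∫ ξ, E t (M (x, ξ)) ∂(iidM ρ) with hc
  have hci : ∀ t, Integrable (c t) ν := fun t => (hEi t).integral_prod_left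
  -- the recursion
  have hrec : ∀ t, ∀ᵐ x ∂ν, ‖c t x‖ = ‖∫ s, E t (g s) ∂ρ‖ * ‖c t (σ x)‖ := by
    intro t
    filter_upwards [Measure.ae_ae_of_ae_prod h] with x hx
    have h1 : c t x = ∫ ξ, E t (g (ξ 0)) * (E t (f x) * E t (M (σ x, tailSeq ξ))) ∂(iidM ρ) := by
      refine integral_congr_ae ?_
      filter_upwards [hx] with ξ hξ
      rw [hξ, hEadd, hEadd, mul_assoc]
    have hm2 : Measurable fun ξ : ℕ → ℝ => E t (M (σ x, tailSeq ξ)) :=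
      (hEm t).comp (hM.comp (measurable_const.prodMk measurable_tailSeq))
    have hm1 : Measurable fun ξ : ℕ → ℝ => E t (g (ξ 0)) :=
      (hEm t).comp (hg.comp (measurable_pi_apply 0))
    have hmm : Measurable fun ξ : ℕ → ℝ => E t (g (ξ 0)) * (E t (f x) * E t (M (σ x, tailSeq ξ))) :=
      hm1.mul (measurable_const.mul hm2)
    have h2 := integral_map (μ := ρ.prod (iidM ρ)) measurable_consSeq.aemeasurable
      (f := fun ξ : ℕ → ℝ => E t (g (ξ 0)) * (E t (f x) * E t (M (σ x, tailSeq ξ))))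
      hmm.aestronglyMeasurable
    rw [map_consSeq] at h2
    rw [h1, h2]
    simp only [consSeq_zero, tailSeq_consSeq]
    rw [integral_prod_mul (fun s => E t (g s)) (fun ξ => E t (f x) * E t (M (σ x, ξ))),
      integral_const_mul, norm_mul, norm_mul, hEn, one_mul]
  have hzero : ∀ t, ‖∫ s, E t (g s) ∂ρ‖ < 1 → ∫ q, E t (M q) ∂(ν.prod (iidM ρ)) = 0 := by
    intro t ht
    have h1 : ∫ x, ‖c t x‖ ∂ν = ‖∫ s, E t (g s) ∂ρ‖ * ∫ x, ‖c t x‖ ∂ν := by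
      conv_lhs => rw [integral_congr_ae (hrec t), integral_const_mul]
      congr 1
      have := integral_map (μ := ν) hmp.measurable.aemeasurable (f := fun x => ‖c t x‖)
        (by rw [hmp.map_eq]; exact (hci t).norm.aestronglyMeasurable)
      rw [hmp.map_eq] at this
      exact this.symm
    have h2 : ∫ x, ‖c t x‖ ∂ν = 0 := by
      have h3 : (1 - ‖∫ s, E t (g s) ∂ρ‖) * ∫ x, ‖c t x‖ ∂ν = 0 := by linarith
      rcases mul_eq_zero.1 h3 with h4 | h4
      · linarith
      · exact h4
    rw [integral_prod _ (hEi t)]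
    rw [integral_eq_zero_iff_of_nonneg (fun x => norm_nonneg _) (hci t).norm] at h2
    rw [← integral_zero (μ := ν) (G := ℂ)]
    refine integral_congr_ae ?_
    filter_upwards [h2] with x hx
    simpa using hx
  have hlim : Tendsto (fun n : ℕ => ∫ q, E ((1 / 2) ^ n) (M q) ∂(ν.prod (iidM ρ))) atTop (nhds 1) := by
    have : (1 : ℂ) = ∫ q, (1 : ℂ) ∂(ν.prod (iidM ρ)) := by simp
    rw [this]
    refine tendsto_integral_of_dominated_convergence (fun _ => 1) (fun n => (hEi _).aestronglyMeasurable)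
      (integrable_const _) (fun n => ae_of_all _ fun q => (hEn _ _).le) (ae_of_all _ fun q => ?_)
    have h1 : Tendsto (fun n : ℕ => ((1 : ℝ) / 2) ^ n * M q) atTop (nhds (0 * M q)) :=
      (tendsto_pow_atTop_nhds_zero_of_lt_one (by norm_num) (by norm_num)).mul_const _
    rw [zero_mul] at h1
    have h2 : Continuous fun y : ℝ => Complex.exp ((y : ℂ) * Complex.I) := by fun_prop
    have h3 := (h2.tendsto 0).comp h1
    simp only [Complex.ofReal_zero, zero_mul, Complex.exp_zero] at h3
    exact h3
  have hev : ∀ᶠ n : ℕ in atTop, ‖∫ s, E ((1 / 2) ^ n) (g s) ∂ρ‖ ≥ 1 := by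
    filter_upwards [hlim.eventually_ne one_ne_zero] with n hn
    by_contra hcc
    push Not at hcc
    exact hn (hzero _ hcc)
  have hconst : ∀ n : ℕ, ∃ z : ℂ, 1 ≤ ‖∫ s, E ((1 / 2) ^ n) (g s) ∂ρ‖ →
      ∀ᵐ s ∂ρ, E ((1 / 2) ^ n) (g s) = z := by
    intro n
    refine ⟨⨍ s, E ((1 / 2) ^ n) (g s) ∂ρ, fun hn => ?_⟩
    rcases ae_eq_const_or_norm_integral_lt_of_norm_le_const (μ := ρ)
      (f := fun s => E ((1 / 2) ^ n) (g s)) (C := 1) (ae_of_all _ fun s => (hEn _ _).le) with h1 | h1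
    · filter_upwards [h1] with s hs
      exact hs
    · simp at h1
      simp at hn
      linarith
  choose z hz using hconst
  obtain ⟨N, hN⟩ := eventually_atTop.1 hev
  have hall : ∀ᵐ s ∂ρ, ∀ n, N ≤ n → E ((1 / 2) ^ n) (g s) = z n := by
    rw [ae_all_iff]; intro n
    by_cases hn : N ≤ n
    · filter_upwards [hz n (hN n hn)] with s hs _ using hs
    · exact ae_of_all _ fun s h => absurd h hn
  obtain ⟨s0, hs0⟩ := hall.exists
  refine ⟨g s0, ?_⟩
  filter_upwards [hall] with s hs
  have h1 : Tendsto (fun n : ℕ => ((1 : ℝ) / 2) ^ n * (g s - g s0)) atTop (nhds (0 * (g s - g s0))) :=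
    (tendsto_pow_atTop_nhds_zero_of_lt_one (by norm_num) (by norm_num)).mul_const _
  rw [zero_mul] at h1
  have h1' := h1.abs
  rw [abs_zero] at h1'
  obtain ⟨n, hn1, hn2⟩ := ((h1'.eventually (gt_mem_nhds one_pos)).and (eventually_ge_atTop N)).exists
  have h2 : E ((1 / 2) ^ n) (g s - g s0) = 1 := by
    have h3 : E ((1 / 2) ^ n) (g s - g s0) * E ((1 / 2) ^ n) (g s0) = E ((1 / 2) ^ n) (g s0) := by
      rw [← hEadd, sub_add_cancel, hs n hn2, hs0 n hn2]
    have h4 : E ((1 / 2) ^ n) (g s0) ≠ 0 := Complex.exp_ne_zero _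
    exact mul_right_cancel₀ h4 (by rw [h3, one_mul])
  simp only [hE] at h2
  rw [Complex.exp_eq_one_iff] at h2
  obtain ⟨k, hk⟩ := h2
  have h5 : ((1 : ℝ) / 2) ^ n * (g s - g s0) = k * (2 * Real.pi) := by
    have h6 : ((((1 : ℝ) / 2) ^ n * (g s - g s0) : ℝ) : ℂ) * Complex.I =
        ((k * (2 * Real.pi) : ℝ) : ℂ) * Complex.I := by
      rw [hk]; push_cast; ring
    have h8 := mul_right_cancel₀ Complex.I_ne_zero h6
    exact Complex.ofReal_injective h8
  have hk0 : k = 0 := by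
    by_contra hk0
    have h7 : (1 : ℝ) ≤ |(k : ℝ)| := by
      have := Int.one_le_abs hk0
      exact_mod_cast this
    rw [h5, abs_mul, abs_of_pos (by positivity : (0 : ℝ) < 2 * Real.pi)] at hn1
    have := Real.pi_gt_three
    nlinarith
  rw [hk0] at h5
  simp at h5
  linarith

end cob
end

open MeasureTheory ProbabilityTheory Filter Set
open scoped ENNReal

noncomputable section

set_option linter.unusedSectionVars false
set_option linter.unusedVariables false

section caseB
variable {b : ℕ}

/-- defect between the log-mass of cylinders and Birkhoff sums of the potential -/
def aN (ν : Measure (SymbSpace b)) (f : SymbSpace b → ℝ) (n : ℕ) (x : SymbSpace b) : ℝ :=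
  Real.log (pm ν n x) - ∑ k ∈ Finset.range n, f ((shiftMap b)^[k] x)

lemma measurable_birk {f : SymbSpace b → ℝ} (hf : Measurable f) (n : ℕ) :
    Measurable fun x => ∑ k ∈ Finset.range n, f ((shiftMap b)^[k] x) :=
  Finset.measurable_sum _ fun k _ => hf.comp (measurable_shift.iterate k)

lemma measurable_aN (hb : 2 ≤ b) (ν : Measure (SymbSpace b)) [IsProbabilityMeasure ν]
    {f : SymbSpace b → ℝ} (hf : Measurable f) (n : ℕ) : Measurable (aN ν f n) := by
  have h1 : Measurable (pm ν n) := (depOn_pm ν n).measurable hb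
  have t := (Real.measurable_log.comp h1).sub (measurable_birk hf n)
  exact t

lemma aN_succ (ν : Measure (SymbSpace b)) (f : SymbSpace b → ℝ) (n : ℕ) (x : SymbSpace b) :
    aN ν f (n + 1) x = aN ν f n (shiftMap b x) - lg ν n x - f x := by
  simp only [aN, lg]
  rw [Finset.sum_range_succ']
  simp only [Function.iterate_succ_apply, Function.iterate_zero, id]
  ring

lemma ae_bdd_aN (ν : Measure (SymbSpace b)) [IsProbabilityMeasure ν] {f : SymbSpace b → ℝ}
    (hG : PropertyG ν f) : ∀ᵐ x ∂ν, ∃ B : ℝ, ∀ n, |aN ν f n x| ≤ B := by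
  obtain ⟨hf, C, hCm, hC1, hC⟩ := hG
  filter_upwards [hC1, hC, ae_pm_pos ν] with x h1 h2 h3
  refine ⟨Real.log (C x), fun n => ?_⟩
  have hC0 : 0 < C x := by linarith
  rcases Nat.eq_zero_or_pos n with rfl | hn
  · simp only [aN, pm_zero]
    simp [Real.log_nonneg h1]
  · obtain ⟨h4, h5⟩ := h2 n hn
    change _ ≤ pm ν n x at h4
    change pm ν n x ≤ _ at h5
    have h6 := Real.log_le_log (by positivity) h4
    have h7 := Real.log_le_log (h3 n) h5
    rw [Real.log_mul (by positivity) (Real.exp_pos _).ne', Real.log_inv, Real.log_exp] at h6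
    rw [Real.log_mul hC0.ne' (Real.exp_pos _).ne', Real.log_exp] at h7
    rw [aN, abs_le]
    constructor <;> linarith

/-- the limiting information function -/
def Ginf (ν : Measure (SymbSpace b)) (x : SymbSpace b) : ℝ := limsup (fun j => lg ν j x) atTop

lemma measurable_Ginf (hb : 2 ≤ b) (ν : Measure (SymbSpace b)) [IsProbabilityMeasure ν] :
    Measurable (Ginf ν) :=
  Measurable.limsup fun j => (depOn_lg ν j).measurable hb

lemma ae_tendsto_lg (hb : 2 ≤ b) (ν : Measure (SymbSpace b)) [IsProbabilityMeasure ν]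
    (hmp : MeasurePreserving (shiftMap b) ν ν) {f : SymbSpace b → ℝ} (hG : PropertyG ν f) :
    ∀ᵐ x ∂ν, Tendsto (fun j => lg ν j x) atTop (nhds (Ginf ν x)) := by
  have hB := ae_bdd_aN ν hG
  filter_upwards [ae_tendsto_ratio hb ν hmp, hB, hmp.quasiMeasurePreserving.ae hB, ae_pm_pos ν,
    hmp.quasiMeasurePreserving.ae (ae_pm_pos ν)] with x h1 h2 h3 h4 h5
  obtain ⟨g, hg⟩ := h1
  obtain ⟨B, hB⟩ := h2
  obtain ⟨B', hB'⟩ := h3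
  have hr : ∀ j, Real.log (pm ν (j + 1) x / pm ν j (shiftMap b x)) = - lg ν j x := fun j => by
    rw [Real.log_div (h4 _).ne' (h5 _).ne', lg]; ring
  have hlow : ∀ j, Real.exp (-(B + B' + |f x|)) ≤ pm ν (j + 1) x / pm ν j (shiftMap b x) := fun j => by
    rw [← Real.exp_log (div_pos (h4 (j + 1)) (h5 j)), hr]
    refine Real.exp_le_exp.2 ?_
    have e := aN_succ ν f j x
    have h6 := (abs_le.1 (hB (j + 1))).1
    have h7 := (abs_le.1 (hB' j)).2
    have h8 := neg_abs_le (f x)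
    linarith
  have hg0 : 0 < g := (Real.exp_pos _).trans_le (ge_of_tendsto' hg hlow)
  have h9 : Tendsto (fun j => lg ν j x) atTop (nhds (-Real.log g)) := by
    refine ((hg.log hg0.ne').neg).congr fun j => ?_
    rw [hr, neg_neg]
  rw [Ginf, h9.limsup_eq]
  exact h9

lemma Ginf_integral (hb : 2 ≤ b) (ν : Measure (SymbSpace b)) [IsProbabilityMeasure ν]
    (hmp : MeasurePreserving (shiftMap b) ν ν) {f : SymbSpace b → ℝ} (hG : PropertyG ν f)
    {hν : ℝ} (hent : Tendsto (entropySeq ν) atTop (nhds hν)) :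
    Integrable (Ginf ν) ν ∧ ∫ x, Ginf ν x ∂ν ≤ hν := by
  have hν0 := entropy_nonneg hb ν hent
  have hlim := ae_tendsto_lg hb ν hmp hG
  have hpos : ∀ᵐ x ∂ν, 0 ≤ Ginf ν x := by
    filter_upwards [hlim, ae_lg_nonneg ν hmp] with x h1 h2
    exact ge_of_tendsto' h1 h2
  have hF := lintegral_liminf_le (μ := ν) (u := atTop) (f := fun (j : ℕ) x => ENNReal.ofReal (lg ν j x))
    (fun j => ((depOn_lg ν j).measurable hb).ennreal_ofReal)
  have h1 : ∫⁻ x, liminf (fun j => ENNReal.ofReal (lg ν j x)) atTop ∂ν =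
      ∫⁻ x, ENNReal.ofReal (Ginf ν x) ∂ν := by
    refine lintegral_congr_ae ?_
    filter_upwards [hlim] with x hx
    exact (ENNReal.tendsto_ofReal hx).liminf_eq
  have h2 : ∀ j, ∫⁻ x, ENNReal.ofReal (lg ν j x) ∂ν = ENNReal.ofReal (Hn ν (j + 1) - Hn ν j) := fun j => by
    rw [← integral_lg hb ν hmp, ofReal_integral_eq_lintegral_ofReal (integrable_lg hb ν j)]
    filter_upwards [ae_lg_nonneg ν hmp] with x h2 using h2 j
  simp_rw [h2] at hF
  rw [h1] at hF
  have h3 : ∀ ε : ℝ, 0 < ε → ∫⁻ x, ENNReal.ofReal (Ginf ν x) ∂ν ≤ ENNReal.ofReal (hν + ε) := by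
    intro ε hε
    refine hF.trans (liminf_le_of_frequently_le ?_)
    have h4 : Tendsto (fun n : ℕ => (-Hn ν n) / n) atTop (nhds (-hν)) :=
      (tendsto_Hn hb ν hent).neg.congr fun n => by rw [neg_div]
    refine (frequently_incr h4 hε).mono fun m hm => ENNReal.ofReal_le_ofReal ?_
    linarith
  have hi : Integrable (Ginf ν) ν := by
    refine ⟨(measurable_Ginf hb ν).aestronglyMeasurable, ?_⟩
    rw [hasFiniteIntegral_iff_ofReal hpos]
    exact (h3 1 one_pos).trans_lt ENNReal.ofReal_lt_top
  refine ⟨hi, le_of_forall_pos_le_add fun ε hε => ?_⟩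
  have h5 := h3 ε hε
  rw [← ofReal_integral_eq_lintegral_ofReal hi hpos] at h5
  exact (ENNReal.ofReal_le_ofReal_iff (by linarith)).1 h5

/-- limsup of the defects -/
def Ainf (ν : Measure (SymbSpace b)) (f : SymbSpace b → ℝ) (x : SymbSpace b) : ℝ :=
  limsup (fun n => aN ν f n x) atTop

lemma measurable_Ainf (hb : 2 ≤ b) (ν : Measure (SymbSpace b)) [IsProbabilityMeasure ν]
    {f : SymbSpace b → ℝ} (hf : Measurable f) : Measurable (Ainf ν f) :=
  Measurable.limsup fun j => measurable_aN hb ν hf j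

lemma ae_Ainf (hb : 2 ≤ b) (ν : Measure (SymbSpace b)) [IsProbabilityMeasure ν]
    (hmp : MeasurePreserving (shiftMap b) ν ν) {f : SymbSpace b → ℝ} (hG : PropertyG ν f) :
    ∀ᵐ x ∂ν, Ainf ν f (shiftMap b x) ≤ Ainf ν f x + Ginf ν x + f x := by
  have hB := ae_bdd_aN ν hG
  filter_upwards [ae_tendsto_lg hb ν hmp hG, hB, hmp.quasiMeasurePreserving.ae hB] with x h1 h2 h3
  obtain ⟨B, hB⟩ := h2
  obtain ⟨B', hB'⟩ := h3
  refine le_of_forall_pos_le_add fun ε hε => ?_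
  have h4 : ∀ᶠ n in atTop, aN ν f n x < Ainf ν f x + ε / 2 := by
    refine eventually_lt_of_limsup_lt (by rw [Ainf]; linarith) ?_
    exact isBoundedUnder_of ⟨B, fun n => (abs_le.1 (hB n)).2⟩
  have h4' := (tendsto_add_atTop_nat 1).eventually h4
  have h5 : ∀ᶠ n in atTop, lg ν n x < Ginf ν x + ε / 2 := h1.eventually (gt_mem_nhds (by linarith))
  refine limsup_le_of_le ?_ ?_
  · exact IsBoundedUnder.isCoboundedUnder_le (isBoundedUnder_of ⟨-B', fun n => (abs_le.1 (hB' n)).1⟩)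
  · filter_upwards [h4', h5] with n h6 h7
    have := aN_succ ν f n x
    linarith

/-- the walk along the spine -/
def Wn (f : SymbSpace b → ℝ) (n : ℕ) (q : SymbSpace b × (ℕ → ℝ)) : ℝ :=
  ∑ k ∈ Finset.range n, (Real.log (q.2 k) + f ((shiftMap b)^[k] q.1))

lemma measurable_Wn {f : SymbSpace b → ℝ} (hf : Measurable f) (n : ℕ) : Measurable (Wn f n) := by
  refine Finset.measurable_sum _ fun k _ => ?_
  have h1 : Measurable fun q : SymbSpace b × (ℕ → ℝ) => Real.log (q.2 k) :=
    Real.measurable_log.comp ((measurable_pi_apply k).comp measurable_snd)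
  have h2 := (hf.comp (measurable_shift.iterate k)).comp
    (measurable_fst : Measurable fun q : SymbSpace b × (ℕ → ℝ) => q.1)
  exact h1.add h2

lemma Wn_succ (f : SymbSpace b → ℝ) (n : ℕ) (q : SymbSpace b × (ℕ → ℝ)) :
    Wn f (n + 1) q = Real.log (q.2 0) + f q.1 + Wn f n (shiftMap b q.1, tailSeq q.2) := by
  simp only [Wn]
  rw [Finset.sum_range_succ']
  simp only [Function.iterate_succ_apply, Function.iterate_zero, id, tailSeq]
  ring

lemma ae_bdd_Wn (ν : Measure (SymbSpace b)) [IsProbabilityMeasure ν] {f : SymbSpace b → ℝ}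
    (hG : PropertyG ν f) (ρ : Measure ℝ) [IsProbabilityMeasure ρ] (hpos : ∀ᵐ t ∂ρ, 0 < t)
    (hbdd : ∀ᵐ q ∂(ν.prod (iidM ρ)), ∃ K : ℕ, ∀ k, dE ν k q ≤ K) :
    ∀ᵐ q ∂(ν.prod (iidM ρ)), BddAbove (range fun n => Wn f n q) := by
  filter_upwards [hbdd, ae_prod_of ν (iidM ρ) ((ae_pm_pos ν).and (ae_bdd_aN ν hG))
    (ae_iidM_forall ρ hpos)] with q hK hq
  obtain ⟨x, ξ⟩ := q
  obtain ⟨K, hK⟩ := hK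
  obtain ⟨⟨hx, B, hB⟩, hξ⟩ := hq
  simp only at hx hB hξ
  refine ⟨Real.log (K + 1) + B, ?_⟩
  rintro _ ⟨n, rfl⟩
  have h2 := hK n
  rw [dE_eq ν n hξ (hx n), ENNReal.ofReal_le_iff_le_toReal (by simp), ENNReal.toReal_natCast] at h2
  have h4 : ∑ k ∈ Finset.range n, Real.log (ξ k) + Real.log (pm ν n x) ≤ Real.log (K + 1) := by
    rw [← Real.log_exp (∑ k ∈ Finset.range n, Real.log (ξ k) + Real.log (pm ν n x))]
    exact Real.log_le_log (Real.exp_pos _) (by linarith)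
  have h5 := (abs_le.1 (hB n)).1
  simp only [Wn, Finset.sum_add_distrib]
  rw [aN] at h5
  linarith

theorem caseB (hb : 2 ≤ b) (ν : Measure (SymbSpace b)) [IsProbabilityMeasure ν]
    (hmp : MeasurePreserving (shiftMap b) ν ν) {f : SymbSpace b → ℝ} (hG : PropertyG ν f)
    {hν : ℝ} (hent : Tendsto (entropySeq ν) atTop (nhds hν))
    (ρ : Measure ℝ) [IsProbabilityMeasure ρ] (hpos : ∀ᵐ t ∂ρ, 0 < t)
    (hi : Integrable Real.log ρ) (hI : hν ≤ ∫ t, Real.log t ∂ρ)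
    (hbdd : ∀ᵐ q ∂(ν.prod (iidM ρ)), ∃ K : ℕ, ∀ k, dE ν k q ≤ K) :
    ∃ c, ∀ᵐ s ∂ρ, Real.log s = c := by
  have hf := hG.1
  set μ := ν.prod (iidM ρ) with hμ
  set T : SymbSpace b × (ℕ → ℝ) → SymbSpace b × (ℕ → ℝ) := fun q => (shiftMap b q.1, tailSeq q.2)
    with hTdef
  have hT : MeasurePreserving T μ μ := hmp.prod (measurePreserving_tailSeq ρ)
  have hfst : MeasurePreserving (Prod.fst : SymbSpace b × (ℕ → ℝ) → SymbSpace b) μ ν :=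
    measurePreserving_fst
  have hsnd : MeasurePreserving (fun q : SymbSpace b × (ℕ → ℝ) => q.2 0) μ ρ :=
    (measurePreserving_eval_infinitePi (fun _ : ℕ => ρ) 0).comp measurePreserving_snd
  set M : SymbSpace b × (ℕ → ℝ) → ℝ := fun q => ⨆ n, Wn f n q with hM
  have hMm : Measurable M := Measurable.iSup fun n => measurable_Wn hf n
  have hbW := ae_bdd_Wn ν hG ρ hpos hbdd
  have hMge : ∀ᵐ q ∂μ, Real.log (q.2 0) + f q.1 + M (T q) ≤ M q := by
    filter_upwards [hbW] with q hq
    have : M (T q) ≤ M q - (Real.log (q.2 0) + f q.1) := by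
      refine ciSup_le fun n => ?_
      have h1 := le_ciSup hq (n + 1)
      simp only [Wn_succ] at h1
      change _ ≤ (⨆ n, Wn f n q) - _
      simp only [hTdef]
      linarith
    linarith
  have hA : ∀ᵐ q ∂μ, Ainf ν f (shiftMap b q.1) ≤ Ainf ν f q.1 + Ginf ν q.1 + f q.1 :=
    hfst.quasiMeasurePreserving.ae (ae_Ainf hb ν hmp hG)
  obtain ⟨hGi, hGle⟩ := Ginf_integral hb ν hmp hG hent
  have hGm := measurable_Ginf hb ν
  have hi1 : Integrable (fun q : SymbSpace b × (ℕ → ℝ) => Real.log (q.2 0)) μ :=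
    hsnd.integrable_comp_of_integrable hi
  have hi2 : Integrable (fun q : SymbSpace b × (ℕ → ℝ) => Ginf ν q.1) μ :=
    hfst.integrable_comp_of_integrable hGi
  have e1 : ∫ q, Real.log (q.2 0) ∂μ = ∫ t, Real.log t ∂ρ := by
    have := integral_map (μ := μ) hsnd.measurable.aemeasurable (f := Real.log)
      Real.measurable_log.aestronglyMeasurable
    rw [hsnd.map_eq] at this
    exact this.symm
  have e2 : ∫ q, Ginf ν q.1 ∂μ = ∫ x, Ginf ν x ∂ν := by
    have := integral_map (μ := μ) hfst.measurable.aemeasurable (f := Ginf ν)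
      hGm.aestronglyMeasurable
    rw [hfst.map_eq] at this
    exact this.symm
  have hm1 : Measurable fun q : SymbSpace b × (ℕ → ℝ) => Real.log (q.2 0) :=
    Real.measurable_log.comp hsnd.measurable
  have hm2 : Measurable fun q : SymbSpace b × (ℕ → ℝ) => Ginf ν q.1 := hGm.comp measurable_fst
  have hm3 : Measurable fun q : SymbSpace b × (ℕ → ℝ) => Ainf ν f q.1 :=
    (measurable_Ainf hb ν hf).comp measurable_fst
  have key := cob_eq hT (N := fun q => M q + Ainf ν f q.1)
    (φ := fun q => Real.log (q.2 0) - Ginf ν q.1) (hMm.add hm3) (hm1.sub hm2) (hi1.sub hi2)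
    (by rw [integral_sub hi1 hi2, e1, e2]; linarith) (by
      filter_upwards [hMge, hA] with q h1 h2
      simp only [hTdef] at h1 ⊢
      linarith)
  refine const_of_cob ν hmp ρ Real.measurable_log hf hMm ?_
  filter_upwards [hMge, hA, key] with q h1 h2 h3
  simp only [hTdef] at h1 h3 ⊢
  linarith

end caseB
end

open MeasureTheory ProbabilityTheory Filter Set
open scoped ENNReal

noncomputable section

set_option linter.unusedSectionVars false
set_option linter.unusedVariables false

section caseC
variable {b : ℕ} {Ω : Type*} [MeasurableSpace Ω] {P : Measure Ω} [IsProbabilityMeasure P]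
  {X : List (Fin b) → Ω → ℝ} {X₀ : Ω → ℝ}

lemma CascadeM1.ae_two (h : CascadeM1 P X X₀) {c : ℝ}
    (hc : ∀ᵐ t ∂(sizeBias (lawX P X₀)), t = c) : ∀ᵐ ω ∂P, X₀ ω = 0 ∨ X₀ ω = c := by
  have hm : MeasurableSet ({c}ᶜ : Set ℝ) := (measurableSet_singleton c).compl
  have h1 : ∫⁻ t, ({c}ᶜ : Set ℝ).indicator 1 t ∂(sizeBias (lawX P X₀)) = 0 := by
    rw [lintegral_indicator_one hm]
    rw [measure_eq_zero_iff_ae_notMem]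
    filter_upwards [hc] with t ht
    simp [ht]
  rw [h.lintegral_sizeBias_comp (measurable_one.indicator hm)] at h1
  have hmm : Measurable fun ω => ENNReal.ofReal (X₀ ω) * ({c}ᶜ : Set ℝ).indicator (1 : ℝ → ℝ≥0∞) (X₀ ω) := by
    have t := (ENNReal.measurable_ofReal.mul (measurable_one.indicator hm : Measurable (({c}ᶜ : Set ℝ).indicator (1 : ℝ → ℝ≥0∞)))).comp h.meas₀
    exact t
  rw [lintegral_eq_zero_iff hmm] at h1
  filter_upwards [h1] with ω hω
  simp only [Pi.zero_apply, mul_eq_zero, ENNReal.ofReal_eq_zero] at hω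
  rcases hω with hω | hω
  · exact Or.inl (le_antisymm hω (h.nonneg₀ ω))
  · right
    by_contra hne
    rw [indicator_of_mem (by simpa using hne)] at hω
    simp at hω

lemma CascadeM1.isQ (h : CascadeM1 P X X₀) {α : ℝ}
    (hc : ∀ᵐ ω ∂P, X₀ ω = 0 ∨ X₀ ω = Real.exp α) : IsQalphaCascade P X₀ α := by
  have hms : MeasurableSet {ω | X₀ ω = Real.exp α} := h.meas₀ (measurableSet_singleton _)
  have e1 : ∫⁻ ω, ENNReal.ofReal (X₀ ω) ∂P = ENNReal.ofReal (Real.exp α) * P {ω | X₀ ω = Real.exp α} := by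
    rw [← lintegral_indicator_const hms]
    refine lintegral_congr_ae ?_
    filter_upwards [hc] with ω hω
    by_cases h2 : X₀ ω = Real.exp α
    · rw [indicator_of_mem (show ω ∈ {ω | X₀ ω = Real.exp α} from h2), h2]
    · rw [indicator_of_notMem (show ω ∉ {ω | X₀ ω = Real.exp α} from h2), hω.resolve_right h2]
      simp
  rw [h.lintegral₀] at e1
  have e2 : P {ω | X₀ ω = Real.exp α} = ENNReal.ofReal (Real.exp (-α)) := by
    calc P {ω | X₀ ω = Real.exp α} = ENNReal.ofReal (Real.exp (-α)) *
          (ENNReal.ofReal (Real.exp α) * P {ω | X₀ ω = Real.exp α}) := by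
            rw [← mul_assoc, ← ENNReal.ofReal_mul (Real.exp_pos _).le, ← Real.exp_add]
            simp
      _ = _ := by rw [← e1, mul_one]
  refine ⟨e2, ?_⟩
  rw [← e2, ← prob_compl_eq_one_sub hms]
  refine measure_congr ?_
  filter_upwards [hc] with ω hω
  refine propext ?_
  change X₀ ω = 0 ↔ ¬ (X₀ ω = Real.exp α)
  constructor
  · intro h0 h1
    rw [h0] at h1
    exact (Real.exp_pos α).ne h1
  · intro h0; exact hω.resolve_right h0

lemma caseC (ν : Measure (SymbSpace b)) [IsProbabilityMeasure ν] {f : SymbSpace b → ℝ}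
    (hG : PropertyG ν f) {hν : ℝ} (ρ : Measure ℝ) [IsProbabilityMeasure ρ]
    (hρ : ∀ᵐ t ∂ρ, t = Real.exp hν)
    (hlim : ∀ᵐ x ∂ν, ∀ M : ℝ, ∃ᶠ n in atTop,
      M ≤ ∑ k ∈ Finset.range n, (f ((shiftMap b)^[k] x) + hν))
    (hbdd : ∀ᵐ q ∂(ν.prod (iidM ρ)), ∃ K : ℕ, ∀ k, dE ν k q ≤ K) : False := by
  have : ∀ᵐ q ∂(ν.prod (iidM ρ)), False := by
    filter_upwards [hbdd, ae_prod_of ν (iidM ρ) (((ae_pm_pos ν).and (ae_bdd_aN ν hG)).and hlim)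
      (ae_iidM_forall ρ hρ)] with q hK hq
    obtain ⟨x, ξ⟩ := q
    obtain ⟨K, hK⟩ := hK
    obtain ⟨⟨⟨hpm, B, hB⟩, hl⟩, hξ⟩ := hq
    simp only at hpm hB hl hξ
    obtain ⟨n, hn⟩ := (hl (K + B + 1)).exists
    have h1 := hK n
    rw [dE_eq ν n (fun k => by rw [hξ k]; exact Real.exp_pos _) (hpm n)] at h1
    have h2 : Real.exp (∑ k ∈ Finset.range n, Real.log (ξ k) + Real.log (pm ν n x)) ≤ K := by
      rw [← ENNReal.ofReal_natCast] at h1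
      exact (ENNReal.ofReal_le_ofReal_iff (Nat.cast_nonneg _)).1 h1
    have h3 := Real.add_one_le_exp (∑ k ∈ Finset.range n, Real.log (ξ k) + Real.log (pm ν n x))
    have h4 : ∑ k ∈ Finset.range n, Real.log (ξ k) = n * hν := by
      simp [hξ]
    have h5 := (abs_le.1 (hB n)).1
    rw [aN] at h5
    rw [Finset.sum_add_distrib] at hn
    simp only [Finset.sum_const, Finset.card_range, nsmul_eq_mul] at hn
    linarith
  exact (this.exists).elim fun _ h => h

end caseC
end

open MeasureTheory ProbabilityTheory Filter Set
open scoped ENNReal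

noncomputable section

set_option linter.unusedSectionVars false
set_option linter.unusedVariables false

section caseD
variable {b : ℕ} {Ω : Type*} [MeasurableSpace Ω] {P : Measure Ω} [IsProbabilityMeasure P]
  {X : List (Fin b) → Ω → ℝ} {X₀ : Ω → ℝ}

lemma cascadeY_succ (hb : 2 ≤ b) (X : List (Fin b) → Ω → ℝ) {n : ℕ} (v : Fin (n + 1) → Fin b) (ω : Ω) :
    cascadeY X (List.ofFn v) ω = cascadeY X (List.ofFn (Fin.init v)) ω * X (List.ofFn v) ω := by
  have e1 : List.ofFn v = wordPrefix (extWord hb v) (n + 1) := by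
    rw [wordPrefix_eq_pref, pref_extWord]
  have e2 : List.ofFn (Fin.init v : Fin n → Fin b) = wordPrefix (extWord hb v) n := by
    rw [wordPrefix_eq_pref]
    congr 1
    funext i
    have := congrFun (pref_extWord hb v) i.castSucc
    exact this.symm
  rw [e1, e2, cascadeY_wordPrefix, cascadeY_wordPrefix, Finset.prod_range_succ]

open Classical in
/-- the surviving words of length `n` -/
def Al (X : List (Fin b) → Ω → ℝ) (n : ℕ) (ω : Ω) : Finset (Fin n → Fin b) :=
  Finset.univ.filter fun u => cascadeY X (List.ofFn u) ω ≠ 0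

lemma mem_Al {n : ℕ} {ω : Ω} {u : Fin n → Fin b} :
    u ∈ Al X n ω ↔ cascadeY X (List.ofFn u) ω ≠ 0 := by simp [Al]

lemma Al_succ_empty (hb : 2 ≤ b) {n : ℕ} {ω : Ω}
    (h0 : ∀ v : Fin (n + 1) → Fin b, Fin.init v ∈ Al X n ω → X (List.ofFn v) ω = 0) :
    Al X (n + 1) ω = ∅ := by
  refine Finset.eq_empty_of_forall_notMem fun v hv => ?_
  rw [mem_Al, cascadeY_succ hb] at hv
  exact (right_ne_zero_of_mul hv) (h0 v (mem_Al.2 (left_ne_zero_of_mul hv)))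

lemma Al_empty_mono (hb : 2 ≤ b) {n m : ℕ} {ω : Ω} (h0 : Al X n ω = ∅) (hnm : n ≤ m) :
    Al X m ω = ∅ := by
  induction m, hnm using Nat.le_induction with
  | base => exact h0
  | succ m _ ih =>
    refine Al_succ_empty hb fun v hv => ?_
    rw [ih] at hv
    simp at hv

lemma measurableSet_Al_sig (n : ℕ) (S : Finset (Fin n → Fin b)) :
    MeasurableSet[sigX X {w | w.length ≤ n}] {ω | Al X n ω = S} := by
  have hY : ∀ u : Fin n → Fin b,
      Measurable[sigX X {w | w.length ≤ n}] (cascadeY X (List.ofFn u)) := by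
    intro u
    unfold cascadeY
    refine Finset.measurable_prod (m := sigX X {w | w.length ≤ n}) _ fun k hk => ?_
    have hk' : k < n := by simpa using hk
    refine measurable_sigX ?_ ?_
    · intro h0
      have := congrArg List.length h0
      simp at this
      omega
    · change (List.take (k + 1) (List.ofFn u)).length ≤ n
      simp
  have e : {ω | Al X n ω = S} = ⋂ u : Fin n → Fin b, {ω | cascadeY X (List.ofFn u) ω ≠ 0 ↔ u ∈ S} := by
    ext ω
    simp only [mem_iInter]
    change Al X n ω = S ↔ ∀ u, (cascadeY X (List.ofFn u) ω ≠ 0 ↔ u ∈ S)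
    rw [Finset.ext_iff]
    exact forall_congr' fun u => by rw [mem_Al]
  rw [e]
  refine MeasurableSet.iInter (m := sigX X {w | w.length ≤ n}) fun u => ?_
  have h1 := (hY u) (measurableSet_singleton (0 : ℝ))
  by_cases hu : u ∈ S
  · convert h1.compl using 1
    ext ω
    change (_ ↔ _) ↔ ¬ (cascadeY X (List.ofFn u) ω = 0)
    simp [hu]
  · convert h1 using 1
    ext ω
    change (_ ↔ _) ↔ (cascadeY X (List.ofFn u) ω = 0)
    simp [hu]

lemma CascadeM1.measurableSet_Al (h : CascadeM1 P X X₀) (n : ℕ) (A : Set (Finset (Fin n → Fin b))) :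
    MeasurableSet {ω | Al X n ω ∈ A} := by
  have : {ω | Al X n ω ∈ A} = ⋃ S ∈ A, {ω | Al X n ω = S} := by
    ext ω
    simp only [mem_iUnion]
    change Al X n ω ∈ A ↔ ∃ S, ∃ _ : S ∈ A, Al X n ω = S
    simp
  rw [this]
  exact MeasurableSet.biUnion (Set.to_countable A) fun S _ => h.sigX_le _ _ (measurableSet_Al_sig n S)

open Classical in
/-- children of the words in `S` -/
def childs {n : ℕ} (S : Finset (Fin n → Fin b)) : Finset {w : List (Fin b) // w ≠ []} :=
  (Finset.univ.filter fun v : Fin (n + 1) → Fin b => (Fin.init v : Fin n → Fin b) ∈ S).image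
    fun v => ⟨List.ofFn v, by simp⟩

lemma card_childs {n : ℕ} (S : Finset (Fin n → Fin b)) : (childs S).card ≤ S.card * b := by
  classical
  refine Finset.card_image_le.trans ?_
  have : S.card * b = (S ×ˢ (Finset.univ : Finset (Fin b))).card := by simp
  rw [this]
  refine Finset.card_le_card_of_injOn (fun v => ((Fin.init v : Fin n → Fin b), v (Fin.last n))) ?_ ?_
  · intro v hv
    simpa using hv
  · intro v _ v' _ hvv
    simp only [Prod.mk.injEq] at hvv
    rw [← Fin.snoc_init_self v, ← Fin.snoc_init_self v', hvv.1, hvv.2]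

lemma CascadeM1.kill (h : CascadeM1 P X X₀) (hb : 2 ≤ b) (n : ℕ) (S : Finset (Fin n → Fin b)) {j : ℕ}
    (hj : S.card ≤ j) :
    P {ω | Al X n ω = S} * P {ω | X₀ ω = 0} ^ (j * b) ≤
      P ({ω | Al X n ω = S} ∩ {ω | Al X (n + 1) ω = ∅}) := by
  set K : Set Ω := ⋂ w ∈ childs S, X w.1 ⁻¹' {0} with hK
  have hKP : P {ω | X₀ ω = 0} ^ (j * b) ≤ P K := by
    have e := h.indep.measure_inter_preimage_eq_mul (childs S) (sets := fun _ => {0})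
      (fun _ _ => measurableSet_singleton _)
    rw [hK, e]
    have e2 : ∀ w ∈ childs S, P (X w.1 ⁻¹' {0}) = P {ω | X₀ ω = 0} := fun w _ =>
      (h.ident w.1 w.2).measure_mem_eq (measurableSet_singleton _)
    rw [Finset.prod_congr rfl e2, Finset.prod_const]
    exact pow_le_pow_right_of_le_one' prob_le_one ((card_childs S).trans (Nat.mul_le_mul_right _ hj))
  have hKm : MeasurableSet[sigX X {w | w.length = n + 1}] K := by
    refine Finset.measurableSet_biInter (m := sigX X {w | w.length = n + 1}) _ fun w hw => ?_
    refine (measurable_sigX w.2 ?_) (measurableSet_singleton _)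
    simp only [childs, Finset.mem_image] at hw
    obtain ⟨v, _, rfl⟩ := hw
    change (List.ofFn v).length = n + 1
    simp
  have hi := h.indep_sigX (S := {w | w.length ≤ n}) (T := {w | w.length = n + 1})
    (Set.disjoint_left.2 fun w hw hw' => by
      have h1 : w.length ≤ n := hw
      have h2 : w.length = n + 1 := hw'
      omega)
  have e3 := (Indep_iff _ _ P).1 hi _ _ (measurableSet_Al_sig n S) hKm
  calc _ ≤ P {ω | Al X n ω = S} * P K := by gcongr
    _ = P ({ω | Al X n ω = S} ∩ K) := e3.symm
    _ ≤ _ := by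
      refine measure_mono ?_
      rintro ω ⟨h1, h2⟩
      have h1' : Al X n ω = S := h1
      refine ⟨h1, ?_⟩
      change Al X (n + 1) ω = ∅
      refine Al_succ_empty hb fun v hv => ?_
      rw [hK, mem_iInter₂] at h2
      refine h2 ⟨List.ofFn v, by simp⟩ ?_
      simp only [childs, Finset.mem_image]
      exact ⟨v, by simpa [h1'] using hv, rfl⟩

lemma CascadeM1.kill' (h : CascadeM1 P X X₀) (hb : 2 ≤ b) (n j : ℕ) :
    P {ω | 1 ≤ (Al X n ω).card ∧ (Al X n ω).card ≤ j} * P {ω | X₀ ω = 0} ^ (j * b) ≤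
      P ({ω | Al X n ω ≠ ∅} ∩ {ω | Al X (n + 1) ω = ∅}) := by
  classical
  set T : Finset (Finset (Fin n → Fin b)) := Finset.univ.filter fun S => 1 ≤ S.card ∧ S.card ≤ j
  have e1 : {ω | 1 ≤ (Al X n ω).card ∧ (Al X n ω).card ≤ j} = ⋃ S ∈ T, {ω | Al X n ω = S} := by
    ext ω
    simp only [mem_iUnion]
    change _ ↔ ∃ S, ∃ _ : S ∈ T, Al X n ω = S
    simp [T]
  have hm : ∀ S, MeasurableSet {ω | Al X n ω = S} := fun S => h.sigX_le _ _ (measurableSet_Al_sig n S)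
  have hm' : MeasurableSet {ω | Al X (n + 1) ω = ∅} := h.sigX_le _ _ (measurableSet_Al_sig (n + 1) ∅)
  have hd : (T : Set (Finset (Fin n → Fin b))).PairwiseDisjoint fun S => {ω | Al X n ω = S} := by
    intro S _ S' _ hne
    refine Set.disjoint_left.2 fun ω h1 h2 => hne ?_
    exact (show Al X n ω = S from h1).symm.trans h2
  rw [e1, measure_biUnion_finset hd (fun S _ => hm S), Finset.sum_mul]
  calc _ ≤ ∑ S ∈ T, P ({ω | Al X n ω = S} ∩ {ω | Al X (n + 1) ω = ∅}) :=
        Finset.sum_le_sum fun S hS => h.kill hb n S (by simp [T] at hS; exact hS.2)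
    _ = P (⋃ S ∈ T, ({ω | Al X n ω = S} ∩ {ω | Al X (n + 1) ω = ∅})) := by
        rw [measure_biUnion_finset _ (fun S _ => (hm S).inter hm')]
        exact fun S hS S' hS' hne => (hd hS hS' hne).mono inter_subset_left inter_subset_left
    _ ≤ _ := by
        refine measure_mono ?_
        refine iUnion₂_subset fun S hS => ?_
        rintro ω ⟨h1, h2⟩
        refine ⟨?_, h2⟩
        change Al X n ω ≠ ∅
        rw [show Al X n ω = S from h1]
        simp only [T, Finset.mem_filter, Finset.mem_univ, true_and] at hS
        exact Finset.nonempty_iff_ne_empty.1 (Finset.card_pos.1 hS.1)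

lemma CascadeM1.tendsto_small (h : CascadeM1 P X X₀) (hb : 2 ≤ b) (hp : P {ω | X₀ ω = 0} ≠ 0) (j : ℕ) :
    Tendsto (fun n => P {ω | 1 ≤ (Al X n ω).card ∧ (Al X n ω).card ≤ j}) atTop (nhds 0) := by
  set c := P {ω | X₀ ω = 0} ^ (j * b) with hc
  have hc0 : c ≠ 0 := pow_ne_zero _ hp
  have hct : c ≠ ∞ := ENNReal.pow_ne_top (measure_ne_top _ _)
  have hsum : ∑' n, P ({ω | Al X n ω ≠ ∅} ∩ {ω | Al X (n + 1) ω = ∅}) ≤ 1 := by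
    rw [← measure_iUnion]
    · exact prob_le_one
    · have key : ∀ m n, m < n → Disjoint ({ω | Al X m ω ≠ ∅} ∩ {ω | Al X (m + 1) ω = ∅})
          ({ω | Al X n ω ≠ ∅} ∩ {ω | Al X (n + 1) ω = ∅}) := by
        intro m n hmn
        refine Set.disjoint_left.2 fun ω h1 h2 => ?_
        exact h2.1 (Al_empty_mono hb h1.2 hmn)
      intro m n hmn
      rcases lt_or_gt_of_ne hmn with h1 | h1
      · exact key _ _ h1
      · exact (key _ _ h1).symm
    · intro n
      exact (h.measurableSet_Al n {S | S ≠ ∅}).inter (h.measurableSet_Al (n + 1) {S | S = ∅})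
  have ht := ENNReal.tendsto_atTop_zero_of_tsum_ne_top (hsum.trans_lt ENNReal.one_lt_top).ne
  have h2 : Tendsto (fun n => P ({ω | Al X n ω ≠ ∅} ∩ {ω | Al X (n + 1) ω = ∅}) / c) atTop (nhds 0) := by
    have := ENNReal.Tendsto.div_const ht (b := c) (Or.inr hc0)
    simpa using this
  refine tendsto_of_tendsto_of_tendsto_of_le_of_le tendsto_const_nhds h2 (fun _ => zero_le) fun n => ?_
  rw [ENNReal.le_div_iff_mul_le (Or.inl hc0) (Or.inl hct)]
  exact h.kill' hb n j

lemma CascadeM1.Z_eq_card (h : CascadeM1 P X X₀) (hb : 2 ≤ b) (ν : Measure (SymbSpace b))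
    (hu : IsUniformMeasure ν) (hc : ∀ᵐ ω ∂P, X₀ ω = 0 ∨ X₀ ω = b) :
    ∀ᵐ ω ∂P, ∀ n, ENNReal.ofReal (cascadeZ X ν n ω) = (Al X n ω).card := by
  have hX : ∀ᵐ ω ∂P, ∀ w : {w : List (Fin b) // w ≠ []}, X w.1 ω = 0 ∨ X w.1 ω = b := by
    rw [ae_all_iff]
    intro w
    have hm : MeasurableSet {t : ℝ | t = 0 ∨ t = b} := by
      have : {t : ℝ | t = 0 ∨ t = b} = {0} ∪ {(b : ℝ)} := rfl
      rw [this]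
      exact (measurableSet_singleton _).union (measurableSet_singleton _)
    exact (h.ident w.1 w.2).symm.ae_snd (p := fun t => t = 0 ∨ t = b) hm hc
  filter_upwards [hX] with ω hω n
  have hb0 : (b : ℝ) ≠ 0 := by positivity
  have key : cascadeZ X ν n ω = ((Al X n ω).card : ℝ) := by
    classical
    rw [cascadeZ, Al, Finset.card_filter]
    push_cast
    refine Finset.sum_congr rfl fun u _ => ?_
    rw [hu, List.length_ofFn, ENNReal.toReal_pow, ENNReal.toReal_inv, ENNReal.toReal_natCast]
    split_ifs with h0
    · have : cascadeY X (List.ofFn u) ω = (b : ℝ) ^ n := by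
        rw [cascadeY, Finset.prod_ne_zero_iff] at h0
        rw [cascadeY]
        rw [Finset.prod_congr rfl (g := fun _ => (b : ℝ))]
        · simp
        · intro k hk
          have hne : List.take (k + 1) (List.ofFn u) ≠ [] := by
            intro h1
            have := congrArg List.length h1
            simp at this hk
            omega
          exact (hω ⟨_, hne⟩).resolve_left (h0 k hk)
      rw [this, ← mul_pow, mul_inv_cancel₀ hb0, one_pow]
    · push Not at h0
      rw [h0, zero_mul]
  rw [key, ENNReal.ofReal_natCast]

theorem CascadeM1.caseD (h : CascadeM1 P X X₀) (hb : 2 ≤ b) (ν : Measure (SymbSpace b))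
    [IsProbabilityMeasure ν] [IsProbabilityMeasure (lawX P X₀)]
    [IsProbabilityMeasure (sizeBias (lawX P X₀))]
    (hu : IsUniformMeasure ν) (hc : ∀ᵐ ω ∂P, X₀ ω = 0 ∨ X₀ ω = b)
    (hp : P {ω | X₀ ω = 0} ≠ 0)
    (hUI : UniformIntegrable (fun n ω => cascadeZ X ν n ω) 1 P) : False := by
  have hZ := h.Z_eq_card hb ν hu hc
  have hone : ∀ n, ∫⁻ ω, ((Al X n ω).card : ℝ≥0∞) ∂P = 1 := by
    intro n
    rw [← h.lintegral_Z ν n]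
    refine lintegral_congr_ae ?_
    filter_upwards [hZ] with ω hω
    rw [← hω n, h.ofReal_Z hb]
  obtain ⟨δ, hδ, hU⟩ := hUI.2.1 (ε := 1 / 4) (by norm_num)
  obtain ⟨j, hj⟩ := exists_nat_gt (1 / δ)
  have hj0 : (0 : ℝ) < j := (by positivity : 0 < 1 / δ).trans hj
  have hs : ∀ n, MeasurableSet {ω | j < (Al X n ω).card} := fun n =>
    h.measurableSet_Al n {S | j < S.card}
  have hcm : ∀ n, Measurable fun ω => ((Al X n ω).card : ℝ≥0∞) := fun n => by
    intro A hA
    exact h.measurableSet_Al n {S | (S.card : ℝ≥0∞) ∈ A}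
  have hPs : ∀ n, P {ω | j < (Al X n ω).card} ≤ ENNReal.ofReal δ := by
    intro n
    have h1 := mul_meas_ge_le_lintegral₀ (μ := P) (hcm n).aemeasurable (j : ℝ≥0∞)
    rw [hone] at h1
    have h2 : P {ω | j < (Al X n ω).card} ≤ P {ω | (j : ℝ≥0∞) ≤ ((Al X n ω).card : ℝ≥0∞)} := by
      refine measure_mono fun ω hω => ?_
      have : j < (Al X n ω).card := hω
      change (j : ℝ≥0∞) ≤ ((Al X n ω).card : ℝ≥0∞)
      exact_mod_cast this.le
    have hjE : (j : ℝ≥0∞) ≠ 0 := by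
      intro h0
      have : j = 0 := by exact_mod_cast h0
      simp [this] at hj0
    refine h2.trans ?_
    have h3 : P {ω | (j : ℝ≥0∞) ≤ ((Al X n ω).card : ℝ≥0∞)} ≤ 1 / j := by
      rw [ENNReal.le_div_iff_mul_le (Or.inl hjE) (Or.inl (ENNReal.natCast_ne_top j)), mul_comm]
      exact h1
    refine h3.trans ?_
    rw [← ENNReal.ofReal_natCast, ← ENNReal.ofReal_one, ← ENNReal.ofReal_div_of_pos hj0]
    refine ENNReal.ofReal_le_ofReal ?_
    rw [div_lt_iff₀ hδ] at hj
    rw [div_le_iff₀ hj0]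
    linarith
  have hbig : ∀ n, ∫⁻ ω in {ω | j < (Al X n ω).card}, ((Al X n ω).card : ℝ≥0∞) ∂P ≤
      ENNReal.ofReal (1 / 4) := by
    intro n
    have h1 := hU n _ (hs n) (hPs n)
    have h1' := h.eLpNorm_Z hb ν n (hs n)
    have h2 := h1'.symm.trans_le h1
    refine le_trans (le_of_eq ?_) h2
    refine lintegral_congr_ae ?_
    filter_upwards [ae_restrict_of_ae hZ] with ω hω
    rw [← hω n, h.ofReal_Z hb]
  have hsm : ∀ n, ∫⁻ ω in {ω | j < (Al X n ω).card}ᶜ, ((Al X n ω).card : ℝ≥0∞) ∂P ≤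
      j * P {ω | 1 ≤ (Al X n ω).card ∧ (Al X n ω).card ≤ j} := by
    intro n
    have hm : MeasurableSet {ω | 1 ≤ (Al X n ω).card ∧ (Al X n ω).card ≤ j} :=
      h.measurableSet_Al n {S | 1 ≤ S.card ∧ S.card ≤ j}
    rw [← lintegral_indicator (hs n).compl, ← lintegral_indicator_const hm]
    refine lint_mono fun ω => ?_
    by_cases h1 : j < (Al X n ω).card
    · rw [indicator_of_notMem (by simpa using h1)]; exact zero_le
    · rw [indicator_of_mem (by simpa using h1)]
      by_cases h2 : 1 ≤ (Al X n ω).card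
      · rw [indicator_of_mem (show ω ∈ {ω | 1 ≤ (Al X n ω).card ∧ (Al X n ω).card ≤ j} from
          ⟨h2, not_lt.1 h1⟩)]
        exact_mod_cast not_lt.1 h1
      · have : (Al X n ω).card = 0 := by omega
        rw [this]; simp
  have hlim := ENNReal.Tendsto.const_mul (a := (j : ℝ≥0∞)) (h.tendsto_small hb hp j)
    (Or.inr (ENNReal.natCast_ne_top j))
  rw [mul_zero] at hlim
  have hev := hlim.eventually (gt_mem_nhds (show (0 : ℝ≥0∞) < ENNReal.ofReal (1 / 4) by simp))
  obtain ⟨n, hn⟩ := hev.exists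
  have h1 := lintegral_add_compl (μ := P) (fun ω => ((Al X n ω).card : ℝ≥0∞)) (hs n)
  rw [hone] at h1
  have h2 : (1 : ℝ≥0∞) ≤ ENNReal.ofReal (1 / 4) + ENNReal.ofReal (1 / 4) := by
    rw [← h1]
    exact add_le_add (hbig n) ((hsm n).trans hn.le)
  rw [← ENNReal.ofReal_add (by norm_num) (by norm_num), ← ENNReal.ofReal_one,
    ENNReal.ofReal_le_ofReal_iff (by norm_num)] at h2
  norm_num at h2

lemma entropy_uniform (hb : 2 ≤ b) (ν : Measure (SymbSpace b)) (hu : IsUniformMeasure ν) {hν : ℝ}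
    (hent : Tendsto (entropySeq ν) atTop (nhds hν)) : hν = Real.log b := by
  refine tendsto_nhds_unique hent ?_
  refine tendsto_const_nhds.congr' ?_
  filter_upwards [eventually_ge_atTop 1] with n hn
  have hn0 : (n : ℝ) ≠ 0 := by positivity
  have hb0 : (b : ℝ) ≠ 0 := by positivity
  rw [entropySeq]
  have : ∀ u : Fin n → Fin b, -((ν (_root_.cylinder (List.ofFn u))).toReal *
      Real.log ((ν (_root_.cylinder (List.ofFn u))).toReal)) = ((b : ℝ) ^ n)⁻¹ * (n * Real.log b) := by
    intro u
    rw [hu, List.length_ofFn, ENNReal.toReal_pow, ENNReal.toReal_inv, ENNReal.toReal_natCast,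
      Real.log_pow, Real.log_inv, inv_pow]
    ring
  rw [Finset.sum_congr rfl fun u _ => this u]
  simp only [Finset.sum_const, Finset.card_univ, Fintype.card_fun, Fintype.card_fin, nsmul_eq_mul,
    Nat.cast_pow]
  field_simp

end caseD

theorem not_UI_of_ge
    {b : ℕ} (hb : 2 ≤ b)
    {Ω : Type*} [MeasurableSpace Ω] (P : Measure Ω) [IsProbabilityMeasure P]
    (X : List (Fin b) → Ω → ℝ) (X₀ : Ω → ℝ)
    (h : CascadeM1 P X X₀)
    (ν : Measure (SymbSpace b)) [IsProbabilityMeasure ν]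
    (hνerg : Ergodic (shiftMap b) ν)
    (f : SymbSpace b → ℝ) (hG : PropertyG ν f)
    (hν : ℝ) (hent : Tendsto (entropySeq ν) atTop (nhds hν))
    (hGt : IsQalphaCascade P X₀ hν ∧ entropyX P X₀ = ENNReal.ofReal hν →
      PropertyGtilde ν f hν)
    (hUI : UniformIntegrable (fun n ω => cascadeZ X ν n ω) 1 P)
    (hge : ¬ entropyX P X₀ < ENNReal.ofReal hν) : False := by
  have := h.isProb_lawX
  have := h.isProb_sizeBias
  have hbdd := h.bdd_of_UI hb ν hUI
  rcases h.entropy_cases with ⟨hi, he, h0⟩ | ⟨hp, he⟩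
  swap
  · obtain ⟨ψ, h1, h2, h3, h4⟩ := exists_trunc _ hp h.lintegral_neg_log_le hν
    exact not_bdd_caseA hb ν hent _ h.ae_pos h1 h2 h3 h4 hbdd
  have hI : hν ≤ ∫ t, Real.log t ∂(sizeBias (lawX P X₀)) := by
    rw [he, not_lt] at hge
    exact (ENNReal.ofReal_le_ofReal_iff h0).1 hge
  rcases hI.lt_or_eq with hlt | heq
  · exact not_bdd_caseA hb ν hent _ h.ae_pos Real.measurable_log hi (fun _ => le_rfl) hlt hbdd
  obtain ⟨c, hc⟩ := caseB hb ν hνerg.toMeasurePreserving hG hent _ h.ae_pos hi hI hbdd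
  have hcν : c = hν := by
    rw [heq, integral_congr_ae hc]
    simp
  have hρ : ∀ᵐ t ∂(sizeBias (lawX P X₀)), t = Real.exp hν := by
    filter_upwards [hc, h.ae_pos] with t h1 h2
    rw [← hcν, ← h1, Real.exp_log h2]
  have h2 := h.ae_two hρ
  have hQ := h.isQ h2
  have hGt' := hGt ⟨hQ, by rw [he, ← heq]⟩
  by_cases hu : IsUniformMeasure ν
  · have hb0 : (0 : ℝ) < b := by positivity
    have hlog := entropy_uniform hb ν hu hent
    rw [hlog, Real.exp_log hb0] at h2
    refine h.caseD hb ν hu h2 ?_ hUI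
    rw [hQ.2, hlog, Real.exp_neg, Real.exp_log hb0]
    have hb1 : (1 : ℝ) < b := by exact_mod_cast (by omega : 1 < b)
    refine (tsub_pos_of_lt ?_).ne'
    rw [ENNReal.ofReal_lt_one]
    exact inv_lt_one_of_one_lt₀ hb1
  · exact caseC ν hG _ hρ (hGt'.2 hu) hbdd

end

/-- **Corollary (characterisation of `Q`-regularity for Gibbs-like ergodic measures).**
Suppose `ℙ(X ≠ 1) > 0`. Let `ν` be a shift-ergodic probability measure on `Σ`, with entropy
`h_ν(σ)`, satisfying property (G) with potential `f`; if `Q = Q_{h_ν(σ)}` and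
`h_X = h_ν(σ)`, suppose moreover that `ν` satisfies (G̃). Then `ν` is `Q`-regular
(the martingale `(Z_n)` is uniformly integrable) if and only if `h_X < h_ν(σ)`. -/
theorem regular_iff_entropy_lt_gibbs
    {b : ℕ} (hb : 2 ≤ b)
    {Ω : Type*} [MeasurableSpace Ω] (P : Measure Ω) [IsProbabilityMeasure P]
    (X : List (Fin b) → Ω → ℝ) (X₀ : Ω → ℝ)
    (hM1 : CascadeM1 P X X₀)
    (hX1 : 0 < P {ω | X₀ ω ≠ 1})
    (ν : Measure (SymbSpace b)) [IsProbabilityMeasure ν]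
    (hνerg : Ergodic (shiftMap b) ν)
    (f : SymbSpace b → ℝ) (hG : PropertyG ν f)
    (hν : ℝ) (hent : Tendsto (entropySeq ν) atTop (nhds hν))
    (hGt : IsQalphaCascade P X₀ hν ∧ entropyX P X₀ = ENNReal.ofReal hν →
      PropertyGtilde ν f hν) :
    UniformIntegrable (fun n ω => cascadeZ X ν n ω) 1 P ↔
      entropyX P X₀ < ENNReal.ofReal hν := by
  constructor
  · intro hUI
    by_contra hge
    exact not_UI_of_ge hb P X X₀ hM1 ν hνerg f hG hν hent hGt hUI hge
  · intro hlt
    exact hM1.UI_of_lt hb ν hνerg hent hlt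

end
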